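/- Let Ω ⊂ ℝ² be a bounded open strictly convex domain (the curvature κ of ∂Ω is everywhere positive). Then there is ε = ε(Ω) > 0 such that for every H with −ε < H < 0 the solution u = u(·;H) of problem (*) is positive on Ω and is 1/2 (power) concave: the function √u is strictly second order concave on Ω, i.e. the Hessian of √u is negative definite at every point of Ω. -/

import Mathlib

/-!
Put `H = -h` and `u = h v`. Then `v` satisfies
`tr (((1 + σ‖p‖²) I - σ p ⊗ p) D²v) = -2 (1 + σ‖p‖²) ^ (3/2)` with `p = Dv` and `σ = h²`, a small
perturbation of the torsion equation `Δv = -2`, whose solution has a concave square root.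
Quantitatively, for `σ` small compared with a small constant `δ`, the two-point function
`v z - ((√(v x) + √(v y)) / 2)² - δ q(z) ‖x - y‖²`, `z = (x + y) / 2`, is nonnegative on
`closure Ω × closure Ω`; the gain `δ ‖x - y‖²` then makes the Hessian of `√u` negative definite.
Here `f` is a defining function of `Ω` and the weight `q = C + A ‖z‖² - √(-f z)` is chosen because
its Laplacian is of order `(-f)^(-3/2)`.

At a negative minimum neither point lies on the boundary: chords of length `ℓ` have midpoints of
depth at least `c ℓ²` by strict convexity, so moving inwards the point with the smaller value of `v`
would decrease the two-point function. At an interior minimum the second variation is nonnegative.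
Average it over pairs of directions `(ξ, η)` whose covariances are the coefficient matrices of the
equation at `x` and `y`, scaled by `(1 + t)²` and `(1 - t)²`, where
`t = (√(v x) - √(v y)) / (√(v x) + √(v y))`, and correlate them so that the covariance of
`(ξ + η) / 2` is nearly the coefficient matrix at `z`. By the equation the main terms cancel up to
errors of order `σ` and `δ²`. The contribution of the Laplacian of `q`, of order `δ`, is negative
and outweighs these errors, a contradiction.
-/

noncomputable section
open Set
open scoped RealInnerProductSpace

/-- The plane ℝ². -/
abbrev E2 : Type := EuclideanSpace ℝ (Fin 2)

/-- Standard basis vectors of ℝ². -/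
def e2 (i : Fin 2) : E2 := EuclideanSpace.single i 1

/-- The mean curvature operator `M u = div (Du / √(1+|Du|²))`. -/
def mcDiv (u : E2 → ℝ) (x : E2) : ℝ :=
  ∑ i : Fin 2,
    fderiv ℝ (fun y => (Real.sqrt (1 + ‖gradient u y‖ ^ 2))⁻¹ • gradient u y) x (e2 i) i

/-- `u` is a solution of problem (*) on `Ω` with mean curvature `H`:
`u ∈ C²(Ω) ∩ C⁰(closure Ω)`, `div(Du/√(1+|Du|²)) = 2H` in `Ω`, `u = 0` on `∂Ω`. -/
def SolvesStar (Ω : Set E2) (H : ℝ) (u : E2 → ℝ) : Prop :=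
  ContDiffOn ℝ 2 u Ω ∧ ContinuousOn u (closure Ω) ∧
    (∀ x ∈ Ω, mcDiv u x = 2 * H) ∧ (∀ x ∈ frontier Ω, u x = 0)

/-- `u` is a `C²(closure Ω)` solution of problem (*). -/
def SolvesStarC2 (Ω : Set E2) (H : ℝ) (u : E2 → ℝ) : Prop :=
  ContDiffOn ℝ 2 u (closure Ω) ∧ (∀ x ∈ Ω, mcDiv u x = 2 * H) ∧ ∀ x ∈ frontier Ω, u x = 0

/-- `H_max = sup {H ≥ 0 : (*) has a unique solution in C²(closure Ω)}`. -/
def Hmax (Ω : Set E2) : ℝ :=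
  sSup {H : ℝ | 0 ≤ H ∧ (∃ u, SolvesStarC2 Ω H u) ∧
    ∀ u v, SolvesStarC2 Ω H u → SolvesStarC2 Ω H v → EqOn u v (closure Ω)}

/-- The Hessian bilinear form of `u` at `x` evaluated at `(w₁, w₂)`. -/
def hess2 (u : E2 → ℝ) (x : E2) (w₁ w₂ : E2) : ℝ :=
  fderiv ℝ (fun y => fderiv ℝ u y w₂) x w₁

/-- `G_v = v_xx v_yy − v_xy²`, the determinant of the Hessian. -/
def Gdet (v : E2 → ℝ) (x : E2) : ℝ :=
  hess2 v x (e2 0) (e2 0) * hess2 v x (e2 1) (e2 1) - hess2 v x (e2 0) (e2 1) ^ 2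

/-- `L_v = v_y² v_xx − 2 v_x v_y v_xy + v_x² v_yy`. -/
def Lcurv (v : E2 → ℝ) (x : E2) : ℝ :=
  (fderiv ℝ v x (e2 1)) ^ 2 * hess2 v x (e2 0) (e2 0)
    - 2 * fderiv ℝ v x (e2 0) * fderiv ℝ v x (e2 1) * hess2 v x (e2 0) (e2 1)
    + (fderiv ℝ v x (e2 0)) ^ 2 * hess2 v x (e2 1) (e2 1)

/-- `Ω` is a bounded strictly convex domain with `C^{2,α}` boundary: it has a `C²` defining
function `f` with `α`-Hölder second derivative, nonvanishing boundary gradient, and the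
second fundamental form of the boundary (tangential Hessian of `f`) is positive, i.e. the
curvature of `∂Ω` is everywhere positive. -/
def StrictlyConvexDomain (α : ℝ) (Ω : Set E2) : Prop :=
  IsOpen Ω ∧ Bornology.IsBounded Ω ∧ Ω.Nonempty ∧
    ∃ f : E2 → ℝ, ContDiff ℝ 2 f ∧ Ω = {x | f x < 0} ∧ frontier Ω = {x | f x = 0} ∧
      (∃ C : ℝ, ∀ x y : E2,
        ‖iteratedFDeriv ℝ 2 f x - iteratedFDeriv ℝ 2 f y‖ ≤ C * ‖x - y‖ ^ α) ∧
      (∀ x ∈ frontier Ω, gradient f x ≠ 0) ∧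
      (∀ x ∈ frontier Ω, ∀ w : E2, w ≠ 0 → ⟪w, gradient f x⟫ = (0:ℝ) →
        0 < hess2 f x w w)

/-- The unit direction `e_θ = (cos θ, sin θ)`. -/
def dirVec (θ : ℝ) : E2 := Real.cos θ • e2 0 + Real.sin θ • e2 1

open Filter Topology Asymptotics

lemma abs_mul_le_mul {a b A B : ℝ} (ha : |a| ≤ A) (hb : |b| ≤ B) : |a * b| ≤ A * B := by
  rw [abs_mul]
  exact mul_le_mul ha hb (abs_nonneg b) ((abs_nonneg a).trans ha)

lemma abs_two_mul_le_add_of_sq_le_mul {a A B : ℝ} (hA : 0 ≤ A) (hB : 0 ≤ B) (h : a ^ 2 ≤ A * B) :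
    |2 * a| ≤ A + B :=
  abs_le_of_sq_le_sq (by nlinarith [sq_nonneg (A - B)]) (by positivity)

section PlaneAlgebra

/-- The quadratic form `A ζ · ζ` of a `2 × 2` matrix on the plane. -/
def quadForm (A : Matrix (Fin 2) (Fin 2) ℝ) (ζ : E2) : ℝ := ζ.ofLp ⬝ᵥ A.mulVec ζ.ofLp

/-- The oriented area `p ∧ q` of the parallelogram spanned by two plane vectors. -/
def cross (p q : E2) : ℝ := p 0 * q 1 - p 1 * q 0

lemma quadForm_eq (A : Matrix (Fin 2) (Fin 2) ℝ) (ζ : E2) :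
    quadForm A ζ = A 0 0 * ζ 0 ^ 2 + (A 0 1 + A 1 0) * (ζ 0 * ζ 1) + A 1 1 * ζ 1 ^ 2 := by
  simp only [quadForm, dotProduct, Matrix.mulVec, Fin.sum_univ_two]
  ring

lemma norm_sq_eq_coord (x : E2) : ‖x‖ ^ 2 = x 0 ^ 2 + x 1 ^ 2 := by
  rw [EuclideanSpace.real_norm_sq_eq, Fin.sum_univ_two]

lemma inner_eq_coord (x y : E2) : ⟪x, y⟫ = x 0 * y 0 + x 1 * y 1 := by
  simp only [PiLp.inner_apply, RCLike.inner_apply, conj_trivial, Fin.sum_univ_two]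
  ring

lemma inner_sq_add_cross_sq (p q : E2) : ⟪p, q⟫ ^ 2 + cross p q ^ 2 = ‖p‖ ^ 2 * ‖q‖ ^ 2 := by
  simp only [inner_eq_coord, norm_sq_eq_coord, cross]
  ring

lemma cross_sq_le (p q : E2) : cross p q ^ 2 ≤ ‖p‖ ^ 2 * ‖q‖ ^ 2 := by
  linarith [inner_sq_add_cross_sq p q, sq_nonneg ⟪p, q⟫]

lemma cross_add_left (p q ζ : E2) : cross (p + q) ζ = cross p ζ + cross q ζ := by
  simp only [cross, PiLp.add_apply]; ring

lemma cross_sub_left (p q ζ : E2) : cross (p - q) ζ = cross p ζ - cross q ζ := by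
  simp only [cross, PiLp.sub_apply]; ring

lemma cross_smul_left (r : ℝ) (p ζ : E2) : cross (r • p) ζ = r * cross p ζ := by
  simp only [cross, PiLp.smul_apply, smul_eq_mul]; ring

lemma cross_add_right (p ξ η : E2) : cross p (ξ + η) = cross p ξ + cross p η := by
  simp only [cross, PiLp.add_apply]; ring

lemma cross_sub_right (p ξ η : E2) : cross p (ξ - η) = cross p ξ - cross p η := by
  simp only [cross, PiLp.sub_apply]; ring

lemma cross_smul_right (r : ℝ) (p ζ : E2) : cross p (r • ζ) = r * cross p ζ := by
  simp only [cross, PiLp.smul_apply, smul_eq_mul]; ring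

/-- The coefficient matrix `(1 + σ |p|²) I - σ p ⊗ p` of the minimal surface operator in
non-divergence form, for the gradient `p`; here `σ = h²` for the graph of `h v`. -/
def mcMatrix (σ : ℝ) (p : E2) : Matrix (Fin 2) (Fin 2) ℝ :=
  !![1 + σ * p 1 ^ 2, -(σ * (p 0 * p 1)); -(σ * (p 0 * p 1)), 1 + σ * p 0 ^ 2]

/-- The minimal surface operator in non-divergence form, on the Hessian `A` and gradient `p`. -/
def mcOp (σ : ℝ) (p : E2) (A : Matrix (Fin 2) (Fin 2) ℝ) : ℝ := (mcMatrix σ p * A).trace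

/-- The area factor `√(1 + σ |p|²)`. -/
def areaFactor (σ : ℝ) (p : E2) : ℝ := √(1 + σ * ‖p‖ ^ 2)

lemma mcOp_eq (σ : ℝ) (p : E2) (A : Matrix (Fin 2) (Fin 2) ℝ) :
    mcOp σ p A = A 0 0 * (1 + σ * p 1 ^ 2) - (A 0 1 + A 1 0) * (σ * (p 0 * p 1))
      + A 1 1 * (1 + σ * p 0 ^ 2) := by
  rw [mcOp, Matrix.trace_fin_two, Matrix.mul_apply, Matrix.mul_apply]
  simp only [mcMatrix, Matrix.of_apply, Matrix.cons_val', Matrix.cons_val_zero,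
    Matrix.cons_val_one, Matrix.cons_val_fin_one, Fin.sum_univ_two]
  ring

lemma dotProduct_mcMatrix_mulVec (σ : ℝ) (p ξ η : E2) :
    ξ.ofLp ⬝ᵥ (mcMatrix σ p).mulVec η.ofLp = ⟪ξ, η⟫ + σ * (cross p ξ * cross p η) := by
  simp only [mcMatrix, dotProduct, Matrix.mulVec, Fin.sum_univ_two, inner_eq_coord, cross,
    Matrix.of_apply, Matrix.cons_val', Matrix.cons_val_zero, Matrix.cons_val_one,
    Matrix.cons_val_fin_one]
  ring

lemma isSymm_mcMatrix (σ : ℝ) (p : E2) : (mcMatrix σ p).IsSymm := by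
  ext i j
  fin_cases i <;> fin_cases j <;> rfl

lemma areaFactor_nonneg (σ : ℝ) (p : E2) : 0 ≤ areaFactor σ p := Real.sqrt_nonneg _

lemma areaFactor_sq {σ : ℝ} (hσ : 0 ≤ σ) (p : E2) : areaFactor σ p ^ 2 = 1 + σ * ‖p‖ ^ 2 :=
  Real.sq_sqrt (by positivity)

lemma one_le_areaFactor {σ : ℝ} (hσ : 0 ≤ σ) (p : E2) : 1 ≤ areaFactor σ p :=
  Real.one_le_sqrt.2 (by linarith [(by positivity : 0 ≤ σ * ‖p‖ ^ 2)])

/-- The second order data of a two-point function `v(z) - m² - δ q(z) |x - y|²` at a pair `(x, y)`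
with midpoint `z`, where `m` is the mean of the values of `√v` at `x` and `y`. -/
structure SecondOrderData where
  /-- The Hessian of `v` at the midpoint. -/
  A : Matrix (Fin 2) (Fin 2) ℝ
  /-- The Hessian of `√v` at `x`. -/
  X : Matrix (Fin 2) (Fin 2) ℝ
  /-- The Hessian of `√v` at `y`. -/
  Y : Matrix (Fin 2) (Fin 2) ℝ
  /-- The Hessian of the weight `q` at the midpoint. -/
  Q : Matrix (Fin 2) (Fin 2) ℝ
  /-- The gradient of `√v` at `x`. -/
  px : E2
  /-- The gradient of `√v` at `y`. -/
  py : E2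
  /-- The difference `x - y`. -/
  l : E2
  /-- The gradient of the weight `q` at the midpoint. -/
  dq : E2
  /-- The mean of the values of `√v` at `x` and `y`. -/
  m : ℝ
  /-- The factor in front of the weight. -/
  δ : ℝ
  /-- The weight at the midpoint. -/
  q : ℝ

/-- The second derivative of the two-point function in the direction `(ξ, η)`. -/
def SecondOrderData.secondVariation (D : SecondOrderData) (ξ η : E2) : ℝ :=
  quadForm D.A ((2 : ℝ)⁻¹ • (ξ + η)) - D.m * (quadForm D.X ξ + quadForm D.Y η)
    - (⟪D.px, ξ⟫ + ⟪D.py, η⟫) ^ 2 / 2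
    - D.δ * (2 * D.q * ‖ξ - η‖ ^ 2 + ‖D.l‖ ^ 2 * quadForm D.Q ((2 : ℝ)⁻¹ • (ξ + η))
      + 4 * ⟪D.l, ξ - η⟫ * ⟪D.dq, (2 : ℝ)⁻¹ • (ξ + η)⟫)

/-- A covariance is a sum of rank one covariances, so a nonnegative second variation in the pair of
directions `(ξ, η)` may be averaged over it. -/
lemma SecondOrderData.traced_secondVariation_nonneg (D : SecondOrderData)
    {Sx Sy C : Matrix (Fin 2) (Fin 2) ℝ} (hmin : ∀ ξ η, 0 ≤ D.secondVariation ξ η)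
    (hC : C.IsSymm) (hS : (Matrix.fromBlocks Sx C C Sy).PosSemidef) :
    0 ≤ (D.A * (Sx + Sy + (2 : ℝ) • C)).trace / 4 - D.m * ((D.X * Sx).trace + (D.Y * Sy).trace)
      - (D.px.ofLp ⬝ᵥ Sx.mulVec D.px.ofLp + D.py.ofLp ⬝ᵥ Sy.mulVec D.py.ofLp
        + 2 * (D.px.ofLp ⬝ᵥ C.mulVec D.py.ofLp)) / 2
      - D.δ * (2 * D.q * (Sx + Sy - (2 : ℝ) • C).trace
        + ‖D.l‖ ^ 2 * (D.Q * (Sx + Sy + (2 : ℝ) • C)).trace / 4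
        + 2 * (D.l.ofLp ⬝ᵥ (Sx - Sy).mulVec D.dq.ofLp)) := by
  obtain ⟨n, b, hb⟩ := Matrix.posSemidef_iff_eq_sum_vecMulVec.1 hS
  let ξ (i : Fin n) : E2 := WithLp.toLp 2 fun j => b i (.inl j)
  let η (i : Fin n) : E2 := WithLp.toLp 2 fun j => b i (.inr j)
  have entry (j k : Fin 2 ⊕ Fin 2) :
      Matrix.fromBlocks Sx C C Sy j k = ∑ i, b i j * b i k := by
    simp [hb, Matrix.sum_apply, Matrix.vecMulVec_apply]
  have hSx (j k : Fin 2) : Sx j k = ∑ i, ξ i j * ξ i k := entry (.inl j) (.inl k)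
  have hSy (j k : Fin 2) : Sy j k = ∑ i, η i j * η i k := entry (.inr j) (.inr k)
  have hCe (j k : Fin 2) : C j k = ∑ i, ξ i j * η i k := entry (.inl j) (.inr k)
  have hCsymm (j k : Fin 2) : C j k = ∑ i, (ξ i j * η i k + ξ i k * η i j) / 2 := by
    rw [← Finset.sum_div, Finset.sum_add_distrib, ← hCe, ← hCe, hC.apply k j, add_self_div_two]
  have hcross : ∑ i, cross (ξ i) (η i) = 0 := by
    simp only [cross, Finset.sum_sub_distrib]
    rw [← hCe, ← hCe, hC.apply 0 1, sub_self]
  refine (Finset.sum_nonneg (s := Finset.univ) fun i _ => hmin (ξ i) (η i)).trans_eq ?_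
  rw [← add_zero (Finset.sum _ _), ← mul_zero (2 * D.δ * cross D.l D.dq + cross D.px D.py / 2),
    ← hcross]
  simp only [secondVariation, quadForm_eq, inner_eq_coord, norm_sq_eq_coord,
    Matrix.trace_fin_two, Matrix.mul_apply, dotProduct, Matrix.mulVec, Fin.sum_univ_two,
    Matrix.add_apply, Matrix.sub_apply, Matrix.smul_apply, PiLp.add_apply, PiLp.sub_apply,
    PiLp.smul_apply, smul_eq_mul, cross]
  simp only [hSx, hSy, hCsymm, Finset.mul_sum, Finset.sum_mul, Finset.sum_div,
    ← Finset.sum_add_distrib, ← Finset.sum_sub_distrib]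
  refine Finset.sum_congr rfl fun i _ => ?_
  ring

end PlaneAlgebra

/-- The first order data at an interior critical pair `(x, y)` of the two-point function, in units
of the mean `m` of the square roots of the solution `v`: with `z` the midpoint,
`√v(x) = (1 + t) m`, `√v(y) = (1 - t) m`, `Dv(x) = 2 (1 + t) (g - k)`, `Dv(y) = 2 (1 - t) (g + k)`
and `Dv(z) = 2 g + e`. -/
structure CriticalPair where
  /-- The relative difference of the two square roots. -/
  t : ℝ
  /-- The common gradient of `m √v`, up to the corrections `k` and `e`. -/
  g : E2
  /-- The correction coming from the derivative of `|x - y|²`. -/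
  k : E2
  /-- The correction coming from the derivative of the weight. -/
  e : E2

namespace CriticalPair

variable (P : CriticalPair) {σ M : ℝ}

/-- `Dv(x)`. -/
def gradX : E2 := (2 * (1 + P.t)) • (P.g - P.k)

/-- `Dv(y)`. -/
def gradY : E2 := (2 * (1 - P.t)) • (P.g + P.k)

/-- `Dv(z)`. -/
def gradMid : E2 := (2 : ℝ) • P.g + P.e

/-- The size of the corrections `k` and `e`. -/
def defect : ℝ := ‖P.k‖ ^ 2 + ‖P.e‖

/-- The factor lost in the correlation of the two test directions to keep their covariance
positive. -/
def loss (σ M : ℝ) : ℝ := 50 * M * σ * P.defect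

/-- The covariance of the test direction at `x`. -/
def covX (σ : ℝ) : Matrix (Fin 2) (Fin 2) ℝ := (1 + P.t) ^ 2 • mcMatrix σ P.gradX

/-- The covariance of the test direction at `y`. -/
def covY (σ : ℝ) : Matrix (Fin 2) (Fin 2) ℝ := (1 - P.t) ^ 2 • mcMatrix σ P.gradY

/-- The mixed covariance of the two test directions; it is chosen so that the mean of the two
directions has covariance `(1 - loss) • mcMatrix σ gradMid`. -/
def covMixed (σ M : ℝ) : Matrix (Fin 2) (Fin 2) ℝ :=
  (2 * (1 - P.loss σ M)) • mcMatrix σ P.gradMid - (2 : ℝ)⁻¹ • (P.covX σ + P.covY σ)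

lemma covX_isSymm (σ : ℝ) : (P.covX σ).IsSymm := (isSymm_mcMatrix _ _).smul _

lemma covY_isSymm (σ : ℝ) : (P.covY σ).IsSymm := (isSymm_mcMatrix _ _).smul _

lemma covMixed_isSymm (σ M : ℝ) : (P.covMixed σ M).IsSymm :=
  ((isSymm_mcMatrix _ _).smul _).sub (((P.covX_isSymm σ).add (P.covY_isSymm σ)).smul _)

lemma dotProduct_covX_mulVec (σ : ℝ) (ξ η : E2) :
    ξ.ofLp ⬝ᵥ (P.covX σ).mulVec η.ofLp = (1 + P.t) ^ 2 *
      (⟪ξ, η⟫ + σ * (cross P.gradX ξ * cross P.gradX η)) := by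
  rw [covX, Matrix.smul_mulVec, dotProduct_smul, dotProduct_mcMatrix_mulVec, smul_eq_mul]

lemma dotProduct_covY_mulVec (σ : ℝ) (ξ η : E2) :
    ξ.ofLp ⬝ᵥ (P.covY σ).mulVec η.ofLp = (1 - P.t) ^ 2 *
      (⟪ξ, η⟫ + σ * (cross P.gradY ξ * cross P.gradY η)) := by
  rw [covY, Matrix.smul_mulVec, dotProduct_smul, dotProduct_mcMatrix_mulVec, smul_eq_mul]

lemma dotProduct_covMixed_mulVec (σ M : ℝ) (ξ η : E2) :
    ξ.ofLp ⬝ᵥ (P.covMixed σ M).mulVec η.ofLp =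
      2 * (1 - P.loss σ M) * (⟪ξ, η⟫ + σ * (cross P.gradMid ξ * cross P.gradMid η))
      - (2 : ℝ)⁻¹ * ((1 + P.t) ^ 2 * (⟪ξ, η⟫ + σ * (cross P.gradX ξ * cross P.gradX η))
        + (1 - P.t) ^ 2 * (⟪ξ, η⟫ + σ * (cross P.gradY ξ * cross P.gradY η))) := by
  rw [covMixed, Matrix.sub_mulVec, dotProduct_sub, Matrix.smul_mulVec, dotProduct_smul,
    Matrix.smul_mulVec, dotProduct_smul, Matrix.add_mulVec, dotProduct_add,
    dotProduct_covX_mulVec, dotProduct_covY_mulVec, dotProduct_mcMatrix_mulVec, smul_eq_mul,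
    smul_eq_mul]

/-- The a priori bounds on a critical pair. -/
structure Bounded (M : ℝ) : Prop where
  one_le : 1 ≤ M
  abs_t_lt : |P.t| < 1
  g_le : ‖P.g‖ ^ 2 ≤ M
  k_le : ‖P.k‖ ≤ 1
  e_le : ‖P.e‖ ≤ 1

lemma defect_nonneg : 0 ≤ P.defect := by unfold defect; positivity

lemma loss_nonneg (hσ : 0 ≤ σ) (hM : 0 ≤ M) : 0 ≤ P.loss σ M :=
  mul_nonneg (by positivity) P.defect_nonneg

variable {P}

namespace Bounded

lemma abs_t_le (h : P.Bounded M) : |P.t| ≤ 1 := h.abs_t_lt.le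

lemma t_sq_le (h : P.Bounded M) : P.t ^ 2 ≤ 1 := (sq_le_one_iff_abs_le_one _).2 h.abs_t_le

lemma pos (h : P.Bounded M) : 0 < M := one_pos.trans_le h.one_le

lemma k_sq_le (h : P.Bounded M) : ‖P.k‖ ^ 2 ≤ 1 := pow_le_one₀ (norm_nonneg _) h.k_le

lemma defect_le (h : P.Bounded M) : P.defect ≤ 2 := by
  unfold defect; linarith [h.k_sq_le, h.e_le]

lemma cross_g_sq_le (h : P.Bounded M) (ζ : E2) : cross P.g ζ ^ 2 ≤ M * ‖ζ‖ ^ 2 :=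
  (cross_sq_le _ _).trans (by gcongr; exact h.g_le)

lemma cross_k_sq_le (h : P.Bounded M) (ζ : E2) : cross P.k ζ ^ 2 ≤ M * ‖ζ‖ ^ 2 :=
  (cross_sq_le _ _).trans (by gcongr; exact h.k_sq_le.trans h.one_le)

/-! ### Positivity of the covariance -/

lemma covariance_sum_part (h : P.Bounded M) (s : E2) :
    -(16 * M * ‖s‖ ^ 2) ≤ P.t / 2 *
      ((1 - P.t) ^ 3 * cross (P.g + P.k) s ^ 2 - (1 + P.t) ^ 3 * cross (P.g - P.k) s ^ 2) := by
  obtain ⟨t, g, k, e⟩ := P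
  have ht := h.t_sq_le
  have hg := h.cross_g_sq_le s
  have hk := h.cross_k_sq_le s
  have coef : |t * (1 + 3 * t ^ 2)| ≤ 1 * 4 :=
    abs_mul_le_mul h.abs_t_le (abs_le.2 ⟨by nlinarith, by nlinarith⟩)
  have young := abs_two_mul_le_add_of_sq_le_mul (sq_nonneg (cross g s)) (sq_nonneg (cross k s))
    (mul_pow (cross g s) (cross k s) 2).le
  have mixed := (abs_le.1 (abs_mul_le_mul coef young)).1
  have diag : t ^ 2 * (3 + t ^ 2) * (cross g s ^ 2 + cross k s ^ 2)
      ≤ 4 * (cross g s ^ 2 + cross k s ^ 2) := by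
    gcongr
    nlinarith
  simp only [cross_add_left, cross_sub_left] at *
  nlinarith

lemma covariance_mixed_part (h : P.Bounded M) (s ζ : E2) :
    -(2 * P.t ^ 2 * cross P.g ζ ^ 2 + 8 * M * ‖s‖ ^ 2 + 6 * ‖P.k‖ ^ 2 * ‖ζ‖ ^ 2) ≤
      (1 - P.t ^ 2) * ((1 + P.t) ^ 2 * (cross (P.g - P.k) s * cross (P.g - P.k) ζ)
        - (1 - P.t) ^ 2 * (cross (P.g + P.k) s * cross (P.g + P.k) ζ)) := by
  obtain ⟨t, g, k, e⟩ := P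
  have ht := h.t_sq_le
  have hgs := h.cross_g_sq_le s
  have hgζ := h.cross_g_sq_le ζ
  have hks := h.cross_k_sq_le s
  have hks' := cross_sq_le k s
  have hkζ := cross_sq_le k ζ
  simp only [cross_add_left, cross_sub_left] at *
  have gg := abs_two_mul_le_add_of_sq_le_mul (sq_nonneg (cross g s)) (sq_nonneg (t * cross g ζ))
    (mul_pow (cross g s) (t * cross g ζ) 2).le
  have kk := abs_mul_le_mul h.abs_t_le (abs_two_mul_le_add_of_sq_le_mul (sq_nonneg (cross k s))
    (sq_nonneg (cross k ζ)) (mul_pow (cross k s) (cross k ζ) 2).le)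
  have gk := abs_two_mul_le_add_of_sq_le_mul (sq_nonneg (cross g s)) (sq_nonneg (cross k ζ))
    (mul_pow (cross g s) (cross k ζ) 2).le
  have kg := abs_two_mul_le_add_of_sq_le_mul (a := cross k s * cross g ζ)
    (A := M * ‖s‖ ^ 2) (B := ‖k‖ ^ 2 * ‖ζ‖ ^ 2) (by have := h.pos; positivity) (by positivity) (by
      calc (cross k s * cross g ζ) ^ 2 = cross k s ^ 2 * cross g ζ ^ 2 := mul_pow _ _ _
        _ ≤ (‖k‖ ^ 2 * ‖s‖ ^ 2) * (M * ‖ζ‖ ^ 2) := by gcongr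
        _ = _ := by ring)
  have coef : |1 + t ^ 2| ≤ 2 := abs_le.2 ⟨by nlinarith, by linarith⟩
  have sum : |2 * (cross g s * cross k ζ) + 2 * (cross k s * cross g ζ)| ≤ _ :=
    (abs_add_le _ _).trans (add_le_add gk kg)
  have total := abs_mul_le_mul coef sum
  have bound : |4 * t * (cross g s * cross g ζ + cross k s * cross k ζ)
      - 2 * (1 + t ^ 2) * (cross g s * cross k ζ + cross k s * cross g ζ)| ≤
      2 * t ^ 2 * cross g ζ ^ 2 + 8 * M * ‖s‖ ^ 2 + 6 * ‖k‖ ^ 2 * ‖ζ‖ ^ 2 := by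
    rw [abs_le] at *
    constructor <;> nlinarith
  have unit : |1 - t ^ 2| ≤ 1 := abs_le.2 ⟨by nlinarith, by nlinarith⟩
  have := (abs_le.1 (abs_mul_le_mul unit bound)).1
  rw [one_mul] at this
  exact this.trans_eq (by ring)

lemma covariance_difference_part (h : P.Bounded M) {κ : ℝ} (hκ : 0 ≤ κ) (ζ : E2) :
    2 * P.t ^ 2 * cross P.g ζ ^ 2 - 22 * ‖P.k‖ ^ 2 * ‖ζ‖ ^ 2 - 5 * M * ‖P.e‖ * ‖ζ‖ ^ 2 ≤
      2 * ((1 + P.t) ^ 3 * cross (P.g - P.k) ζ ^ 2 + (1 - P.t) ^ 3 * cross (P.g + P.k) ζ ^ 2)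
        - (1 - κ) * cross P.gradMid ζ ^ 2 := by
  have hM := h.pos
  have he : cross P.e ζ ^ 2 ≤ M * ‖P.e‖ * ‖ζ‖ ^ 2 := by
    calc cross P.e ζ ^ 2 ≤ ‖P.e‖ ^ 2 * ‖ζ‖ ^ 2 := cross_sq_le _ _
      _ ≤ (M * ‖P.e‖) * ‖ζ‖ ^ 2 := by
        gcongr
        nlinarith [norm_nonneg P.e, h.e_le, h.one_le]
  obtain ⟨t, g, k, e⟩ := P
  have ht := h.t_sq_le
  have hg := h.cross_g_sq_le ζ
  have hk := cross_sq_le k ζ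
  have hκmid : 0 ≤ κ * cross (gradMid ⟨t, g, k, e⟩) ζ ^ 2 := by positivity
  simp only [cross_add_left, cross_sub_left, gradMid, cross_smul_left] at *
  have gk := abs_mul_le_mul (a := 3 + t ^ 2) (A := 4) (abs_le.2 ⟨by nlinarith, by linarith⟩)
    (abs_two_mul_le_add_of_sq_le_mul (a := t * cross g ζ * cross k ζ)
      (A := 5 / 8 * (t * cross g ζ) ^ 2) (B := 8 / 5 * cross k ζ ^ 2) (by positivity)
      (by positivity) (by ring_nf; rfl))
  have ge := abs_two_mul_le_add_of_sq_le_mul (a := cross g ζ * cross e ζ)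
    (A := M * ‖e‖ * ‖ζ‖ ^ 2) (B := ‖e‖ * ‖ζ‖ ^ 2) (by positivity) (by positivity) (by
      calc (cross g ζ * cross e ζ) ^ 2 = cross g ζ ^ 2 * cross e ζ ^ 2 := mul_pow _ _ _
        _ ≤ (M * ‖ζ‖ ^ 2) * (‖e‖ ^ 2 * ‖ζ‖ ^ 2) := by gcongr; exact cross_sq_le _ _
        _ = _ := by ring)
  have eM : ‖e‖ * ‖ζ‖ ^ 2 ≤ M * ‖e‖ * ‖ζ‖ ^ 2 := by
    rw [mul_assoc]; exact le_mul_of_one_le_left (by positivity) h.one_le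
  have tk : 0 ≤ t ^ 2 * cross k ζ ^ 2 := by positivity
  have hkζ : 0 ≤ ‖k‖ ^ 2 * ‖ζ‖ ^ 2 := by positivity
  rw [abs_le] at gk ge
  linarith

/-- The bilinear form of the covariance of the two test directions, in the scaled directions `α` and
`β`, is `(1 - t²) |α + β|² - 4 κ ⟪α, β⟫` plus `4 σ` times the form estimated here. -/
lemma covariance_cross_part (h : P.Bounded M) {κ : ℝ} (hκ : 0 ≤ κ) (hκ' : κ ≤ 1) (s ζ : E2) :
    -(50 * M * (‖s‖ ^ 2 + P.defect * ‖ζ‖ ^ 2)) ≤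
      (1 + P.t) ^ 3 * (1 - P.t) * cross (P.g - P.k) ((2 : ℝ)⁻¹ • s + ζ) ^ 2
      + (1 + P.t) * (1 - P.t) ^ 3 * cross (P.g + P.k) ((2 : ℝ)⁻¹ • s - ζ) ^ 2
      + (1 - κ) * (cross P.gradMid ((2 : ℝ)⁻¹ • s + ζ) * cross P.gradMid ((2 : ℝ)⁻¹ • s - ζ))
      - (1 + P.t) ^ 4
        * (cross (P.g - P.k) ((2 : ℝ)⁻¹ • s + ζ) * cross (P.g - P.k) ((2 : ℝ)⁻¹ • s - ζ))
      - (1 - P.t) ^ 4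
        * (cross (P.g + P.k) ((2 : ℝ)⁻¹ • s + ζ) * cross (P.g + P.k) ((2 : ℝ)⁻¹ • s - ζ)) := by
  have sum := h.covariance_sum_part s
  have mixed := h.covariance_mixed_part s ζ
  have difference := h.covariance_difference_part hκ ζ
  have mid : 0 ≤ (1 - κ) * cross P.gradMid s ^ 2 := mul_nonneg (by linarith) (sq_nonneg _)
  have hM := h.pos
  have k_le : ‖P.k‖ ^ 2 * ‖ζ‖ ^ 2 ≤ M * (‖P.k‖ ^ 2 * ‖ζ‖ ^ 2) :=
    le_mul_of_one_le_left (by positivity) h.one_le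
  have hs : 0 ≤ M * ‖s‖ ^ 2 := by positivity
  have hk : 0 ≤ M * (‖P.k‖ ^ 2 * ‖ζ‖ ^ 2) := by positivity
  have he : 0 ≤ M * (‖P.e‖ * ‖ζ‖ ^ 2) := by positivity
  simp only [cross_add_right, cross_sub_right, cross_smul_right, defect] at *
  linarith

lemma covariance_form_nonneg (h : P.Bounded M) (hσ : 0 ≤ σ) (hsmall : 300 * M * σ ≤ 1 - P.t ^ 2)
    (ξ η : E2) : 0 ≤ ξ.ofLp ⬝ᵥ (P.covX σ).mulVec ξ.ofLp + η.ofLp ⬝ᵥ (P.covY σ).mulVec η.ofLp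
      + 2 * (ξ.ofLp ⬝ᵥ (P.covMixed σ M).mulVec η.ofLp) := by
  have hM := h.pos
  set κ := P.loss σ M with κ_def
  have hκ : 0 ≤ κ := P.loss_nonneg hσ hM.le
  have hκ' : κ ≤ 100 * M * σ := by
    rw [κ_def, loss]
    nlinarith [mul_le_mul_of_nonneg_left h.defect_le (by positivity : 0 ≤ 50 * M * σ)]
  have ht : 0 < 1 - P.t ^ 2 := by linarith [(sq_lt_one_iff_abs_lt_one _).2 h.abs_t_lt]
  let s : E2 := (1 + P.t) • ξ + (1 - P.t) • η
  let ζ : E2 := (2 : ℝ)⁻¹ • ((1 + P.t) • ξ - (1 - P.t) • η)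
  have hα : (2 : ℝ)⁻¹ • s + ζ = (1 + P.t) • ξ := by module
  have hβ : (2 : ℝ)⁻¹ • s - ζ = (1 - P.t) • η := by module
  have part := h.covariance_cross_part hκ (by nlinarith [sq_nonneg P.t]) s ζ
  rw [hα, hβ] at part
  have sq_s : ‖s‖ ^ 2 = (1 + P.t) ^ 2 * ‖ξ‖ ^ 2 + (1 - P.t) ^ 2 * ‖η‖ ^ 2
      + 2 * (1 - P.t ^ 2) * ⟪ξ, η⟫ := by
    simp only [s, norm_sq_eq_coord, inner_eq_coord, PiLp.add_apply, PiLp.smul_apply, smul_eq_mul]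
    ring
  have sq_ζ : 4 * ‖ζ‖ ^ 2 = ‖s‖ ^ 2 - 4 * (1 - P.t ^ 2) * ⟪ξ, η⟫ := by
    simp only [s, ζ, norm_sq_eq_coord, inner_eq_coord, PiLp.add_apply, PiLp.sub_apply,
      PiLp.smul_apply, smul_eq_mul]
    ring
  have loss_ζ : κ * ‖ζ‖ ^ 2 = 50 * M * σ * P.defect * ‖ζ‖ ^ 2 := rfl
  refine (mul_nonneg_iff_of_pos_left ht).1 ?_
  have slack : 0 ≤ (1 - P.t ^ 2 - κ - 200 * M * σ) * ‖s‖ ^ 2 :=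
    mul_nonneg (by linarith) (sq_nonneg _)
  have := mul_le_mul_of_nonneg_left part (by positivity : 0 ≤ 4 * σ)
  simp only [dotProduct_covX_mulVec, dotProduct_covY_mulVec, dotProduct_covMixed_mulVec, ← κ_def,
    gradX, gradY, cross_smul_left, cross_smul_right, real_inner_self_eq_norm_sq] at *
  linear_combination this + slack + (1 - P.t ^ 2) * sq_s + κ * sq_ζ - 4 * loss_ζ

lemma covariance_posSemidef (h : P.Bounded M) (hσ : 0 ≤ σ) (hsmall : 300 * M * σ ≤ 1 - P.t ^ 2) :
    (Matrix.fromBlocks (P.covX σ) (P.covMixed σ M) (P.covMixed σ M) (P.covY σ)).PosSemidef := by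
  refine Matrix.PosSemidef.of_dotProduct_mulVec_nonneg ?_ fun v => ?_
  · exact Matrix.IsHermitian.fromBlocks (P.covX_isSymm σ) (P.covMixed_isSymm σ M) (P.covY_isSymm σ)
  · have := h.covariance_form_nonneg hσ hsmall (WithLp.toLp 2 fun i => v (.inl i))
      (WithLp.toLp 2 fun i => v (.inr i))
    refine this.trans_eq ?_
    simp only [dotProduct, Fintype.sum_sum_type, Matrix.mulVec, Matrix.fromBlocks_apply₁₁,
      Matrix.fromBlocks_apply₁₂, Matrix.fromBlocks_apply₂₁, Matrix.fromBlocks_apply₂₂,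
      Fin.sum_univ_two, (P.covMixed_isSymm σ M).apply 0 1, star_trivial]
    ring

end Bounded
end CriticalPair

/-! ### Area factors -/

lemma pow_three_le_taylor {y z : ℝ} (hy : 1 ≤ y) (hz : 1 ≤ z) :
    y ^ 3 ≤ z ^ 3 + 3 / 2 * z * (y ^ 2 - z ^ 2) + (y ^ 2 - z ^ 2) ^ 2 := by
  have : (y - z) ^ 2 * (y + z / 2) ≤ (y - z) ^ 2 * (y + z) ^ 2 := by
    gcongr
    nlinarith
  nlinarith

namespace CriticalPair

variable {P : CriticalPair} {σ M : ℝ}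

/-- The critical pair with the two points exchanged. -/
def swap (P : CriticalPair) : CriticalPair := ⟨-P.t, P.g, -P.k, P.e⟩

lemma gradX_swap : P.swap.gradX = P.gradY := by
  simp only [gradX, gradY, swap, ← sub_eq_add_neg, sub_neg_eq_add]

lemma gradMid_swap : P.swap.gradMid = P.gradMid := rfl

lemma defect_swap : P.swap.defect = P.defect := by
  simp only [defect, swap, norm_neg]

namespace Bounded

lemma swap (h : P.Bounded M) : P.swap.Bounded M where
  one_le := h.one_le
  abs_t_lt := (abs_neg P.t).trans_lt h.abs_t_lt
  g_le := h.g_le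
  k_le := (norm_neg P.k).trans_le h.k_le
  e_le := h.e_le

lemma norm_g_le (h : P.Bounded M) : ‖P.g‖ ≤ M := by
  nlinarith [h.g_le, h.one_le, norm_nonneg P.g]

lemma abs_inner_g_e_le (h : P.Bounded M) : |⟪P.g, P.e⟫| ≤ M * ‖P.e‖ :=
  (abs_real_inner_le_norm _ _).trans (by gcongr; exact h.norm_g_le)

lemma abs_two_mul_t_inner_g_k_le (h : P.Bounded M) :
    |2 * (P.t * ⟪P.g, P.k⟫)| ≤ M * P.t ^ 2 + ‖P.k‖ ^ 2 := by
  have hM := h.pos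
  refine abs_two_mul_le_add_of_sq_le_mul (by positivity) (by positivity) ?_
  calc (P.t * ⟪P.g, P.k⟫) ^ 2 = P.t ^ 2 * |⟪P.g, P.k⟫| ^ 2 := by rw [mul_pow, sq_abs]
    _ ≤ P.t ^ 2 * (‖P.g‖ * ‖P.k‖) ^ 2 := by gcongr; exact abs_real_inner_le_norm _ _
    _ = ‖P.g‖ ^ 2 * (P.t ^ 2 * ‖P.k‖ ^ 2) := by ring
    _ ≤ M * (P.t ^ 2 * ‖P.k‖ ^ 2) := by gcongr; exact h.g_le
    _ = _ := by ring

lemma norm_gradMid_sq_le (h : P.Bounded M) : ‖P.gradMid‖ ^ 2 ≤ 10 * M := by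
  have : ‖P.gradMid‖ ≤ 2 * ‖P.g‖ + 1 :=
    (norm_add_le _ _).trans (by rw [norm_smul, Real.norm_two]; linarith [h.e_le])
  nlinarith [norm_nonneg P.gradMid, norm_nonneg P.g, h.g_le, h.one_le, sq_nonneg (‖P.g‖ - 1)]

lemma norm_gradX_sub_gradMid_sq_le (h : P.Bounded M) :
    ‖P.gradX - P.gradMid‖ ^ 2 ≤ 48 * M * (P.t ^ 2 + P.defect) := by
  have split : P.gradX - P.gradMid =
      (2 * P.t) • P.g + (-(2 * (1 + P.t))) • P.k + (-1 : ℝ) • P.e := by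
    simp only [gradX, gradMid]; module
  have norm_le : ‖P.gradX - P.gradMid‖ ≤ 2 * |P.t| * ‖P.g‖ + 4 * ‖P.k‖ + ‖P.e‖ := by
    rw [split]
    refine (norm_add₃_le).trans ?_
    simp only [norm_smul, Real.norm_eq_abs, abs_mul, abs_neg, abs_two, abs_one, one_mul]
    have : |1 + P.t| ≤ 2 := (abs_add_le _ _).trans (by rw [abs_one]; linarith [h.abs_t_le])
    gcongr
    linarith
  have hg : |P.t| ^ 2 * ‖P.g‖ ^ 2 ≤ |P.t| ^ 2 * M := by gcongr; exact h.g_le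
  have he : ‖P.e‖ ^ 2 ≤ M * ‖P.e‖ := by
    nlinarith [norm_nonneg P.e, h.e_le, h.one_le]
  have hk : ‖P.k‖ ^ 2 ≤ M * ‖P.k‖ ^ 2 := le_mul_of_one_le_left (sq_nonneg _) h.one_le
  calc ‖P.gradX - P.gradMid‖ ^ 2 ≤ (2 * |P.t| * ‖P.g‖ + 4 * ‖P.k‖ + ‖P.e‖) ^ 2 := by gcongr
    _ ≤ 3 * (4 * (|P.t| ^ 2 * ‖P.g‖ ^ 2) + 16 * ‖P.k‖ ^ 2 + ‖P.e‖ ^ 2) := by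
      nlinarith [sq_nonneg (2 * |P.t| * ‖P.g‖ - 4 * ‖P.k‖), sq_nonneg (4 * ‖P.k‖ - ‖P.e‖),
        sq_nonneg (2 * |P.t| * ‖P.g‖ - ‖P.e‖)]
    _ ≤ 48 * M * (P.t ^ 2 + P.defect) := by
      rw [defect, ← sq_abs P.t]
      nlinarith [mul_nonneg h.pos.le (norm_nonneg P.e), mul_nonneg h.pos.le (sq_nonneg |P.t|)]

lemma norm_gradX_add_gradMid_sq_le (h : P.Bounded M) : ‖P.gradX + P.gradMid‖ ^ 2 ≤ 121 * M := by
  have hX : ‖P.gradX‖ ≤ 4 * (‖P.g‖ + 1) := by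
    have : |1 + P.t| ≤ 2 := (abs_add_le _ _).trans (by rw [abs_one]; linarith [h.abs_t_le])
    rw [gradX, norm_smul, Real.norm_eq_abs, abs_mul, abs_two]
    gcongr
    · linarith
    · exact (norm_sub_le _ _).trans (by linarith [h.k_le])
  have hmid : ‖P.gradMid‖ ≤ 2 * ‖P.g‖ + 1 :=
    (norm_add_le _ _).trans (by rw [norm_smul, Real.norm_two]; linarith [h.e_le])
  have : ‖P.gradX + P.gradMid‖ ≤ 6 * ‖P.g‖ + 5 := (norm_add_le _ _).trans (by linarith)
  nlinarith [norm_nonneg (P.gradX + P.gradMid), norm_nonneg P.g, h.g_le, h.one_le,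
    sq_nonneg (‖P.g‖ - 1)]

lemma sq_norm_gradX_sq_sub_le (h : P.Bounded M) :
    (‖P.gradX‖ ^ 2 - ‖P.gradMid‖ ^ 2) ^ 2 ≤ 6000 * M ^ 2 * (P.t ^ 2 + P.defect) := by
  have hM := h.pos
  have hd : 0 ≤ P.t ^ 2 + P.defect := add_nonneg (sq_nonneg _) P.defect_nonneg
  calc (‖P.gradX‖ ^ 2 - ‖P.gradMid‖ ^ 2) ^ 2
      = |⟪P.gradX - P.gradMid, P.gradX + P.gradMid⟫| ^ 2 := by
        simp only [sq_abs, norm_sq_eq_coord, inner_eq_coord, PiLp.add_apply, PiLp.sub_apply]; ring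
    _ ≤ (‖P.gradX - P.gradMid‖ * ‖P.gradX + P.gradMid‖) ^ 2 := by
        gcongr; exact abs_real_inner_le_norm _ _
    _ = ‖P.gradX - P.gradMid‖ ^ 2 * ‖P.gradX + P.gradMid‖ ^ 2 := mul_pow _ _ _
    _ ≤ 48 * M * (P.t ^ 2 + P.defect) * (121 * M) := by
        gcongr
        exacts [h.norm_gradX_sub_gradMid_sq_le, h.norm_gradX_add_gradMid_sq_le]
    _ ≤ 6000 * M ^ 2 * (P.t ^ 2 + P.defect) := by nlinarith [mul_nonneg (sq_nonneg M) hd]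

lemma norm_grad_sq_average_le (h : P.Bounded M) :
    (1 + P.t) * (‖P.gradX‖ ^ 2 - ‖P.gradMid‖ ^ 2) + (1 - P.t) * (‖P.gradY‖ ^ 2 - ‖P.gradMid‖ ^ 2)
      ≤ 200 * M * (P.t ^ 2 + P.defect) := by
  have expand : (1 + P.t) * (‖P.gradX‖ ^ 2 - ‖P.gradMid‖ ^ 2)
      + (1 - P.t) * (‖P.gradY‖ ^ 2 - ‖P.gradMid‖ ^ 2) =
      24 * (P.t ^ 2 * ‖P.g‖ ^ 2) + (8 + 24 * P.t ^ 2) * ‖P.k‖ ^ 2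
        - (24 + 8 * P.t ^ 2) * (2 * (P.t * ⟪P.g, P.k⟫)) - 8 * ⟪P.g, P.e⟫ - 2 * ‖P.e‖ ^ 2 := by
    simp only [gradX, gradY, gradMid, norm_sq_eq_coord, inner_eq_coord, PiLp.add_apply,
      PiLp.sub_apply, PiLp.smul_apply, smul_eq_mul]
    ring
  have ht := h.t_sq_le
  have hM := h.pos
  have hg : P.t ^ 2 * ‖P.g‖ ^ 2 ≤ P.t ^ 2 * M := by gcongr; exact h.g_le
  have hk : ‖P.k‖ ^ 2 ≤ M * ‖P.k‖ ^ 2 := le_mul_of_one_le_left (sq_nonneg _) h.one_le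
  have hk' : P.t ^ 2 * ‖P.k‖ ^ 2 ≤ 1 * ‖P.k‖ ^ 2 := by gcongr
  have hgk := (abs_le.1 (abs_mul_le_mul (a := 24 + 8 * P.t ^ 2) (A := 32)
    (abs_le.2 ⟨by nlinarith, by linarith⟩) h.abs_two_mul_t_inner_g_k_le)).1
  have hge := (abs_le.1 h.abs_inner_g_e_le).1
  have he : 0 ≤ M * ‖P.e‖ := by positivity
  have hMt : 0 ≤ M * P.t ^ 2 := by positivity
  have hMk : 0 ≤ M * ‖P.k‖ ^ 2 := by positivity
  rw [expand, defect]
  linarith [sq_nonneg ‖P.e‖]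

lemma areaFactor_gradX_pow_three_le (h : P.Bounded M) (hσ : 0 ≤ σ) (hσ1 : σ ≤ 1) :
    areaFactor σ P.gradX ^ 3 ≤ areaFactor σ P.gradMid ^ 3
      + 3 / 2 * areaFactor σ P.gradMid * (σ * (‖P.gradX‖ ^ 2 - ‖P.gradMid‖ ^ 2))
      + σ * (6000 * M ^ 2 * (P.t ^ 2 + P.defect)) := by
  have taylor := pow_three_le_taylor (one_le_areaFactor hσ P.gradX) (one_le_areaFactor hσ P.gradMid)
  rw [areaFactor_sq hσ, areaFactor_sq hσ, add_sub_add_left_eq_sub, ← mul_sub, mul_pow] at taylor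
  refine taylor.trans (add_le_add_right ?_ _)
  have : σ ^ 2 ≤ σ := by nlinarith
  gcongr
  exact h.sq_norm_gradX_sq_sub_le

lemma areaFactor_gradMid_sq_le (h : P.Bounded M) (hσ : 0 ≤ σ) (hσ1 : σ ≤ 1) :
    areaFactor σ P.gradMid ^ 2 ≤ 11 * M := by
  rw [areaFactor_sq hσ]
  nlinarith [h.norm_gradMid_sq_le, h.one_le, sq_nonneg ‖P.gradMid‖]

lemma areaFactor_gradMid_pow_three_le (h : P.Bounded M) (hσ : 0 ≤ σ) (hσ1 : σ ≤ 1) :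
    areaFactor σ P.gradMid ^ 3 ≤ 121 * M ^ 2 := by
  have := h.areaFactor_gradMid_sq_le hσ hσ1
  have := one_le_areaFactor hσ P.gradMid
  nlinarith

/-- The area factors at the end points and at the midpoint cancel to first order. -/
lemma areaFactor_average_le (h : P.Bounded M) (hσ : 0 ≤ σ) (hσ1 : σ ≤ 1) :
    (1 + P.t) * areaFactor σ P.gradX ^ 3 + (1 - P.t) * areaFactor σ P.gradY ^ 3
      - 2 * areaFactor σ P.gradMid ^ 3 ≤ 20000 * M ^ 2 * (σ * (P.t ^ 2 + P.defect)) := by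
  have hX := mul_le_mul_of_nonneg_left (h.areaFactor_gradX_pow_three_le hσ hσ1)
    (by linarith [(abs_lt.1 h.abs_t_lt).1] : 0 ≤ 1 + P.t)
  have hY := mul_le_mul_of_nonneg_left (h.swap.areaFactor_gradX_pow_three_le hσ hσ1)
    (by linarith [(abs_lt.1 h.abs_t_lt).2] : 0 ≤ 1 - P.t)
  rw [gradX_swap, gradMid_swap, defect_swap, show P.swap.t = -P.t from rfl, neg_sq] at hY
  have hd : 0 ≤ P.t ^ 2 + P.defect := add_nonneg (sq_nonneg _) P.defect_nonneg
  have hM := h.pos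
  have mid_le : areaFactor σ P.gradMid ≤ 11 * M := by
    nlinarith [h.areaFactor_gradMid_sq_le hσ hσ1, one_le_areaFactor hσ P.gradMid]
  have first_order : areaFactor σ P.gradMid * (σ *
      ((1 + P.t) * (‖P.gradX‖ ^ 2 - ‖P.gradMid‖ ^ 2)
        + (1 - P.t) * (‖P.gradY‖ ^ 2 - ‖P.gradMid‖ ^ 2))) ≤
      11 * M * (σ * (200 * M * (P.t ^ 2 + P.defect))) :=
    (mul_le_mul_of_nonneg_left
      (mul_le_mul_of_nonneg_left h.norm_grad_sq_average_le hσ) (areaFactor_nonneg _ _)).trans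
      (mul_le_mul_of_nonneg_right mid_le (by positivity))
  have : 0 ≤ M ^ 2 * (σ * (P.t ^ 2 + P.defect)) := by positivity
  linarith

end Bounded
end CriticalPair

/-! ### The inequality at a critical pair -/

lemma abs_two_mul_cross_mul_cross_le (a : ℝ) (p p' l l' : E2) :
    |2 * (a * (cross p l * cross p' l'))| ≤
      a ^ 2 * (‖p‖ ^ 2 * ‖p'‖ ^ 2) + ‖l‖ ^ 2 * ‖l'‖ ^ 2 := by
  refine abs_two_mul_le_add_of_sq_le_mul (by positivity) (by positivity) ?_
  calc (a * (cross p l * cross p' l')) ^ 2 = a ^ 2 * (cross p l ^ 2 * cross p' l' ^ 2) := by ring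
    _ ≤ a ^ 2 * ((‖p‖ ^ 2 * ‖l‖ ^ 2) * (‖p'‖ ^ 2 * ‖l'‖ ^ 2)) := by
      gcongr <;> exact cross_sq_le _ _
    _ = _ := by ring

lemma abs_mcOp_sub_trace_le {σ B : ℝ} (hσ : 0 ≤ σ) (p : E2) {Q : Matrix (Fin 2) (Fin 2) ℝ}
    (hQ : ∀ i j, |Q i j| ≤ B) : |mcOp σ p Q - Q.trace| ≤ 2 * σ * ‖p‖ ^ 2 * B := by
  have expand : mcOp σ p Q - Q.trace = σ * (Q 0 0 * p 1 ^ 2 + Q 1 1 * p 0 ^ 2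
      - Q 0 1 * (p 0 * p 1) - Q 1 0 * (p 0 * p 1)) := by
    rw [mcOp_eq, Matrix.trace_fin_two]; ring
  have diag (i : Fin 2) : |p i ^ 2| ≤ p i ^ 2 := (abs_of_nonneg (sq_nonneg _)).le
  have off : |p 0 * p 1| ≤ (p 0 ^ 2 + p 1 ^ 2) / 2 := by
    rw [abs_mul, ← sq_abs (p 0), ← sq_abs (p 1)]; nlinarith [sq_nonneg (|p 0| - |p 1|)]
  have b₀ := abs_mul_le_mul (hQ 0 0) (diag 1)
  have b₁ := abs_mul_le_mul (hQ 1 1) (diag 0)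
  have b₂ := abs_mul_le_mul (hQ 0 1) off
  have b₃ := abs_mul_le_mul (hQ 1 0) off
  rw [expand, abs_mul, abs_of_nonneg hσ, norm_sq_eq_coord]
  refine (mul_le_mul_of_nonneg_left (?_ : |_| ≤ 2 * (p 0 ^ 2 + p 1 ^ 2) * B) hσ).trans_eq (by ring)
  rw [abs_le] at *
  constructor <;> linarith

namespace CriticalPair

section

variable (P : CriticalPair) (σ M : ℝ)

lemma cross_gradX_smul (μ : ℝ) : cross P.gradX (μ • (P.g - P.k)) = 0 := by
  simp only [gradX, cross, PiLp.smul_apply, smul_eq_mul]; ring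

lemma cross_gradY_smul (μ : ℝ) : cross P.gradY (μ • (P.g + P.k)) = 0 := by
  simp only [gradY, cross, PiLp.smul_apply, smul_eq_mul]; ring

lemma covX_add_covY_add_two_smul_covMixed :
    P.covX σ + P.covY σ + (2 : ℝ) • P.covMixed σ M =
      (4 * (1 - P.loss σ M)) • mcMatrix σ P.gradMid := by
  rw [covMixed]; module

lemma trace_mul_covX (X : Matrix (Fin 2) (Fin 2) ℝ) :
    (X * P.covX σ).trace = (1 + P.t) ^ 2 * mcOp σ P.gradX X := by
  rw [Matrix.trace_mul_comm, covX, Matrix.smul_mul, Matrix.trace_smul, mcOp, smul_eq_mul]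

lemma trace_mul_covY (Y : Matrix (Fin 2) (Fin 2) ℝ) :
    (Y * P.covY σ).trace = (1 - P.t) ^ 2 * mcOp σ P.gradY Y := by
  rw [Matrix.trace_mul_comm, covY, Matrix.smul_mul, Matrix.trace_smul, mcOp, smul_eq_mul]

lemma trace_mul_cov_sum (A : Matrix (Fin 2) (Fin 2) ℝ) :
    (A * (P.covX σ + P.covY σ + (2 : ℝ) • P.covMixed σ M)).trace =
      4 * (1 - P.loss σ M) * mcOp σ P.gradMid A := by
  rw [covX_add_covY_add_two_smul_covMixed, Matrix.trace_mul_comm, Matrix.smul_mul,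
    Matrix.trace_smul, mcOp, smul_eq_mul]

/-- What remains of the terms quadratic in the gradient. -/
lemma gradient_terms_eq (μ : ℝ) {px py : E2} (hpx : px = μ • (P.g - P.k))
    (hpy : py = μ • (P.g + P.k)) :
    (1 + P.t) * ‖px‖ ^ 2 + (1 - P.t) * ‖py‖ ^ 2
      - (px.ofLp ⬝ᵥ (P.covX σ).mulVec px.ofLp + py.ofLp ⬝ᵥ (P.covY σ).mulVec py.ofLp
        + 2 * (px.ofLp ⬝ᵥ (P.covMixed σ M).mulVec py.ofLp)) / 2 =
    μ ^ 2 * (2 * (1 - P.t ^ 2) * ‖P.k‖ ^ 2 + 2 * P.loss σ M * (‖P.g‖ ^ 2 - ‖P.k‖ ^ 2)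
      - 2 * (1 - P.loss σ M) * σ * (cross P.e P.g ^ 2 - cross P.gradMid P.k ^ 2)) := by
  have hX := P.cross_gradX_smul μ
  have hY := P.cross_gradY_smul μ
  rw [← hpx] at hX
  rw [← hpy] at hY
  simp only [dotProduct_covX_mulVec, dotProduct_covY_mulVec, dotProduct_covMixed_mulVec, hX, hY,
    mul_zero, zero_mul, add_zero]
  simp only [hpx, hpy, norm_sq_eq_coord, inner_eq_coord, gradMid, cross, PiLp.add_apply,
    PiLp.sub_apply, PiLp.smul_apply, smul_eq_mul]
  ring

end

variable {P : CriticalPair} {σ M : ℝ}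

namespace Bounded

lemma critical_inequality (h : P.Bounded M) (hσ : 0 ≤ σ) (hsmall : 300 * M * σ ≤ 1 - P.t ^ 2)
    {D : SecondOrderData} {μ : ℝ} (hmin : ∀ ξ η, 0 ≤ D.secondVariation ξ η)
    (hpx : D.px = μ • (P.g - P.k)) (hpy : D.py = μ • (P.g + P.k))
    (hA : mcOp σ P.gradMid D.A = -(2 * areaFactor σ P.gradMid ^ 3))
    (hX : (1 + P.t) * D.m * mcOp σ P.gradX D.X = -(areaFactor σ P.gradX ^ 3 + ‖D.px‖ ^ 2))
    (hY : (1 - P.t) * D.m * mcOp σ P.gradY D.Y = -(areaFactor σ P.gradY ^ 3 + ‖D.py‖ ^ 2)) :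
    0 ≤ (1 + P.t) * areaFactor σ P.gradX ^ 3 + (1 - P.t) * areaFactor σ P.gradY ^ 3
        - 2 * (1 - P.loss σ M) * areaFactor σ P.gradMid ^ 3
      + μ ^ 2 * (2 * (1 - P.t ^ 2) * ‖P.k‖ ^ 2 + 2 * P.loss σ M * (‖P.g‖ ^ 2 - ‖P.k‖ ^ 2)
        - 2 * (1 - P.loss σ M) * σ * (cross P.e P.g ^ 2 - cross P.gradMid P.k ^ 2))
      - D.δ * (2 * D.q * (P.covX σ + P.covY σ - (2 : ℝ) • P.covMixed σ M).trace
        + (1 - P.loss σ M) * (‖D.l‖ ^ 2 * mcOp σ P.gradMid D.Q)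
        + 2 * (D.l.ofLp ⬝ᵥ (P.covX σ - P.covY σ).mulVec D.dq.ofLp)) := by
  have traced := D.traced_secondVariation_nonneg hmin (P.covMixed_isSymm σ M)
    (h.covariance_posSemidef hσ hsmall)
  rw [trace_mul_cov_sum, trace_mul_cov_sum, trace_mul_covX, trace_mul_covY, hA] at traced
  linear_combination traced - (1 + P.t) * hX - (1 - P.t) * hY
    + P.gradient_terms_eq σ M μ hpx hpy

/-! ### Error terms -/

lemma le_trace_cov (h : P.Bounded M) (hσ : 0 ≤ σ) :
    8 * P.t ^ 2 - 130 * M * σ * (P.t ^ 2 + P.defect) ≤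
      (P.covX σ + P.covY σ - (2 : ℝ) • P.covMixed σ M).trace := by
  have hM := h.pos
  have hκ := P.loss_nonneg hσ hM.le
  have expand : (P.covX σ + P.covY σ - (2 : ℝ) • P.covMixed σ M).trace =
      8 * P.t ^ 2 + 8 * P.loss σ M + 4 * P.loss σ M * (σ * ‖P.gradMid‖ ^ 2)
      + σ * (16 * P.t ^ 2 * (6 + P.t ^ 2) * ‖P.g‖ ^ 2
        + (16 + 16 * P.t ^ 2 * (6 + P.t ^ 2)) * ‖P.k‖ ^ 2
        - 64 * (1 + P.t ^ 2) * (2 * (P.t * ⟪P.g, P.k⟫)) - 16 * ⟪P.g, P.e⟫ - 4 * ‖P.e‖ ^ 2) := by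
    simp only [covX, covY, covMixed, mcMatrix, gradX, gradY, gradMid, norm_sq_eq_coord,
      inner_eq_coord, Matrix.trace_fin_two, Matrix.add_apply, Matrix.sub_apply, Matrix.smul_apply,
      Matrix.of_apply, Matrix.cons_val', Matrix.cons_val_zero, Matrix.cons_val_one,
      Matrix.cons_val_fin_one, PiLp.add_apply, PiLp.sub_apply, PiLp.smul_apply, smul_eq_mul]
    ring
  have hgk := (abs_le.1 (abs_mul_le_mul (a := 64 * (1 + P.t ^ 2)) (A := 128)
    (abs_le.2 ⟨by nlinarith, by linarith [h.t_sq_le]⟩) h.abs_two_mul_t_inner_g_k_le)).2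
  have hge := (abs_le.1 h.abs_inner_g_e_le).2
  have he : ‖P.e‖ ^ 2 ≤ M * ‖P.e‖ := by nlinarith [norm_nonneg P.e, h.e_le, h.one_le]
  have hk : ‖P.k‖ ^ 2 ≤ M * ‖P.k‖ ^ 2 := le_mul_of_one_le_left (sq_nonneg _) h.one_le
  have hg_coef : 0 ≤ 16 * P.t ^ 2 * (6 + P.t ^ 2) * ‖P.g‖ ^ 2 := by positivity
  have hk_coef : 0 ≤ 16 * P.t ^ 2 * (6 + P.t ^ 2) * ‖P.k‖ ^ 2 := by positivity
  have hloss : 0 ≤ P.loss σ M * (σ * ‖P.gradMid‖ ^ 2) := by positivity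
  have hMt : 0 ≤ M * P.t ^ 2 := by positivity
  have hMk : 0 ≤ M * ‖P.k‖ ^ 2 := by positivity
  have hMe : 0 ≤ M * ‖P.e‖ := by positivity
  have bracket := mul_le_mul_of_nonneg_left (show -(130 * M * (P.t ^ 2 + P.defect)) ≤
      16 * P.t ^ 2 * (6 + P.t ^ 2) * ‖P.g‖ ^ 2
        + (16 + 16 * P.t ^ 2 * (6 + P.t ^ 2)) * ‖P.k‖ ^ 2
        - 64 * (1 + P.t ^ 2) * (2 * (P.t * ⟪P.g, P.k⟫)) - 16 * ⟪P.g, P.e⟫ - 4 * ‖P.e‖ ^ 2 by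
    rw [defect]; linarith) hσ
  rw [expand]
  linarith

lemma abs_dotProduct_cov_sub_le (h : P.Bounded M) (hσ : 0 ≤ σ) (l dq : E2) :
    |l.ofLp ⬝ᵥ (P.covX σ - P.covY σ).mulVec dq.ofLp - 4 * P.t * ⟪l, dq⟫| ≤
      128 * M ^ 2 * σ * (P.t ^ 2 + ‖P.k‖ ^ 2 + ‖l‖ ^ 2 * ‖dq‖ ^ 2) := by
  have expand : l.ofLp ⬝ᵥ (P.covX σ - P.covY σ).mulVec dq.ofLp - 4 * P.t * ⟪l, dq⟫ =
      σ * (16 * (1 + P.t ^ 2) * (2 * (P.t * (cross P.g l * cross P.g dq)))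
        + 16 * (1 + P.t ^ 2) * (2 * (P.t * (cross P.k l * cross P.k dq)))
        - 4 * (1 + 6 * P.t ^ 2 + P.t ^ 4) * (2 * (1 * (cross P.g l * cross P.k dq)))
        - 4 * (1 + 6 * P.t ^ 2 + P.t ^ 4) * (2 * (1 * (cross P.k l * cross P.g dq)))) := by
    rw [Matrix.sub_mulVec, dotProduct_sub, dotProduct_covX_mulVec, dotProduct_covY_mulVec]
    simp only [gradX, gradY, cross_smul_left, cross_add_left, cross_sub_left]
    ring
  have ht := h.t_sq_le
  have hM := h.pos
  have hM1 := h.one_le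
  have hg := h.g_le
  have hk := h.k_sq_le
  have hkM : ‖P.k‖ ^ 2 ≤ M := hk.trans h.one_le
  have coef₁ : |16 * (1 + P.t ^ 2)| ≤ 32 := (abs_of_nonneg (by positivity)).trans_le (by linarith)
  have coef₂ : |4 * (1 + 6 * P.t ^ 2 + P.t ^ 4)| ≤ 32 :=
    (abs_of_nonneg (by positivity)).trans_le (by nlinarith)
  have gg := abs_mul_le_mul coef₁ (abs_two_mul_cross_mul_cross_le P.t P.g P.g l dq)
  have kk := abs_mul_le_mul coef₁ (abs_two_mul_cross_mul_cross_le P.t P.k P.k l dq)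
  have gk := abs_mul_le_mul coef₂ (abs_two_mul_cross_mul_cross_le 1 P.g P.k l dq)
  have kg := abs_mul_le_mul coef₂ (abs_two_mul_cross_mul_cross_le 1 P.k P.g l dq)
  have hgg : P.t ^ 2 * (‖P.g‖ ^ 2 * ‖P.g‖ ^ 2) ≤ P.t ^ 2 * (M * M) := by gcongr
  have hkk : P.t ^ 2 * (‖P.k‖ ^ 2 * ‖P.k‖ ^ 2) ≤ P.t ^ 2 * (M * M) := by gcongr
  have hgk : ‖P.g‖ ^ 2 * ‖P.k‖ ^ 2 ≤ M * M * ‖P.k‖ ^ 2 := by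
    gcongr; exact hg.trans (le_mul_of_one_le_left hM.le hM1)
  have hΛ : ‖l‖ ^ 2 * ‖dq‖ ^ 2 ≤ M * M * (‖l‖ ^ 2 * ‖dq‖ ^ 2) :=
    le_mul_of_one_le_left (by positivity) (one_le_mul_of_one_le_of_one_le hM1 hM1)
  have hMt : 0 ≤ M * M * P.t ^ 2 := by positivity
  have hMk : 0 ≤ M * M * ‖P.k‖ ^ 2 := by positivity
  rw [expand, abs_mul, abs_of_nonneg hσ]
  refine (mul_le_mul_of_nonneg_left (?_ : |_| ≤
    128 * M ^ 2 * (P.t ^ 2 + ‖P.k‖ ^ 2 + ‖l‖ ^ 2 * ‖dq‖ ^ 2)) hσ).trans_eq (by ring)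
  rw [abs_le] at *
  constructor <;> linarith

end Bounded
end CriticalPair

/-- The regime in which second order data at a critical pair are contradictory: the corrections `k`
and `e` and the curvature parameter `σ` are small, compared with the coercivity constant `c` of the
weight. Here `S` measures `|x - y|²` relative to the size of the Hessian of the weight. -/
structure CriticalPair.IsPerturbative (P : CriticalPair) (D : SecondOrderData) (σ M c S : ℝ) :
    Prop where
  bounded : P.Bounded M
  σ_nonneg : 0 ≤ σ
  σ_le_gap : 300 * M * σ ≤ 1 - P.t ^ 2
  σ_le : 10 ^ 6 * M ^ 4 * σ ≤ c * D.δ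
  δ_pos : 0 < D.δ
  δ_le : 10 ^ 5 * M * D.δ ≤ c
  c_le : c ≤ 1
  S_pos : 0 < S
  k_le : ‖P.k‖ ^ 2 ≤ M * D.δ ^ 2 * S
  e_le : ‖P.e‖ ≤ M * D.δ * S
  scaled_k_le : D.m⁻¹ ^ 2 * ‖P.k‖ ^ 2 ≤ M * D.δ ^ 2 * S
  scaled_e_le : D.m⁻¹ ^ 2 * ‖P.e‖ ≤ M * D.δ * S
  one_le_q : 1 ≤ D.q
  q_le : D.q ≤ M
  le_trace : c * S ≤ ‖D.l‖ ^ 2 * D.Q.trace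
  hessian_le : ∀ i j, |‖D.l‖ ^ 2 * D.Q i j| ≤ M * S
  gradient_le : ‖D.l‖ ^ 2 * ‖D.dq‖ ^ 2 ≤ c / 16 * (D.q * S)

namespace CriticalPair.IsPerturbative

variable {P : CriticalPair} {D : SecondOrderData} {σ M c S : ℝ}

lemma c_pos (h : P.IsPerturbative D σ M c S) : 0 < c := by
  have := h.bounded.pos
  have := h.δ_pos
  exact lt_of_lt_of_le (by positivity) h.δ_le

lemma δ_le_one (h : P.IsPerturbative D σ M c S) : D.δ ≤ 1 := by
  nlinarith [h.δ_le, h.c_le, h.bounded.one_le, h.δ_pos]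

lemma pow_mul_σ_le (h : P.IsPerturbative D σ M c S) {n : ℕ} (hn : n ≤ 4) :
    M ^ n * σ ≤ c * D.δ / 10 ^ 6 := by
  have := mul_le_mul_of_nonneg_right (pow_le_pow_right₀ h.bounded.one_le hn) h.σ_nonneg
  linarith [h.σ_le]

lemma pow_mul_σ_le' (h : P.IsPerturbative D σ M c S) {n : ℕ} (hn : n ≤ 4) :
    M ^ n * σ ≤ c / 10 ^ 6 := by
  nlinarith [h.pow_mul_σ_le hn, h.c_pos, h.δ_le_one]

lemma δ_sq_mul_le (h : P.IsPerturbative D σ M c S) : M * D.δ ^ 2 * S ≤ M * D.δ * S := by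
  have := h.bounded.pos
  have := h.S_pos
  have : D.δ ^ 2 ≤ D.δ := by nlinarith [h.δ_pos, h.δ_le_one]
  gcongr

lemma defect_le (h : P.IsPerturbative D σ M c S) : P.defect ≤ 2 * (M * D.δ * S) := by
  rw [defect]; linarith [h.k_le, h.e_le, h.δ_sq_mul_le]

lemma scaled_defect_le (h : P.IsPerturbative D σ M c S) :
    D.m⁻¹ ^ 2 * P.defect ≤ 2 * (M * D.δ * S) := by
  rw [defect, mul_add]; linarith [h.scaled_k_le, h.scaled_e_le, h.δ_sq_mul_le]

lemma loss_le (h : P.IsPerturbative D σ M c S) : P.loss σ M ≤ 1 / 3 := by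
  have hM := h.bounded.pos
  have hσ := h.σ_nonneg
  have := mul_le_mul_of_nonneg_left h.bounded.defect_le (by positivity : 0 ≤ 50 * M * σ)
  rw [loss]
  linarith [h.σ_le_gap, sq_nonneg P.t]

lemma loss_le_mul (h : P.IsPerturbative D σ M c S) :
    P.loss σ M ≤ 100 * (M ^ 2 * σ * (D.δ * S)) := by
  have hM := h.bounded.pos
  have hσ := h.σ_nonneg
  rw [loss]
  linarith [mul_le_mul_of_nonneg_left h.defect_le (by positivity : 0 ≤ 50 * M * σ)]

lemma areaFactor_terms_le (h : P.IsPerturbative D σ M c S) :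
    (1 + P.t) * areaFactor σ P.gradX ^ 3 + (1 - P.t) * areaFactor σ P.gradY ^ 3
      - 2 * (1 - P.loss σ M) * areaFactor σ P.gradMid ^ 3
      ≤ D.δ * P.t ^ 2 + c / 10 * (D.δ * S) := by
  have hM := h.bounded.pos
  have hσ := h.σ_nonneg
  have hδ := h.δ_pos
  have hS := h.S_pos
  have hc := h.c_pos
  have hU : 0 < D.δ * S := by positivity
  have hσ1 : σ ≤ 1 := by
    have := h.pow_mul_σ_le' (n := 0) (by norm_num)
    linarith [h.c_le]
  have average := h.bounded.areaFactor_average_le hσ hσ1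
  have loss_mid : P.loss σ M * areaFactor σ P.gradMid ^ 3 ≤
      100 * (M ^ 2 * σ * (D.δ * S)) * (121 * M ^ 2) :=
    mul_le_mul h.loss_le_mul (h.bounded.areaFactor_gradMid_pow_three_le hσ hσ1)
      (pow_nonneg (areaFactor_nonneg _ _) 3) (by positivity)
  have defect := mul_le_mul_of_nonneg_left h.defect_le (by positivity : 0 ≤ M ^ 2 * σ)
  have t_part := mul_le_mul_of_nonneg_right (h.pow_mul_σ_le (n := 2) (by norm_num)) (sq_nonneg P.t)
  have third := mul_le_mul_of_nonneg_right (h.pow_mul_σ_le' (n := 3) (by norm_num)) hU.le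
  have fourth := mul_le_mul_of_nonneg_right (h.pow_mul_σ_le' (n := 4) (by norm_num)) hU.le
  have c_t : c * (D.δ * P.t ^ 2) ≤ D.δ * P.t ^ 2 := mul_le_of_le_one_left (by positivity) h.c_le
  have cU : 0 < c * (D.δ * S) := by positivity
  linarith [mul_nonneg hδ.le (sq_nonneg P.t)]

lemma gradient_terms_le (h : P.IsPerturbative D σ M c S) :
    D.m⁻¹ ^ 2 * (2 * (1 - P.t ^ 2) * ‖P.k‖ ^ 2 + 2 * P.loss σ M * (‖P.g‖ ^ 2 - ‖P.k‖ ^ 2)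
      - 2 * (1 - P.loss σ M) * σ * (cross P.e P.g ^ 2 - cross P.gradMid P.k ^ 2))
      ≤ c / 20 * (D.δ * S) := by
  have hM := h.bounded.pos
  have hσ := h.σ_nonneg
  have hδ := h.δ_pos
  have hS := h.S_pos
  have hκ := P.loss_nonneg hσ hM.le
  have hκ1 := h.loss_le
  have hμk : 0 ≤ D.m⁻¹ ^ 2 * ‖P.k‖ ^ 2 := by positivity
  have loss_part : D.m⁻¹ ^ 2 * (P.loss σ M * ‖P.g‖ ^ 2) ≤ 100 * (M ^ 3 * σ * (D.δ * S)) := by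
    calc D.m⁻¹ ^ 2 * (P.loss σ M * ‖P.g‖ ^ 2) ≤ D.m⁻¹ ^ 2 * (P.loss σ M * M) := by
          gcongr; exact h.bounded.g_le
      _ = 50 * M ^ 2 * σ * (D.m⁻¹ ^ 2 * P.defect) := by rw [loss]; ring
      _ ≤ 50 * M ^ 2 * σ * (2 * (M * D.δ * S)) :=
          mul_le_mul_of_nonneg_left h.scaled_defect_le (by positivity)
      _ = _ := by ring
  have cross_part : D.m⁻¹ ^ 2 * (σ * cross P.gradMid P.k ^ 2) ≤ 10 * (M ^ 2 * σ * (D.δ * S)) := by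
    calc D.m⁻¹ ^ 2 * (σ * cross P.gradMid P.k ^ 2)
        ≤ D.m⁻¹ ^ 2 * (σ * (10 * M * ‖P.k‖ ^ 2)) := by
          gcongr
          exact (cross_sq_le _ _).trans (by gcongr; exact h.bounded.norm_gradMid_sq_le)
      _ = 10 * M * σ * (D.m⁻¹ ^ 2 * ‖P.k‖ ^ 2) := by ring
      _ ≤ 10 * M * σ * (M * D.δ * S) :=
          mul_le_mul_of_nonneg_left (h.scaled_k_le.trans h.δ_sq_mul_le) (by positivity)
      _ = _ := by ring
  have second := mul_le_mul_of_nonneg_right (h.pow_mul_σ_le' (n := 2) (by norm_num))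
    (by positivity : 0 ≤ D.δ * S)
  have third := mul_le_mul_of_nonneg_right (h.pow_mul_σ_le' (n := 3) (by norm_num))
    (by positivity : 0 ≤ D.δ * S)
  have k_part := mul_le_mul_of_nonneg_right h.δ_le (by positivity : 0 ≤ D.δ * S)
  have drop_t : 0 ≤ P.t ^ 2 * (D.m⁻¹ ^ 2 * ‖P.k‖ ^ 2) := by positivity
  have drop_k : 0 ≤ P.loss σ M * (D.m⁻¹ ^ 2 * ‖P.k‖ ^ 2) := by positivity
  have drop_e : 0 ≤ (1 - P.loss σ M) * (D.m⁻¹ ^ 2 * (σ * cross P.e P.g ^ 2)) :=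
    mul_nonneg (by linarith) (by positivity)
  have drop_loss : 0 ≤ P.loss σ M * (D.m⁻¹ ^ 2 * (σ * cross P.gradMid P.k ^ 2)) := by positivity
  linarith [h.scaled_k_le]

lemma le_trace_term (h : P.IsPerturbative D σ M c S) :
    16 * D.q * P.t ^ 2 - P.t ^ 2 - c / 20 * S ≤
      2 * D.q * (P.covX σ + P.covY σ - (2 : ℝ) • P.covMixed σ M).trace := by
  have hM := h.bounded.pos
  have hσ := h.σ_nonneg
  have hδ := h.δ_pos
  have hS := h.S_pos
  have hq := h.one_le_q
  have cS : 0 < c * S := mul_pos h.c_pos hS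
  have trace := mul_le_mul_of_nonneg_left (h.bounded.le_trace_cov hσ) (by linarith : 0 ≤ 2 * D.q)
  have hd : 0 ≤ P.t ^ 2 + P.defect := add_nonneg (sq_nonneg _) P.defect_nonneg
  have q_part := mul_le_mul_of_nonneg_right h.q_le (by positivity :
    0 ≤ 260 * M * σ * (P.t ^ 2 + P.defect))
  have defect := mul_le_mul_of_nonneg_left h.defect_le (by positivity : 0 ≤ M ^ 2 * σ)
  have t_part := mul_le_mul_of_nonneg_right (h.pow_mul_σ_le' (n := 2) (by norm_num))
    (sq_nonneg P.t)
  have third := mul_le_mul_of_nonneg_right (h.pow_mul_σ_le' (n := 3) (by norm_num))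
    (by positivity : 0 ≤ D.δ * S)
  have c_t : c * P.t ^ 2 ≤ P.t ^ 2 := mul_le_of_le_one_left (sq_nonneg _) h.c_le
  have cU : c * (D.δ * S) ≤ c * S := by
    rw [mul_left_comm]; exact mul_le_of_le_one_left cS.le h.δ_le_one
  linarith [sq_nonneg P.t]

lemma le_hessian_term (h : P.IsPerturbative D σ M c S) :
    c / 2 * S ≤ (1 - P.loss σ M) * (‖D.l‖ ^ 2 * mcOp σ P.gradMid D.Q) := by
  have hM := h.bounded.pos
  have hσ := h.σ_nonneg
  have hS := h.S_pos
  have cS : 0 < c * S := mul_pos h.c_pos hS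
  have scaled : ‖D.l‖ ^ 2 * mcOp σ P.gradMid D.Q = mcOp σ P.gradMid (‖D.l‖ ^ 2 • D.Q) := by
    rw [mcOp, mcOp, Matrix.mul_smul, Matrix.trace_smul, smul_eq_mul]
  have perturb := (abs_le.1 (abs_mcOp_sub_trace_le hσ P.gradMid (Q := ‖D.l‖ ^ 2 • D.Q)
    h.hessian_le)).1
  rw [← scaled, Matrix.trace_smul, smul_eq_mul] at perturb
  have error : 2 * σ * ‖P.gradMid‖ ^ 2 * (M * S) ≤ 2 * σ * (10 * M) * (M * S) := by
    gcongr; exact h.bounded.norm_gradMid_sq_le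
  have second := mul_le_mul_of_nonneg_right (h.pow_mul_σ_le' (n := 2) (by norm_num)) hS.le
  have lower : 3 / 4 * (c * S) ≤ ‖D.l‖ ^ 2 * mcOp σ P.gradMid D.Q := by linarith [h.le_trace]
  nlinarith [h.loss_le]

lemma le_mixed_term (h : P.IsPerturbative D σ M c S) :
    -(8 * D.q * P.t ^ 2 + P.t ^ 2 + c / 5 * S) ≤
      2 * (D.l.ofLp ⬝ᵥ (P.covX σ - P.covY σ).mulVec D.dq.ofLp) := by
  have hM := h.bounded.pos
  have hσ := h.σ_nonneg
  have hS := h.S_pos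
  have hc := h.c_pos
  have hq := h.one_le_q
  have cS : 0 < c * S := mul_pos hc hS
  have difference := (abs_le.1 (h.bounded.abs_dotProduct_cov_sub_le hσ D.l D.dq)).1
  have young : |2 * (4 * (P.t * ⟪D.l, D.dq⟫))| ≤ 8 * D.q * P.t ^ 2 + c / 8 * S := by
    refine abs_two_mul_le_add_of_sq_le_mul (by positivity) (by positivity) ?_
    calc (4 * (P.t * ⟪D.l, D.dq⟫)) ^ 2 = 16 * P.t ^ 2 * |⟪D.l, D.dq⟫| ^ 2 := by
          rw [sq_abs]; ring
      _ ≤ 16 * P.t ^ 2 * (‖D.l‖ * ‖D.dq‖) ^ 2 := by gcongr; exact abs_real_inner_le_norm _ _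
      _ = 16 * P.t ^ 2 * (‖D.l‖ ^ 2 * ‖D.dq‖ ^ 2) := by ring
      _ ≤ 16 * P.t ^ 2 * (c / 16 * (D.q * S)) :=
          mul_le_mul_of_nonneg_left h.gradient_le (by positivity)
      _ = _ := by ring
  have errors_le : ‖P.k‖ ^ 2 + ‖D.l‖ ^ 2 * ‖D.dq‖ ^ 2 ≤ 2 * (M * S) := by
    have hδS : M * D.δ * S ≤ M * S := by
      rw [mul_right_comm]; exact mul_le_of_le_one_right (by positivity) h.δ_le_one
    have hqS : c / 16 * (D.q * S) ≤ 1 * (M * S) := by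
      gcongr
      exacts [by linarith [h.c_le], h.q_le]
    linarith [h.k_le, h.δ_sq_mul_le, h.gradient_le]
  have error := mul_le_mul_of_nonneg_left errors_le (by positivity : 0 ≤ 256 * (M ^ 2 * σ))
  have t_part := mul_le_mul_of_nonneg_right (h.pow_mul_σ_le' (n := 2) (by norm_num))
    (sq_nonneg P.t)
  have third := mul_le_mul_of_nonneg_right (h.pow_mul_σ_le' (n := 3) (by norm_num)) hS.le
  have c_t : c * P.t ^ 2 ≤ P.t ^ 2 := mul_le_of_le_one_left (sq_nonneg _) h.c_le
  linarith [(abs_le.1 young).1, sq_nonneg P.t]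

/-- The weight contributes `-8 δ q t² - c δ S / 2` to the traced second variation, which dominates
all the error terms. -/
theorem not_forall_secondVariation_nonneg (h : P.IsPerturbative D σ M c S)
    (hpx : D.px = D.m⁻¹ • (P.g - P.k)) (hpy : D.py = D.m⁻¹ • (P.g + P.k))
    (hA : mcOp σ P.gradMid D.A = -(2 * areaFactor σ P.gradMid ^ 3))
    (hX : (1 + P.t) * D.m * mcOp σ P.gradX D.X = -(areaFactor σ P.gradX ^ 3 + ‖D.px‖ ^ 2))
    (hY : (1 - P.t) * D.m * mcOp σ P.gradY D.Y = -(areaFactor σ P.gradY ^ 3 + ‖D.py‖ ^ 2)) :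
    ¬∀ ξ η, 0 ≤ D.secondVariation ξ η := by
  intro hmin
  have critical := h.bounded.critical_inequality h.σ_nonneg h.σ_le_gap hmin hpx hpy hA hX hY
  have weight := mul_le_mul_of_nonneg_left
    (add_le_add (add_le_add h.le_trace_term h.le_hessian_term) h.le_mixed_term) h.δ_pos.le
  have q_part : 0 ≤ (D.q - 1) * (D.δ * P.t ^ 2) :=
    mul_nonneg (by linarith [h.one_le_q]) (mul_nonneg h.δ_pos.le (sq_nonneg _))
  have t_part : 0 ≤ D.δ * P.t ^ 2 := mul_nonneg h.δ_pos.le (sq_nonneg _)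
  have S_part : 0 < c * (D.δ * S) := mul_pos h.c_pos (mul_pos h.δ_pos h.S_pos)
  linarith [h.areaFactor_terms_le, h.gradient_terms_le]

end CriticalPair.IsPerturbative

/-! ### Second order expansions -/

/-- The Peano expansion `g τ = a + b τ + c τ² + o(τ²)` as `τ → 0`. It is all that is used of the
second derivatives, which spares differentiating composite functions twice. -/
def HasQuadraticExpansion (g : ℝ → ℝ) (a b c : ℝ) : Prop :=
  (fun τ => g τ - (a + b * τ + c * τ ^ 2)) =o[𝓝 0] fun τ : ℝ => τ ^ 2

lemma isLittleO_cube_mul {p : ℝ → ℝ} (hp : ContinuousAt p 0) :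
    (fun τ : ℝ => τ ^ 3 * p τ) =o[𝓝 0] fun τ : ℝ => τ ^ 2 := by
  have : (fun τ : ℝ => τ ^ 3) =o[𝓝 0] fun τ : ℝ => τ ^ 2 := isLittleO_pow_pow (by norm_num)
  simpa using this.mul_isBigO (hp.tendsto.isBigO_one ℝ)

namespace HasQuadraticExpansion

variable {g k : ℝ → ℝ} {a b c a' b' c' : ℝ}

lemma quadratic (a b c : ℝ) :
    HasQuadraticExpansion (fun τ => a + b * τ + c * τ ^ 2) a b c := by
  simp [HasQuadraticExpansion]

lemma congr (h : HasQuadraticExpansion g a b c) (hk : ∀ τ, k τ = g τ) (ha : a' = a)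
    (hb : b' = b) (hc : c' = c) : HasQuadraticExpansion k a' b' c' := by
  rwa [funext hk, ha, hb, hc]

lemma apply_zero (h : HasQuadraticExpansion g a b c) : g 0 = a := by
  have := (h.def zero_lt_one).self_of_nhds
  simp only [mul_zero, add_zero, ne_eq, OfNat.ofNat_ne_zero, not_false_eq_true, zero_pow,
    norm_zero, norm_le_zero_iff] at this
  linarith

lemma add (h : HasQuadraticExpansion g a b c) (h' : HasQuadraticExpansion k a' b' c') :
    HasQuadraticExpansion (fun τ => g τ + k τ) (a + a') (b + b') (c + c') :=
  (IsLittleO.add h h').congr_left fun τ => by ring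

lemma const_mul (d : ℝ) (h : HasQuadraticExpansion g a b c) :
    HasQuadraticExpansion (fun τ => d * g τ) (d * a) (d * b) (d * c) :=
  (IsLittleO.const_mul_left h d).congr_left fun τ => by ring

lemma sub (h : HasQuadraticExpansion g a b c) (h' : HasQuadraticExpansion k a' b' c') :
    HasQuadraticExpansion (fun τ => g τ - k τ) (a - a') (b - b') (c - c') :=
  (IsLittleO.sub h h').congr_left fun τ => by ring

lemma hasDerivAt (h : HasQuadraticExpansion g a b c) : HasDerivAt g b 0 := by
  have hsq : (fun τ : ℝ => τ ^ 2) =o[𝓝 0] fun τ : ℝ => τ := by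
    simpa using isLittleO_pow_pow (𝕜 := ℝ) (show 1 < 2 by norm_num)
  rw [hasDerivAt_iff_isLittleO, h.apply_zero]
  refine ((h.trans hsq).add (hsq.const_mul_left c)).congr (fun τ => ?_) fun τ => (sub_zero τ).symm
  rw [sub_zero, smul_eq_mul]
  ring

lemma tendsto (h : HasQuadraticExpansion g a b c) : Tendsto g (𝓝 0) (𝓝 a) :=
  h.apply_zero ▸ h.hasDerivAt.continuousAt

lemma mul (h : HasQuadraticExpansion g a b c) (h' : HasQuadraticExpansion k a' b' c') :
    HasQuadraticExpansion (fun τ => g τ * k τ) (a * a') (a * b' + b * a')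
      (a * c' + b * b' + c * a') := by
  have left := h.mul_isBigO (h'.tendsto.isBigO_one ℝ)
  have right := ((quadratic a b c).tendsto.isBigO_one ℝ).mul_isLittleO h'
  have cubic := isLittleO_cube_mul (p := fun τ => (b * c' + c * b') + c * c' * τ) (by fun_prop)
  simp only [mul_one, one_mul] at left right
  exact ((left.add right).add cubic).congr_left fun τ => by ring

lemma sqrt_of_sq {s β γ : ℝ} (hs : 0 < s)
    (h : HasQuadraticExpansion g (s ^ 2) (2 * s * β) (2 * s * γ + β ^ 2)) :
    HasQuadraticExpansion (fun τ => √(g τ)) s β γ := by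
  have cubic := isLittleO_cube_mul (p := fun τ => 2 * β * γ + γ ^ 2 * τ) (by fun_prop)
  have square : (fun τ => g τ - (s + β * τ + γ * τ ^ 2) ^ 2) =o[𝓝 0] fun τ : ℝ => τ ^ 2 :=
    (IsLittleO.sub h cubic).congr_left fun τ => by ring
  refine (IsBigO.of_bound (2 / s) ?_).trans_isLittleO square
  filter_upwards [h.tendsto.eventually_const_lt (by positivity : 0 < s ^ 2),
    (quadratic s β γ).tendsto.eventually_const_lt (half_lt_self hs)] with τ hg hp
  set p := s + β * τ + γ * τ ^ 2
  have factor : g τ - p ^ 2 = (√(g τ) - p) * (√(g τ) + p) := by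
    linear_combination -Real.sq_sqrt hg.le
  have hsum : s / 2 ≤ √(g τ) + p := by linarith [Real.sqrt_nonneg (g τ)]
  rw [Real.norm_eq_abs, Real.norm_eq_abs, factor, abs_mul,
    abs_of_pos ((half_pos hs).trans_le hsum)]
  calc |√(g τ) - p| = 2 / s * (|√(g τ) - p| * (s / 2)) := by field_simp
    _ ≤ 2 / s * (|√(g τ) - p| * (√(g τ) + p)) := by gcongr

lemma sqrt {s : ℝ} (h : HasQuadraticExpansion g a b c) (hs : 0 < s) (ha : a = s ^ 2) :
    HasQuadraticExpansion (fun τ => √(g τ)) s (b / (2 * s))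
      (c / (2 * s) - b ^ 2 / (8 * s ^ 3)) := by
  refine sqrt_of_sq hs (h.congr (fun _ => rfl) ha.symm ?_ ?_) <;> field_simp
  ring

lemma eq_zero_of_isLocalMin (h : HasQuadraticExpansion g a b c) (hm : IsLocalMin g 0) : b = 0 :=
  hm.hasDerivAt_eq_zero h.hasDerivAt

lemma nonneg_of_isLocalMin (h : HasQuadraticExpansion g a b c) (hm : IsLocalMin g 0) :
    0 ≤ c := by
  by_contra! hc
  have near : ∀ᶠ τ in 𝓝[≠] 0, g 0 ≤ g τ ∧
      ‖g τ - (a + b * τ + c * τ ^ 2)‖ ≤ -c / 2 * ‖τ ^ 2‖ :=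
    (hm.and (h.def (by linarith))).filter_mono nhdsWithin_le_nhds
  obtain ⟨τ, ⟨hmin, hτ⟩, hτ0⟩ := (near.and eventually_mem_nhdsWithin).exists
  rw [h.apply_zero] at hmin
  rw [Real.norm_eq_abs, Real.norm_eq_abs, abs_of_nonneg (sq_nonneg τ),
    h.eq_zero_of_isLocalMin hm] at hτ
  nlinarith [(abs_le.1 hτ).2, sq_pos_of_ne_zero hτ0]

/-- Taylor's formula in Peano form: differentiability of `g'` at `0` suffices. -/
lemma of_hasDerivAt {g' : ℝ → ℝ} (hg : ∀ᶠ τ in 𝓝 0, HasDerivAt g (g' τ) τ)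
    (hg' : HasDerivAt g' c 0) : HasQuadraticExpansion g (g 0) (g' 0) (c / 2) := by
  obtain ⟨r, hr, hball⟩ := Metric.eventually_nhds_iff_ball.1 hg
  have hpoly (τ : ℝ) : HasDerivAt (fun τ => g' 0 * τ + c / 2 * τ ^ 2) (g' 0 + c * τ) τ := by
    refine (((hasDerivAt_id τ).const_mul (g' 0)).add
      (((hasDerivAt_id τ).pow 2).const_mul (c / 2))).congr_deriv ?_
    simp only [id_eq, Nat.cast_ofNat]
    ring
  have hrem := (convex_ball (0 : ℝ) r).isLittleO_pow_succ_real (n := 1) (Metric.mem_ball_self hr)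
    (fun τ hτ => ((hball τ hτ).sub (hpoly τ)).hasDerivWithinAt)
    (((hasDerivAt_iff_isLittleO.1 hg').congr (fun τ => by rw [smul_eq_mul, sub_zero]; ring)
      fun τ => (pow_one _).symm).mono nhdsWithin_le_nhds)
  rw [Metric.isOpen_ball.nhdsWithin_eq (Metric.mem_ball_self hr)] at hrem
  refine hrem.congr (fun τ => ?_) fun τ => by rw [sub_zero]
  simp only [Pi.sub_apply]
  ring

end HasQuadraticExpansion

section QuadForm

variable (A B : Matrix (Fin 2) (Fin 2) ℝ) (ζ : E2)

lemma quadForm_add : quadForm (A + B) ζ = quadForm A ζ + quadForm B ζ := by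
  simp only [quadForm, Matrix.add_mulVec, dotProduct_add]

lemma quadForm_sub : quadForm (A - B) ζ = quadForm A ζ - quadForm B ζ := by
  simp only [quadForm, Matrix.sub_mulVec, dotProduct_sub]

lemma quadForm_smul (r : ℝ) : quadForm (r • A) ζ = r * quadForm A ζ := by
  simp only [quadForm, Matrix.smul_mulVec, dotProduct_smul, smul_eq_mul]

lemma quadForm_vec_smul (r : ℝ) : quadForm A (r • ζ) = r ^ 2 * quadForm A ζ := by
  simp only [quadForm_eq, PiLp.smul_apply, smul_eq_mul]
  ring

lemma quadForm_one : quadForm 1 ζ = ‖ζ‖ ^ 2 := by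
  rw [quadForm_eq, norm_sq_eq_coord]
  simp

lemma quadForm_vecMulVec (p : E2) : quadForm (Matrix.vecMulVec p p) ζ = ⟪p, ζ⟫ ^ 2 := by
  rw [quadForm_eq, inner_eq_coord]
  simp only [Matrix.vecMulVec_apply]
  ring

end QuadForm

/-- `v` expands to second order along every line through `z`, with gradient `p` and Hessian
`A`; only the symmetric part of `A` matters. -/
def HasSecondOrderJet (v : E2 → ℝ) (z p : E2) (A : Matrix (Fin 2) (Fin 2) ℝ) : Prop :=
  ∀ ζ : E2, HasQuadraticExpansion (fun τ => v (z + τ • ζ)) (v z) ⟪p, ζ⟫ (quadForm A ζ / 2)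

namespace HasSecondOrderJet

variable {v w : E2 → ℝ} {z p q : E2} {A B : Matrix (Fin 2) (Fin 2) ℝ}

lemma sub (hv : HasSecondOrderJet v z p A) (hw : HasSecondOrderJet w z q B) :
    HasSecondOrderJet (fun y => v y - w y) z (p - q) (A - B) := fun ζ =>
  ((hv ζ).sub (hw ζ)).congr (fun _ => rfl) rfl (inner_sub_left ..)
    (by rw [quadForm_sub, sub_div])

lemma const_mul (r : ℝ) (hv : HasSecondOrderJet v z p A) :
    HasSecondOrderJet (fun y => r * v y) z (r • p) (r • A) := fun ζ =>
  ((hv ζ).const_mul r).congr (fun _ => rfl) rfl (real_inner_smul_left ..)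
    (by rw [quadForm_smul, mul_div_assoc])

lemma comp_add_right {b : E2} (hv : HasSecondOrderJet v (z + b) p A) :
    HasSecondOrderJet (fun y => v (y + b)) z p A := fun ζ =>
  (hv ζ).congr (fun τ => by rw [add_right_comm]) rfl rfl rfl

lemma comp_smul (r : ℝ) (hv : HasSecondOrderJet v (r • z) p A) :
    HasSecondOrderJet (fun y => v (r • y)) z (r • p) (r ^ 2 • A) := fun ζ =>
  (hv (r • ζ)).congr (fun τ => by rw [← smul_comm r, ← smul_add]) rfl
    (by rw [real_inner_smul_left, real_inner_smul_right])
    (by rw [quadForm_smul, quadForm_vec_smul])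

lemma sqrt {s : ℝ} (hv : HasSecondOrderJet v z p A) (hs : 0 < s) (hvs : v z = s ^ 2) :
    HasSecondOrderJet (fun y => √(v y)) z ((2 * s)⁻¹ • p)
      ((2 * s)⁻¹ • A - (4 * s ^ 3)⁻¹ • Matrix.vecMulVec p p) := fun ζ => by
  refine ((hv ζ).sqrt hs hvs).congr (fun _ => rfl) (by simp only [hvs, Real.sqrt_sq hs.le]) ?_ ?_
  · rw [real_inner_smul_left]
    field_simp
  · rw [quadForm_sub, quadForm_smul, quadForm_smul, quadForm_vecMulVec]
    field_simp
    ring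

lemma isLocalMin_comp_line (hm : IsLocalMin v z) (ζ : E2) :
    IsLocalMin (fun τ : ℝ => v (z + τ • ζ)) 0 := by
  have : Tendsto (fun τ : ℝ => z + τ • ζ) (𝓝 0) (𝓝 (z + (0 : ℝ) • ζ)) :=
    (by fun_prop : Continuous fun τ : ℝ => z + τ • ζ).continuousAt
  rw [zero_smul, add_zero] at this
  simpa [IsLocalMin, IsMinFilter] using this.eventually hm

lemma eq_zero_of_isLocalMin (hv : HasSecondOrderJet v z p A) (hm : IsLocalMin v z) : p = 0 :=
  inner_self_eq_zero.1 ((hv p).eq_zero_of_isLocalMin (isLocalMin_comp_line hm p))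

lemma quadForm_nonneg_of_isLocalMin (hv : HasSecondOrderJet v z p A) (hm : IsLocalMin v z)
    (ζ : E2) : 0 ≤ quadForm A ζ := by
  linarith [(hv ζ).nonneg_of_isLocalMin (isLocalMin_comp_line hm ζ)]

end HasSecondOrderJet

lemma hasSecondOrderJet_norm_sq (z : E2) :
    HasSecondOrderJet (fun y => ‖y‖ ^ 2) z ((2 : ℝ) • z) ((2 : ℝ) • 1) := fun ζ =>
  (HasQuadraticExpansion.quadratic (‖z‖ ^ 2) (2 * ⟪z, ζ⟫) (‖ζ‖ ^ 2)).congr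
    (fun τ => by
      simp only [norm_add_sq_real, real_inner_smul_right, norm_smul, mul_pow, Real.norm_eq_abs,
        sq_abs]
      ring)
    rfl (real_inner_smul_left ..)
    (by rw [quadForm_smul, quadForm_one]; ring)

/-- The matrix of the Hessian bilinear form `hess2 u x` in the standard basis. -/
def hessMatrix (u : E2 → ℝ) (x : E2) : Matrix (Fin 2) (Fin 2) ℝ :=
  Matrix.of fun i j => hess2 u x (e2 i) (e2 j)

section Smooth

variable {u : E2 → ℝ} {x : E2}

lemma eq_sum_smul_e2 (ζ : E2) : ζ = ζ 0 • e2 0 + ζ 1 • e2 1 := by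
  ext i
  fin_cases i <;> simp [e2]

lemma inner_gradient (ζ : E2) : ⟪gradient u x, ζ⟫ = fderiv ℝ u x ζ := by
  rw [gradient, InnerProductSpace.toDual_symm_apply]

lemma gradient_apply (i : Fin 2) : gradient u x i = fderiv ℝ u x (e2 i) := by
  rw [← inner_gradient, e2, EuclideanSpace.inner_single_right]
  simp

lemma differentiableAt_fderiv (hu : ContDiffAt ℝ 2 u x) : DifferentiableAt ℝ (fderiv ℝ u) x :=
  (hu.fderiv_right (m := 1) (by norm_num)).differentiableAt (by norm_num)

lemma hess2_eq_fderiv_fderiv (hu : ContDiffAt ℝ 2 u x) (ξ η : E2) :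
    hess2 u x ξ η = fderiv ℝ (fderiv ℝ u) x ξ η := by
  rw [hess2, fderiv_clm_apply (differentiableAt_fderiv hu) (by fun_prop)]
  simp

lemma quadForm_hessMatrix (hu : ContDiffAt ℝ 2 u x) (ζ : E2) :
    quadForm (hessMatrix u x) ζ = hess2 u x ζ ζ := by
  have expand := congrArg₂ (fun ξ η => fderiv ℝ (fderiv ℝ u) x ξ η)
    (eq_sum_smul_e2 ζ) (eq_sum_smul_e2 ζ)
  rw [hess2_eq_fderiv_fderiv hu, expand, quadForm_eq]
  simp only [hessMatrix, Matrix.of_apply, hess2_eq_fderiv_fderiv hu, map_add, map_smul,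
    smul_eq_mul, add_apply, smul_apply]
  ring

lemma hasSecondOrderJet_of_contDiffAt (hu : ContDiffAt ℝ 2 u x) :
    HasSecondOrderJet u x (gradient u x) (hessMatrix u x) := fun ζ => by
  have hline (τ : ℝ) : HasDerivAt (fun τ : ℝ => x + τ • ζ) ζ τ := by
    simpa using ((hasDerivAt_id τ).smul_const ζ).const_add x
  have hx : x + (0 : ℝ) • ζ = x := by rw [zero_smul, add_zero]
  have hdiff : ∀ᶠ y in 𝓝 (x + (0 : ℝ) • ζ), DifferentiableAt ℝ u y := by
    rw [hx]
    exact (hu.eventually (by norm_num)).mono fun y hy => hy.differentiableAt (by norm_num)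
  have first : ∀ᶠ τ in 𝓝 (0 : ℝ),
      HasDerivAt (fun τ => u (x + τ • ζ)) (fderiv ℝ u (x + τ • ζ) ζ) τ :=
    ((hline 0).continuousAt.eventually hdiff).mono fun τ hτ =>
      hτ.hasFDerivAt.comp_hasDerivAt τ (hline τ)
  have second : HasDerivAt (fun τ : ℝ => fderiv ℝ u (x + τ • ζ) ζ) (hess2 u x ζ ζ) 0 := by
    rw [hess2_eq_fderiv_fderiv hu]
    have hd : HasFDerivAt (fderiv ℝ u) (fderiv ℝ (fderiv ℝ u) x) (x + (0 : ℝ) • ζ) := by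
      rw [hx]
      exact (differentiableAt_fderiv hu).hasFDerivAt
    exact (ContinuousLinearMap.apply ℝ ℝ ζ).hasFDerivAt.comp_hasDerivAt 0
      (hd.comp_hasDerivAt 0 (hline 0))
  exact (HasQuadraticExpansion.of_hasDerivAt first second).congr (fun _ => rfl) (by rw [hx])
    (by rw [hx, inner_gradient]) (by rw [quadForm_hessMatrix hu])

end Smooth

/-! ### The mean curvature operator -/

lemma fderiv_inv_sqrt_one_add_norm_sq_smul {E F : Type*} [NormedAddCommGroup E] [NormedSpace ℝ E]
    [NormedAddCommGroup F] [InnerProductSpace ℝ F] {G : E → F} {G' : E →L[ℝ] F} {x : E}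
    (hG : HasFDerivAt G G' x) (w : E) :
    fderiv ℝ (fun y => (√(1 + ‖G y‖ ^ 2))⁻¹ • G y) x w
      = (√(1 + ‖G x‖ ^ 2))⁻¹ • G' w - (⟪G x, G' w⟫ / √(1 + ‖G x‖ ^ 2) ^ 3) • G x := by
  have hpos : 0 < 1 + ‖G x‖ ^ 2 := by positivity
  have hroot := Real.sqrt_pos.2 hpos
  have hinv := (hasDerivAt_inv hroot.ne').comp_hasFDerivAt x
    ((hG.norm_sq.const_add 1).sqrt hpos.ne')
  refine (congrArg (fun T : E →L[ℝ] F => T w) (hinv.smul hG).fderiv).trans ?_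
  rw [sub_eq_add_neg, ← neg_smul]
  simp [smul_smul]
  field_simp

lemma mcOp_eq_mcDiv_mul {u : E2 → ℝ} {x : E2} (hu : ContDiffAt ℝ 2 u x) :
    mcOp 1 (gradient u x) (hessMatrix u x) = mcDiv u x * areaFactor 1 (gradient u x) ^ 3 := by
  have hgrad : DifferentiableAt ℝ (gradient u) x :=
    (InnerProductSpace.toDual ℝ E2).symm.differentiable.differentiableAt.comp x
      (differentiableAt_fderiv hu)
  have hcoord (i j : Fin 2) : fderiv ℝ (gradient u) x (e2 i) j = hessMatrix u x i j := by
    have hess : hessMatrix u x i j = fderiv ℝ (fun y => gradient u y j) x (e2 i) := by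
      simp only [gradient_apply, hessMatrix, Matrix.of_apply, hess2]
    have proj := ((EuclideanSpace.proj (𝕜 := ℝ) j).hasFDerivAt.comp x hgrad.hasFDerivAt).fderiv
    exact (hess.trans (congrArg (fun T : E2 →L[ℝ] ℝ => T (e2 i)) proj)).symm
  have hroot : √(1 + ‖gradient u x‖ ^ 2) = areaFactor 1 (gradient u x) := by
    rw [areaFactor, one_mul]
  have hsq := areaFactor_sq zero_le_one (gradient u x)
  have hpos := zero_lt_one.trans_le (one_le_areaFactor zero_le_one (gradient u x))
  rw [one_mul, norm_sq_eq_coord] at hsq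
  rw [mcDiv]
  simp only [fderiv_inv_sqrt_one_add_norm_sq_smul hgrad.hasFDerivAt, Fin.sum_univ_two, hroot,
    PiLp.sub_apply, PiLp.smul_apply, smul_eq_mul, inner_eq_coord, hcoord, mcOp_eq]
  field_simp
  linear_combination (-hessMatrix u x 0 0 - hessMatrix u x 1 1) * hsq

/-! ### Barriers for the rescaled equation -/

section Comparison

variable {σ : ℝ} {p z : E2} {A B : Matrix (Fin 2) (Fin 2) ℝ}

lemma mcOp_sub (σ : ℝ) (p : E2) (A B : Matrix (Fin 2) (Fin 2) ℝ) :
    mcOp σ p (A - B) = mcOp σ p A - mcOp σ p B := by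
  rw [mcOp, mul_sub, Matrix.trace_sub, mcOp, mcOp]

lemma mcOp_smul (r σ : ℝ) (p : E2) (A : Matrix (Fin 2) (Fin 2) ℝ) :
    mcOp σ p (r • A) = r * mcOp σ p A := by
  rw [mcOp, Matrix.mul_smul, Matrix.trace_smul, smul_eq_mul, mcOp]

lemma mcOp_vecMulVec (σ : ℝ) (p q : E2) :
    mcOp σ p (Matrix.vecMulVec q q) = ‖q‖ ^ 2 + σ * cross p q ^ 2 := by
  rw [mcOp_eq, norm_sq_eq_coord, cross]
  simp only [Matrix.vecMulVec_apply]
  ring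

lemma mcOp_nonneg (hσ : 0 ≤ σ) (hA : ∀ ζ, 0 ≤ quadForm A ζ) : 0 ≤ mcOp σ p A := by
  have expand : mcOp σ p A = quadForm A !₂[1, 0] + quadForm A !₂[0, 1]
      + σ * quadForm A !₂[-p 1, p 0] := by
    simp only [mcOp_eq, quadForm_eq, Matrix.cons_val_zero, Matrix.cons_val_one,
      Matrix.cons_val_fin_one]
    ring
  rw [expand]
  exact add_nonneg (add_nonneg (hA _) (hA _)) (mul_nonneg hσ (hA _))

lemma HasSecondOrderJet.eq_and_mcOp_le_of_isLocalMin_sub {v w : E2 → ℝ} {q : E2} (hσ : 0 ≤ σ)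
    (hv : HasSecondOrderJet v z p A) (hw : HasSecondOrderJet w z q B)
    (hmin : IsLocalMin (fun y => v y - w y) z) : p = q ∧ mcOp σ p B ≤ mcOp σ p A := by
  have nonneg := mcOp_nonneg (p := p) hσ ((hv.sub hw).quadForm_nonneg_of_isLocalMin hmin)
  rw [mcOp_sub] at nonneg
  exact ⟨sub_eq_zero.1 ((hv.sub hw).eq_zero_of_isLocalMin hmin), by linarith⟩

end Comparison

lemma le_of_isCompact_of_forall_isMinOn {X : Type*} [TopologicalSpace X] {K : Set X} {g : X → ℝ}
    {a : ℝ} (hK : IsCompact K) (hg : ContinuousOn g K) (hmin : ∀ z ∈ K, IsMinOn g K z → a ≤ g z)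
    {x : X} (hx : x ∈ K) : a ≤ g x := by
  obtain ⟨z, hz, hz_min⟩ := hK.exists_isMinOn ⟨x, hx⟩ hg
  exact (hmin z hz hz_min).trans (hz_min hx)

/-- A bounded convex domain `U` on which `f` is a negative defining function, together with the
quantities `R`, `L`, `c`, `t₀` through which the domain enters the estimates. -/
structure IsControlledDomain (f : E2 → ℝ) (R L c t₀ : ℝ) (U : Set E2) : Prop where
  one_le_R : 1 ≤ R
  one_le_L : 1 ≤ L
  c_pos : 0 < c
  c_le_one : c ≤ 1
  isOpen : IsOpen U
  convex : Convex ℝ U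
  norm_le : ∀ x ∈ closure U, ‖x‖ ≤ R
  contDiff : ContDiff ℝ 2 f
  neg : ∀ x ∈ U, f x < 0
  eq_zero : ∀ x ∈ frontier U, f x = 0
  neg_le : ∀ x ∈ closure U, -f x ≤ L
  norm_gradient_le : ∀ x ∈ closure U, ‖gradient f x‖ ≤ L
  abs_hessMatrix_le : ∀ x ∈ closure U, ∀ i j, |hessMatrix f x i j| ≤ L
  le_neg_add_norm_gradient_sq : ∀ x ∈ closure U, c ≤ -f x + ‖gradient f x‖ ^ 2
  le_neg_midpoint : ∀ x ∈ closure U, ∀ y ∈ closure U,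
    c * ‖x - y‖ ^ 2 ≤ -f ((2 : ℝ)⁻¹ • (x + y))
  exists_inward : ∀ y ∈ closure U, ∀ t, 0 ≤ t → t ≤ t₀ →
    ∃ y' ∈ closure U, ‖y' - y‖ ≤ L * t ∧ c * t ≤ -f y'

/-- `v` solves the equation obtained from problem (*) with `H = -h` through the substitution
`u = h v`, in non-divergence form with `σ = h ^ 2`, and vanishes on the boundary. -/
structure IsRescaledSolution (U : Set E2) (σ : ℝ) (v : E2 → ℝ) : Prop where
  contDiffOn : ContDiffOn ℝ 2 v U
  continuousOn : ContinuousOn v (closure U)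
  eq_zero : ∀ x ∈ frontier U, v x = 0
  mcOp_eq : ∀ x ∈ U,
    mcOp σ (gradient v x) (hessMatrix v x) = -(2 * areaFactor σ (gradient v x) ^ 3)

namespace IsControlledDomain

variable {f : E2 → ℝ} {R L c t₀ : ℝ} {U : Set E2} {x y : E2}

lemma isCompact_closure (hD : IsControlledDomain f R L c t₀ U) : IsCompact (closure U) :=
  Metric.isCompact_of_isClosed_isBounded isClosed_closure
    (isBounded_iff_forall_norm_le.2 ⟨R, hD.norm_le⟩)

lemma nonpos (hD : IsControlledDomain f R L c t₀ U) (hx : x ∈ closure U) : f x ≤ 0 := by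
  rcases closure_eq_self_union_frontier U ▸ hx with hx | hx
  · exact (hD.neg x hx).le
  · exact (hD.eq_zero x hx).le

lemma exists_norm_eq_one_forall_inner_nonneg (hD : IsControlledDomain f R L c t₀ U) {b : E2}
    (hb : b ∈ frontier U) : ∃ ν : E2, ‖ν‖ = 1 ∧ ∀ x ∈ closure U, 0 ≤ ⟪ν, x - b⟫ := by
  have hbU : b ∉ U := (hD.isOpen.frontier_eq ▸ hb).2
  obtain ⟨F, hF⟩ := geometric_hahn_banach_open_point hD.convex hD.isOpen hbU
  obtain ⟨a, ha⟩ : U.Nonempty := closure_nonempty_iff.1 ⟨b, hb.1⟩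
  set n := -(InnerProductSpace.toDual ℝ E2).symm F with hn
  have hFn (x : E2) : ⟪n, x⟫ = -F x := by
    rw [hn, inner_neg_left, InnerProductSpace.toDual_symm_apply]
  have hn0 : n ≠ 0 := fun h0 => by
    have := hFn (b - a)
    rw [h0, inner_zero_left, map_sub] at this
    linarith [hF a ha]
  refine ⟨‖n‖⁻¹ • n, norm_smul_inv_norm hn0, fun x hx => ?_⟩
  refine closure_minimal (t := {x | 0 ≤ ⟪‖n‖⁻¹ • n, x - b⟫}) (fun y hy => ?_)
    (isClosed_le continuous_const (by fun_prop)) hx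
  rw [mem_ofPred_eq, real_inner_smul_left, hFn, map_sub]
  exact mul_nonneg (by positivity) (by linarith [hF y hy])

lemma le_one (hD : IsControlledDomain f R L c t₀ U) {σ : ℝ}
    (hRσ : 256 * R ^ 2 * σ ≤ 1) : σ ≤ 1 := by
  nlinarith [one_le_pow₀ (n := 2) hD.one_le_R]

end IsControlledDomain

namespace IsRescaledSolution

variable {f v : E2 → ℝ} {R L c t₀ σ : ℝ} {U : Set E2} {x y : E2}

lemma hasSecondOrderJet (hv : IsRescaledSolution U σ v) (hU : IsOpen U) (hx : x ∈ U) :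
    HasSecondOrderJet v x (gradient v x) (hessMatrix v x) :=
  hasSecondOrderJet_of_contDiffAt (hv.contDiffOn.contDiffAt (hU.mem_nhds hx))

lemma mcOp_le (hv : IsRescaledSolution U σ v) (hσ : 0 ≤ σ) (hx : x ∈ U) :
    mcOp σ (gradient v x) (hessMatrix v x) ≤ -2 := by
  rw [hv.mcOp_eq x hx]
  linarith [one_le_pow₀ (n := 3) (one_le_areaFactor hσ (gradient v x))]

-- A small multiple of `-f` is a subsolution.
lemma inv_mul_neg_le (hv : IsRescaledSolution U σ v) (hD : IsControlledDomain f R L c t₀ U)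
    (hσ : 0 ≤ σ) (hσ1 : σ ≤ 1) (hx : x ∈ closure U) : (4 * L ^ 3)⁻¹ * -f x ≤ v x := by
  have hL := hD.one_le_L
  set a := (4 * L ^ 3)⁻¹ with ha
  have ha0 : 0 < a := by positivity
  have haL : a * L ^ 3 = 1 / 4 := by rw [ha]; field_simp
  suffices 0 ≤ v x - -a * f x by linarith
  refine le_of_isCompact_of_forall_isMinOn (g := fun x => v x - -a * f x) hD.isCompact_closure
    (hv.continuousOn.sub (continuousOn_const.mul hD.contDiff.continuous.continuousOn))
    (fun z hz hmin => ?_) hx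
  rcases closure_eq_self_union_frontier U ▸ hz with hzU | hzU
  swap
  · rw [hv.eq_zero z hzU, hD.eq_zero z hzU]; simp
  exfalso
  have hmin_loc := hmin.isLocalMin (mem_of_superset (hD.isOpen.mem_nhds hzU) subset_closure)
  obtain ⟨hgrad, hop⟩ := (hv.hasSecondOrderJet hD.isOpen hzU).eq_and_mcOp_le_of_isLocalMin_sub hσ
    ((hasSecondOrderJet_of_contDiffAt hD.contDiff.contDiffAt).const_mul (-a)) hmin_loc
  have hop_two : 2 ≤ a * mcOp σ (gradient v z) (hessMatrix f z) := by
    rw [mcOp_smul] at hop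
    linarith [hv.mcOp_le hσ hzU]
  have htrace : (hessMatrix f z).trace ≤ 2 * L := by
    rw [Matrix.trace_fin_two]
    linarith [(abs_le.1 (hD.abs_hessMatrix_le z hz 0 0)).2,
      (abs_le.1 (hD.abs_hessMatrix_le z hz 1 1)).2]
  have hslope : ‖gradient v z‖ ^ 2 ≤ a ^ 2 * L ^ 2 := by
    rw [hgrad, norm_smul, mul_pow, Real.norm_eq_abs, sq_abs, neg_sq]
    gcongr
    exact hD.norm_gradient_le z hz
  have herror := (abs_le.1 (abs_mcOp_sub_trace_le hσ (gradient v z)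
    (hD.abs_hessMatrix_le z hz))).2
  have hσslope : 2 * σ * ‖gradient v z‖ ^ 2 * L ≤ 2 * 1 * (a ^ 2 * L ^ 2) * L := by gcongr
  have hL3 : L ≤ L ^ 3 := le_self_pow₀ hL (by norm_num)
  nlinarith [mul_le_mul_of_nonneg_left hL3 ha0.le, sq_nonneg a]

lemma nonneg (hv : IsRescaledSolution U σ v) (hD : IsControlledDomain f R L c t₀ U)
    (hσ : 0 ≤ σ) (hσ1 : σ ≤ 1) (hx : x ∈ closure U) : 0 ≤ v x := by
  have := hD.one_le_L
  exact (mul_nonneg (by positivity) (neg_nonneg.2 (hD.nonpos hx))).trans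
    (hv.inv_mul_neg_le hD hσ hσ1 hx)

end IsRescaledSolution

/-- A concave quadratic function of the distance `⟪ν, x - b⟫` to the line through `b` with unit
normal `ν`; it is a supersolution on the part of the half-plane within distance `2 * R` of `b`. -/
def halfPlaneBarrier (R : ℝ) (ν b x : E2) : ℝ := 2 * (4 * R * ⟪ν, x - b⟫ - ⟪ν, x - b⟫ ^ 2)

lemma hasSecondOrderJet_halfPlaneBarrier (R : ℝ) (ν b z : E2) :
    HasSecondOrderJet (halfPlaneBarrier R ν b) z ((4 * (2 * R - ⟪ν, z - b⟫)) • ν)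
      ((-4 : ℝ) • Matrix.vecMulVec ν ν) := fun ζ =>
  (HasQuadraticExpansion.quadratic (halfPlaneBarrier R ν b z)
    (4 * (2 * R - ⟪ν, z - b⟫) * ⟪ν, ζ⟫) (-2 * ⟪ν, ζ⟫ ^ 2)).congr
    (fun τ => by
      simp only [halfPlaneBarrier, add_sub_right_comm, inner_add_right, real_inner_smul_right]
      ring)
    rfl (real_inner_smul_left ..) (by rw [quadForm_smul, quadForm_vecMulVec]; ring)

lemma areaFactor_pow_three_lt_two {σ : ℝ} {p : E2} (hσ : 0 ≤ σ) (hp : σ * ‖p‖ ^ 2 ≤ 1 / 4) :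
    areaFactor σ p ^ 3 < 2 := by
  have hle : areaFactor σ p ≤ 6 / 5 :=
    le_of_sq_le_sq (by rw [areaFactor_sq hσ]; linarith) (by norm_num)
  calc areaFactor σ p ^ 3 ≤ (6 / 5) ^ 3 := by gcongr; exact areaFactor_nonneg σ p
    _ < 2 := by norm_num

namespace IsRescaledSolution

variable {f v : E2 → ℝ} {R L c t₀ σ : ℝ} {U : Set E2} {x y z b : E2}

lemma halfPlaneBarrier_sub_nonneg_of_isMinOn (hv : IsRescaledSolution U σ v)
    (hD : IsControlledDomain f R L c t₀ U) (hσ : 0 ≤ σ) (hRσ : 256 * R ^ 2 * σ ≤ 1) {ν : E2}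
    (hν : ‖ν‖ = 1) (hs : 0 ≤ ⟪ν, z - b⟫) (hsR : ⟪ν, z - b⟫ ≤ 2 * R) (hz : z ∈ closure U)
    (hmin : IsMinOn (fun x => halfPlaneBarrier R ν b x - v x) (closure U) z) :
    0 ≤ halfPlaneBarrier R ν b z - v z := by
  rcases closure_eq_self_union_frontier U ▸ hz with hzU | hzU
  swap
  · rw [hv.eq_zero z hzU, halfPlaneBarrier]
    nlinarith
  exfalso
  obtain ⟨hgrad, hop⟩ :=
    (hasSecondOrderJet_halfPlaneBarrier R ν b z).eq_and_mcOp_le_of_isLocalMin_sub hσ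
      (hv.hasSecondOrderJet hD.isOpen hzU)
      (hmin.isLocalMin (mem_of_superset (hD.isOpen.mem_nhds hzU) subset_closure))
  have hslope : σ * ‖gradient v z‖ ^ 2 ≤ 1 / 4 := by
    rw [← hgrad, norm_smul, hν, mul_one, Real.norm_eq_abs, sq_abs]
    have : (4 * (2 * R - ⟪ν, z - b⟫)) ^ 2 ≤ (8 * R) ^ 2 :=
      sq_le_sq' (by linarith) (by linarith)
    nlinarith
  -- The second derivatives of the barrier only see the direction `ν` of its gradient.
  have hbarrier : mcOp σ ((4 * (2 * R - ⟪ν, z - b⟫)) • ν)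
      ((-4 : ℝ) • Matrix.vecMulVec ν ν) = -4 := by
    rw [mcOp_smul, mcOp_vecMulVec, cross_smul_left, cross, hν]
    ring
  rw [hbarrier, hgrad, hv.mcOp_eq z hzU] at hop
  linarith [areaFactor_pow_three_lt_two hσ hslope]

lemma le_mul_norm_sub_frontier (hv : IsRescaledSolution U σ v)
    (hD : IsControlledDomain f R L c t₀ U) (hσ : 0 ≤ σ) (hRσ : 256 * R ^ 2 * σ ≤ 1)
    (hx : x ∈ closure U) (hb : b ∈ frontier U) : v x ≤ 8 * R * ‖x - b‖ := by
  obtain ⟨ν, hν, hinner⟩ := hD.exists_norm_eq_one_forall_inner_nonneg hb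
  have inner_le (y : E2) : ⟪ν, y - b⟫ ≤ ‖y - b‖ := by
    simpa [hν] using real_inner_le_norm ν (y - b)
  have inner_le_two_mul : ∀ y ∈ closure U, ⟪ν, y - b⟫ ≤ 2 * R := fun y hy =>
    (inner_le y).trans ((norm_sub_le _ _).trans
      (by linarith [hD.norm_le y hy, hD.norm_le b hb.1]))
  have barrier : 0 ≤ halfPlaneBarrier R ν b x - v x :=
    le_of_isCompact_of_forall_isMinOn (g := fun x => halfPlaneBarrier R ν b x - v x)
      hD.isCompact_closure
      ((by unfold halfPlaneBarrier; fun_prop : Continuous (halfPlaneBarrier R ν b)).continuousOn.sub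
        hv.continuousOn)
      (fun z hz => hv.halfPlaneBarrier_sub_nonneg_of_isMinOn hD hσ hRσ hν (hinner z hz)
        (inner_le_two_mul z hz) hz) hx
  rw [halfPlaneBarrier] at barrier
  nlinarith [sq_nonneg ⟪ν, x - b⟫, mul_le_mul_of_nonneg_left (inner_le x)
    (by linarith [hD.one_le_R] : 0 ≤ 8 * R)]

-- The dilates `l⁻¹ * v (l • ·)` with `l > 1` are strict supersolutions.
lemma not_isLocalMin_dilate_sub_translate (hv : IsRescaledSolution U σ v) (hU : IsOpen U)
    (hσ : 0 ≤ σ) {l : ℝ} (hl : 1 < l) {w p : E2} (hlp : l • p ∈ U) (hpw : p + w ∈ U) :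
    ¬IsLocalMin (fun q => l⁻¹ * v (l • q) - v (q + w)) p := fun hmin => by
  obtain ⟨hgrad, hop⟩ :=
    (((hv.hasSecondOrderJet hU hlp).comp_smul l).const_mul l⁻¹).eq_and_mcOp_le_of_isLocalMin_sub
      hσ (hv.hasSecondOrderJet hU hpw).comp_add_right hmin
  rw [inv_smul_smul₀ (by positivity)] at hgrad hop
  have hA : l⁻¹ • l ^ 2 • hessMatrix v (l • p) = l • hessMatrix v (l • p) := by
    rw [sq, mul_smul, inv_smul_smul₀ (by positivity)]
  rw [hA, mcOp_smul, hv.mcOp_eq _ hlp, hgrad, hv.mcOp_eq _ hpw] at hop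
  nlinarith [one_le_pow₀ (n := 3) (one_le_areaFactor hσ (gradient v (p + w)))]

lemma neg_le_dilate_sub_translate_of_mem_frontier (hv : IsRescaledSolution U σ v)
    (hD : IsControlledDomain f R L c t₀ U) (hσ : 0 ≤ σ) (hRσ : 256 * R ^ 2 * σ ≤ 1) {l : ℝ}
    (hl : 1 < l) {w p : E2} (hlp : l • p ∈ frontier U) (hpw : p + w ∈ closure U) :
    -(8 * R * (‖w‖ + (l - 1) * R)) ≤ l⁻¹ * v (l • p) - v (p + w) := by
  have hl0 : 0 < l := by linarith
  have hR := hD.one_le_R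
  have hp : ‖p‖ ≤ R := by
    have := hD.norm_le _ hlp.1
    rw [norm_smul, Real.norm_eq_abs, abs_of_pos hl0] at this
    nlinarith [norm_nonneg p]
  have hdist : ‖p + w - l • p‖ ≤ ‖w‖ + (l - 1) * R := by
    rw [show p + w - l • p = w - (l - 1) • p by module]
    refine (norm_sub_le _ _).trans ?_
    rw [norm_smul, Real.norm_eq_abs, abs_of_pos (by linarith : 0 < l - 1)]
    gcongr
  rw [hv.eq_zero _ hlp, mul_zero, zero_sub, neg_le_neg_iff]
  exact (hv.le_mul_norm_sub_frontier hD hσ hRσ hpw hlp).trans (by gcongr)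

lemma neg_le_dilate_sub_translate (hv : IsRescaledSolution U σ v)
    (hD : IsControlledDomain f R L c t₀ U) (hσ : 0 ≤ σ) (hRσ : 256 * R ^ 2 * σ ≤ 1)
    {l : ℝ} (hl : 1 < l) {w : E2} (hlx : l • x ∈ closure U) (hxw : x + w ∈ closure U) :
    -(8 * R * (‖w‖ + (l - 1) * R)) ≤ l⁻¹ * v (l • x) - v (x + w) := by
  have hl0 : 0 < l := by linarith
  have hR := hD.one_le_R
  have hcl : Continuous fun p : E2 => l • p := by fun_prop
  have hcw : Continuous fun p : E2 => p + w := by fun_prop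
  have hK : IsCompact ((fun p => l • p) ⁻¹' closure U ∩ (fun p => p + w) ⁻¹' closure U) :=
    (((Homeomorph.smulOfNeZero l hl0.ne').isCompact_preimage.2 hD.isCompact_closure).inter_right
      (isClosed_closure.preimage hcw))
  refine le_of_isCompact_of_forall_isMinOn (g := fun p => l⁻¹ * v (l • p) - v (p + w)) hK
    ((continuousOn_const.mul (hv.continuousOn.comp hcl.continuousOn fun p hp => hp.1)).sub
      (hv.continuousOn.comp hcw.continuousOn fun p hp => hp.2))
    (fun p hp hmin => ?_) ⟨hlx, hxw⟩
  rcases closure_eq_self_union_frontier U ▸ hp.2 with hpw | hpw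
  swap
  · have hv0 : 0 ≤ v (l • p) := hv.nonneg hD hσ (hD.le_one hRσ) hp.1
    have : 0 ≤ l - 1 := by linarith
    rw [hv.eq_zero _ hpw, sub_zero]
    exact (neg_nonpos.2 (by positivity)).trans (by positivity)
  rcases closure_eq_self_union_frontier U ▸ hp.1 with hlp | hlp
  · refine absurd (hmin.isLocalMin ?_)
      (hv.not_isLocalMin_dilate_sub_translate hD.isOpen hσ hl hlp hpw)
    filter_upwards [hcl.continuousAt.eventually_mem (hD.isOpen.mem_nhds hlp),
      hcw.continuousAt.eventually_mem (hD.isOpen.mem_nhds hpw)] with q hlq hqw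
    exact ⟨subset_closure hlq, subset_closure hqw⟩
  · exact hv.neg_le_dilate_sub_translate_of_mem_frontier hD hσ hRσ hl hlp hp.2

-- Letting the dilation factor tend to `1` extends the boundary Lipschitz bound to the interior.
lemma sub_le_of_mem (hv : IsRescaledSolution U σ v) (hD : IsControlledDomain f R L c t₀ U)
    (hσ : 0 ≤ σ) (hRσ : 256 * R ^ 2 * σ ≤ 1) (hx : x ∈ U) (hy : y ∈ U) :
    v y - v x ≤ 8 * R * ‖y - x‖ := by
  have hsmul : ContinuousAt (fun l : ℝ => l • x) 1 := by fun_prop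
  have hvx : ContinuousAt v ((1 : ℝ) • x) := by
    rw [one_smul]
    exact (hv.contDiffOn.contDiffAt (hD.isOpen.mem_nhds hx)).continuousAt
  have hright : ContinuousAt (fun l : ℝ => l⁻¹ * v (l • x) - v (x + (y - x))) 1 :=
    ((continuousAt_inv₀ one_ne_zero).mul (hvx.comp (f := fun l : ℝ => l • x) hsmul)).sub
      continuousAt_const
  have hleft : ContinuousAt (fun l : ℝ => -(8 * R * (‖y - x‖ + (l - 1) * R))) 1 := by fun_prop
  have hlim := le_of_tendsto_of_tendsto (hleft.tendsto.mono_left nhdsWithin_le_nhds)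
    (hright.tendsto.mono_left nhdsWithin_le_nhds) (b := 𝓝[>] (1 : ℝ)) <| by
      filter_upwards [self_mem_nhdsWithin, nhdsWithin_le_nhds (hsmul.eventually_mem
        (hD.isOpen.mem_nhds (by rwa [one_smul])))] with l hl hlx
      exact hv.neg_le_dilate_sub_translate hD hσ hRσ hl (subset_closure hlx)
        (by simpa using subset_closure hy)
  simp only [sub_self, zero_mul, add_zero, inv_one, one_mul, one_smul, add_sub_cancel] at hlim
  linarith

lemma lipschitzOnWith (hv : IsRescaledSolution U σ v) (hD : IsControlledDomain f R L c t₀ U)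
    (hσ : 0 ≤ σ) (hRσ : 256 * R ^ 2 * σ ≤ 1) :
    LipschitzOnWith (Real.toNNReal (8 * R)) v (closure U) := by
  refine LipschitzOnWith.closure hv.continuousOn (LipschitzOnWith.of_le_add_mul' _ ?_)
  intro x hx y hy
  rw [dist_eq_norm]
  linarith [hv.sub_le_of_mem hD hσ hRσ hy hx]

lemma abs_sub_le (hv : IsRescaledSolution U σ v) (hD : IsControlledDomain f R L c t₀ U)
    (hσ : 0 ≤ σ) (hRσ : 256 * R ^ 2 * σ ≤ 1) (hx : x ∈ closure U)
    (hy : y ∈ closure U) : |v x - v y| ≤ 8 * R * ‖x - y‖ := by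
  have := (hv.lipschitzOnWith hD hσ hRσ).dist_le_mul x hx y hy
  rwa [Real.dist_eq, dist_eq_norm, Real.coe_toNNReal _ (by linarith [hD.one_le_R])] at this

lemma norm_gradient_le (hv : IsRescaledSolution U σ v) (hD : IsControlledDomain f R L c t₀ U)
    (hσ : 0 ≤ σ) (hRσ : 256 * R ^ 2 * σ ≤ 1) (hx : x ∈ U) :
    ‖gradient v x‖ ≤ 8 * R := by
  have := norm_fderiv_le_of_lipschitzOn ℝ (mem_of_superset (hD.isOpen.mem_nhds hx) subset_closure)
    (hv.lipschitzOnWith hD hσ hRσ)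
  rwa [Real.coe_toNNReal _ (by linarith [hD.one_le_R]),
    ← (InnerProductSpace.toDual ℝ E2).symm.norm_map] at this

end IsRescaledSolution

/-! ### The weight of the two-point function -/

/-- A weight on `U = {f < 0}` whose Laplacian is positive of order `s⁻³`, where `s = √(-f)`, with
constants `a` and `K`; its other derivatives are not larger than that Laplacian requires. -/
structure IsBoundaryWeight (f : E2 → ℝ) (U : Set E2) (q : E2 → ℝ) (a K : ℝ) : Prop where
  continuousOn : ContinuousOn q (closure U)
  one_le : ∀ z ∈ closure U, 1 ≤ q z
  le : ∀ z ∈ closure U, q z ≤ K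
  exists_jet : ∀ z ∈ U, ∃ p Q, HasSecondOrderJet q z p Q ∧ a ≤ √(-f z) ^ 3 * Q.trace ∧
    (∀ i j, |√(-f z) ^ 3 * Q i j| ≤ K) ∧ √(-f z) * ‖p‖ ≤ K ∧
    √(-f z) ^ 3 * ‖p‖ ^ 2 ≤ a / 16 * q z

/-- The weight `C + A |z|² - √(-f)`. The gradient of `f` makes the Laplacian of the last term large
near the boundary, and `A |z|²` compensates for it away from the boundary. -/
def boundaryWeight (f : E2 → ℝ) (A C : ℝ) (z : E2) : ℝ :=
  C + A * ‖z‖ ^ 2 - √(-f z)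

section BoundaryWeight

variable {f : E2 → ℝ} {A C R L c s : ℝ} {z p : E2} {F : Matrix (Fin 2) (Fin 2) ℝ}

lemma HasSecondOrderJet.boundaryWeight (hf : HasSecondOrderJet f z p F) (hs : 0 < s)
    (hfs : -f z = s ^ 2) :
    HasSecondOrderJet (boundaryWeight f A C) z ((2 * A) • z + (2 * s)⁻¹ • p)
      ((2 * A) • 1 + (2 * s)⁻¹ • F + (4 * s ^ 3)⁻¹ • Matrix.vecMulVec p p) := by
  have hsqrt := (hf.const_mul (-1)).sqrt hs (by rw [neg_one_mul, hfs])
  intro ζ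
  refine (((HasQuadraticExpansion.quadratic C 0 0).add
    ((hasSecondOrderJet_norm_sq z ζ).const_mul A)).sub (hsqrt ζ)).congr (fun τ => ?_) ?_ ?_ ?_
  · simp [_root_.boundaryWeight]
  · simp [_root_.boundaryWeight]
  · simp only [inner_add_left, real_inner_smul_left]
    ring
  · simp only [quadForm_add, quadForm_sub, quadForm_smul, quadForm_one, quadForm_vecMulVec,
      real_inner_smul_left]
    ring

lemma pow_three_mul_boundaryWeight_hessian_apply (hs : 0 < s) (i j : Fin 2) :
    s ^ 3 * ((2 * A) • (1 : Matrix (Fin 2) (Fin 2) ℝ) + (2 * s)⁻¹ • F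
        + (4 * s ^ 3)⁻¹ • Matrix.vecMulVec p p) i j =
      2 * A * s ^ 3 * (1 : Matrix (Fin 2) (Fin 2) ℝ) i j + s ^ 2 * F i j / 2 + p i * p j / 4 := by
  simp only [Matrix.add_apply, Matrix.smul_apply, Matrix.vecMulVec_apply, smul_eq_mul]
  field_simp

lemma le_pow_three_mul_trace (hL : 1 ≤ L) (hc : 0 < c) (hc1 : c ≤ 1) (hA : A * c = 8 * L ^ 2)
    (hs : 0 < s) (hF : ∀ i j, |F i j| ≤ L) (hp : c ≤ s ^ 2 + ‖p‖ ^ 2) :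
    c / 8 ≤ s ^ 3 * ((2 * A) • (1 : Matrix (Fin 2) (Fin 2) ℝ) + (2 * s)⁻¹ • F
      + (4 * s ^ 3)⁻¹ • Matrix.vecMulVec p p).trace := by
  have hquadratic : 2 * L * s ^ 2 ≤ c / 8 + 4 * A * s ^ 3 := by
    rcases le_total (16 * L * s) c with hsmall | hlarge
    · have hA0 : 0 ≤ A := nonneg_of_mul_nonneg_left (hA ▸ by positivity) hc
      have hs1 : s ≤ 1 := by nlinarith
      have : 16 * L * s * s ≤ c * 1 := by gcongr
      have : 0 ≤ A * s ^ 3 := by positivity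
      linarith
    · have : c * (2 * L * s ^ 2) ≤ c * (4 * A * s ^ 3) := by
        calc c * (2 * L * s ^ 2) ≤ 16 * L * s * (2 * L * s ^ 2) := by gcongr
          _ = c * (4 * A * s ^ 3) := by linear_combination -4 * s ^ 3 * hA
      linarith [le_of_mul_le_mul_left this hc]
  have hF0 := mul_le_mul_of_nonneg_left (abs_le.1 (hF 0 0)).1 (sq_nonneg s)
  have hF1 := mul_le_mul_of_nonneg_left (abs_le.1 (hF 1 1)).1 (sq_nonneg s)
  have hLs := mul_le_mul_of_nonneg_right hL (sq_nonneg s)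
  rw [Matrix.trace_fin_two, mul_add, pow_three_mul_boundaryWeight_hessian_apply hs,
    pow_three_mul_boundaryWeight_hessian_apply hs, Matrix.one_apply_eq, Matrix.one_apply_eq]
  rw [norm_sq_eq_coord] at hp
  linarith [sq_nonneg s]

lemma abs_pow_three_mul_hessian_le (hA : 0 ≤ A) (hL : 1 ≤ L) (hs : 0 < s) (hsL : s ≤ L)
    (hF : ∀ i j, |F i j| ≤ L) (hp : ‖p‖ ≤ L) (i j : Fin 2) :
    |s ^ 3 * ((2 * A) • (1 : Matrix (Fin 2) (Fin 2) ℝ) + (2 * s)⁻¹ • F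
      + (4 * s ^ 3)⁻¹ • Matrix.vecMulVec p p) i j| ≤ 2 * A * L ^ 3 + L ^ 3 := by
  rw [pow_three_mul_boundaryWeight_hessian_apply hs]
  have hone : |2 * A * s ^ 3 * (1 : Matrix (Fin 2) (Fin 2) ℝ) i j| ≤ 2 * A * L ^ 3 * 1 := by
    refine abs_mul_le_mul ?_ (by rw [Matrix.one_apply]; split_ifs <;> simp)
    rw [abs_of_nonneg (by positivity)]
    gcongr
  have hFs : |s ^ 2 * F i j| ≤ L ^ 2 * L :=
    abs_mul_le_mul (by rw [abs_of_nonneg (by positivity)]; gcongr) (hF i j)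
  have hpp : |p i * p j| ≤ L * L :=
    abs_mul_le_mul ((PiLp.norm_apply_le p i).trans hp) ((PiLp.norm_apply_le p j).trans hp)
  have hLL := mul_le_mul_of_nonneg_right hL (sq_nonneg L)
  rw [abs_le] at *
  constructor <;> linarith [pow_nonneg (zero_le_one.trans hL) 3]

lemma mul_norm_boundaryWeight_gradient_le (hA : 0 ≤ A) (hs : 0 < s) (hsL : s ≤ L) (hz : ‖z‖ ≤ R)
    (hp : ‖p‖ ≤ L) : s * ‖(2 * A) • z + (2 * s)⁻¹ • p‖ ≤ 2 * A * R * L + L := by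
  calc s * ‖(2 * A) • z + (2 * s)⁻¹ • p‖ ≤ s * (2 * A * ‖z‖ + (2 * s)⁻¹ * ‖p‖) := by
        gcongr
        refine (norm_add_le _ _).trans_eq ?_
        rw [norm_smul_of_nonneg (by positivity), norm_smul_of_nonneg (by positivity)]
    _ = 2 * A * ‖z‖ * s + ‖p‖ / 2 := by field_simp
    _ ≤ 2 * A * R * L + L := by
        have := (norm_nonneg z).trans hz
        gcongr
        linarith [norm_nonneg p]

end BoundaryWeight

namespace IsControlledDomain

variable {f : E2 → ℝ} {R L c t₀ : ℝ} {U : Set E2} {z : E2}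

lemma sqrt_neg_pos (hD : IsControlledDomain f R L c t₀ U) (hz : z ∈ U) : 0 < √(-f z) :=
  Real.sqrt_pos.2 (by linarith [hD.neg z hz])

lemma sq_sqrt_neg (hD : IsControlledDomain f R L c t₀ U) (hz : z ∈ closure U) :
    √(-f z) ^ 2 = -f z :=
  Real.sq_sqrt (by linarith [hD.nonpos hz])

lemma sqrt_neg_le (hD : IsControlledDomain f R L c t₀ U) (hz : z ∈ closure U) : √(-f z) ≤ L :=
  Real.sqrt_le_iff.2 ⟨zero_le_one.trans hD.one_le_L, by nlinarith [hD.neg_le z hz, hD.one_le_L]⟩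

lemma sub_le_boundaryWeight (hD : IsControlledDomain f R L c t₀ U) {A C : ℝ} (hA : 0 ≤ A)
    (hz : z ∈ closure U) : C - L ≤ boundaryWeight f A C z := by
  have : 0 ≤ A * ‖z‖ ^ 2 := by positivity
  simp only [boundaryWeight]
  linarith [hD.sqrt_neg_le hz]

lemma boundaryWeight_le (hD : IsControlledDomain f R L c t₀ U) {A C : ℝ} (hA : 0 ≤ A)
    (hz : z ∈ closure U) : boundaryWeight f A C z ≤ C + A * R ^ 2 := by
  have : A * ‖z‖ ^ 2 ≤ A * R ^ 2 := by gcongr; exact hD.norm_le z hz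
  simp only [boundaryWeight]
  linarith [Real.sqrt_nonneg (-f z)]

lemma isBoundaryWeight_boundaryWeight (hD : IsControlledDomain f R L c t₀ U) {A C N K : ℝ}
    (hA : A = 8 * L ^ 2 / c) (hN : N = 2 * A * R * L + L)
    (hC : C = 1 + L + 16 * N ^ 2 * L / (c / 8))
    (hK : K = C + A * R ^ 2 + (2 * A * L ^ 3 + L ^ 3) + N) :
    IsBoundaryWeight f U (boundaryWeight f A C) (c / 8) K := by
  have hL := zero_le_one.trans hD.one_le_L
  have hR := zero_le_one.trans hD.one_le_R
  have hc := hD.c_pos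
  have hA0 : 0 ≤ A := by rw [hA]; positivity
  have hN0 : 0 ≤ N := by rw [hN]; positivity
  have hN' : 0 ≤ 16 * N ^ 2 * L / (c / 8) := by positivity
  have hC0 : 0 ≤ C := by rw [hC]; positivity
  refine ⟨?_, fun z hz => by linarith [hD.sub_le_boundaryWeight (C := C) hA0 hz],
    fun z hz => ?_, fun z hz => ?_⟩
  · have := hD.contDiff.continuous
    unfold boundaryWeight
    fun_prop
  · have : 0 ≤ 2 * A * L ^ 3 + L ^ 3 := by positivity
    linarith [hD.boundaryWeight_le (C := C) hA0 hz]
  · have hz' := subset_closure hz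
    have hs := hD.sqrt_neg_pos hz
    have hsL := hD.sqrt_neg_le hz'
    have hgrad := hN ▸ mul_norm_boundaryWeight_gradient_le hA0 hs hsL (hD.norm_le z hz')
      (hD.norm_gradient_le z hz')
    refine ⟨_, _, (hasSecondOrderJet_of_contDiffAt hD.contDiff.contDiffAt).boundaryWeight hs
      (hD.sq_sqrt_neg hz').symm, ?_, fun i j => ?_, hgrad.trans ?_, ?_⟩
    · exact le_pow_three_mul_trace hD.one_le_L hc hD.c_le_one (by rw [hA]; field_simp) hs
        (hD.abs_hessMatrix_le z hz')
        ((hD.sq_sqrt_neg hz').symm ▸ hD.le_neg_add_norm_gradient_sq z hz')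
    · refine (abs_pow_three_mul_hessian_le hA0 hD.one_le_L hs hsL (hD.abs_hessMatrix_le z hz')
        (hD.norm_gradient_le z hz') i j).trans ?_
      rw [hK]
      have : 0 ≤ A * R ^ 2 := by positivity
      linarith
    · rw [hK]
      have : 0 ≤ C + A * R ^ 2 + (2 * A * L ^ 3 + L ^ 3) := by positivity
      linarith
    · rw [show ∀ s r : ℝ, s ^ 3 * r ^ 2 = s * (s * r) ^ 2 from fun s r => by ring]
      calc _ ≤ L * N ^ 2 := by gcongr
        _ = c / 8 / 16 * (C - L - 1) := by rw [hC]; field_simp; ring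
        _ ≤ _ := by gcongr; linarith [hD.sub_le_boundaryWeight (C := C) hA0 hz']

end IsControlledDomain

lemma exists_isBoundaryWeight {R L c : ℝ} (hR : 0 ≤ R) (hL : 0 ≤ L) (hc : 0 < c) :
    ∃ K, 1 ≤ K ∧ ∀ f t₀ U, IsControlledDomain f R L c t₀ U →
      ∃ q, IsBoundaryWeight f U q (c / 8) K := by
  refine ⟨_, ?_, fun f t₀ U hD => ⟨_, hD.isBoundaryWeight_boundaryWeight rfl rfl rfl rfl⟩⟩
  rw [add_assoc, add_assoc, add_assoc, add_assoc]
  exact le_add_of_nonneg_right (by positivity)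

/-! ### The two-point function -/

/-- The function of two points whose nonnegativity expresses a quantitative midpoint concavity
of `√v`. -/
def twoPointFunction (q v : E2 → ℝ) (δ : ℝ) (x y : E2) : ℝ :=
  v ((2 : ℝ)⁻¹ • (x + y)) - ((√(v x) + √(v y)) / 2) ^ 2
    - δ * q ((2 : ℝ)⁻¹ • (x + y)) * ‖x - y‖ ^ 2

lemma twoPointFunction_comm (q v : E2 → ℝ) (δ : ℝ) (x y : E2) :
    twoPointFunction q v δ x y = twoPointFunction q v δ y x := by
  rw [twoPointFunction, twoPointFunction, add_comm x y, add_comm √(v x), norm_sub_rev]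

/-- The choice of the parameters of the two-point argument: `k` compares the values of `√v` at the
two points, `M` bounds all coefficients, `δ` is the factor in front of the weight, and
`(4 L³)⁻¹` is the constant in the lower bound for the solution. -/
structure AreTwoPointParameters (R L c t₀ K d k M δ σ : ℝ) : Prop where
  one_le_K : 1 ≤ K
  d_eq : d = (4 * L ^ 3)⁻¹ * c
  k_pos : 0 < k
  mul_k_le_d : 64 * R * L * k ≤ d
  mul_k_le_t₀ : 16 * R ^ 2 * k ≤ t₀
  M_eq : M = 64 * R ^ 2 * K ^ 2 * L ^ 4
  δ_pos : 0 < δ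
  K_mul_δ_le : 32 * K * δ ≤ d ^ 2 * k
  M_mul_δ_le : 10 ^ 5 * M * δ ≤ c / 8
  σ_nonneg : 0 ≤ σ
  M_mul_σ_le : 10 ^ 6 * M ^ 4 * σ ≤ c / 8 * δ

lemma eventually_mul_le_nhdsGT (A : ℝ) {b : ℝ} (hb : 0 < b) : ∀ᶠ δ in 𝓝[>] 0, A * δ ≤ b :=
  eventually_nhdsWithin_of_eventually_nhds <|
    ((by fun_prop : Continuous fun δ => A * δ).tendsto' 0 0 (mul_zero A)).eventually_le_const hb

lemma exists_areTwoPointParameters {R L c t₀ K : ℝ} (hL : 1 ≤ L) (hc : 0 < c) (ht : 0 < t₀)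
    (hK : 1 ≤ K) : ∃ d k M δ ε, 0 < ε ∧
      ∀ σ, 0 ≤ σ → σ ≤ ε → AreTwoPointParameters R L c t₀ K d k M δ σ := by
  set d := (4 * L ^ 3)⁻¹ * c with hd
  have hd0 : 0 < d := by positivity
  set M := 64 * R ^ 2 * K ^ 2 * L ^ 4 with hM
  obtain ⟨k, hkd, hkt, hk⟩ := ((eventually_mul_le_nhdsGT (64 * R * L) hd0).and
    ((eventually_mul_le_nhdsGT (16 * R ^ 2) ht).and eventually_mem_nhdsWithin)).exists
  rw [mem_Ioi] at hk
  obtain ⟨δ, hδK, hδM, hδ⟩ := ((eventually_mul_le_nhdsGT (32 * K) (b := d ^ 2 * k)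
    (by positivity)).and ((eventually_mul_le_nhdsGT (10 ^ 5 * M) (b := c / 8)
    (by positivity)).and eventually_mem_nhdsWithin)).exists
  rw [mem_Ioi] at hδ
  obtain ⟨ε, hεM, hε⟩ := ((eventually_mul_le_nhdsGT (10 ^ 6 * M ^ 4) (b := c / 8 * δ)
    (by positivity)).and eventually_mem_nhdsWithin).exists
  exact ⟨d, k, M, δ, ε, hε, fun σ hσ hσε => ⟨hK, hd, hk, hkd, hkt, hM, hδ, hδK, hδM, hσ,
    (mul_le_mul_of_nonneg_left hσε (by positivity)).trans hεM⟩⟩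

/-- The objects to which the two-point argument is applied. -/
structure IsTwoPointSetting (f q v : E2 → ℝ) (U : Set E2) (R L c t₀ K d k M δ σ : ℝ) : Prop
    extends AreTwoPointParameters R L c t₀ K d k M δ σ where
  domain : IsControlledDomain f R L c t₀ U
  weight : IsBoundaryWeight f U q (c / 8) K
  solution : IsRescaledSolution U σ v

lemma IsControlledDomain.midpoint_mem {f : E2 → ℝ} {R L c t₀ : ℝ} {U : Set E2} {x y : E2}
    (hD : IsControlledDomain f R L c t₀ U) (hx : x ∈ closure U) (hy : y ∈ closure U) :
    (2 : ℝ)⁻¹ • (x + y) ∈ closure U := by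
  rw [smul_add]
  exact hD.convex.closure hx hy (by norm_num) (by norm_num) (by norm_num)

lemma IsControlledDomain.frontier_nonempty {f : E2 → ℝ} {R L c t₀ : ℝ} {U : Set E2}
    (hD : IsControlledDomain f R L c t₀ U) (hU : U.Nonempty) : (frontier U).Nonempty := by
  by_contra hne
  have huniv := (isClopen_iff_frontier_eq_empty.2 (not_nonempty_iff_eq_empty.1 hne)).eq_univ hU
  exact noncompact_univ E2 (by simpa [huniv] using hD.isCompact_closure)

lemma IsRescaledSolution.le {f v : E2 → ℝ} {R L c t₀ σ : ℝ} {U : Set E2} {x : E2}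
    (hv : IsRescaledSolution U σ v) (hD : IsControlledDomain f R L c t₀ U) (hσ : 0 ≤ σ)
    (hRσ : 256 * R ^ 2 * σ ≤ 1) (hx : x ∈ closure U) : v x ≤ 16 * R ^ 2 := by
  obtain ⟨b, hb⟩ := hD.frontier_nonempty (closure_nonempty_iff.1 ⟨x, hx⟩)
  have hxb : ‖x - b‖ ≤ 2 * R :=
    (norm_sub_le _ _).trans (by linarith [hD.norm_le x hx, hD.norm_le b hb.1])
  have := mul_le_mul_of_nonneg_left hxb (by linarith [hD.one_le_R] : 0 ≤ 8 * R)
  linarith [hv.le_mul_norm_sub_frontier hD hσ hRσ hx hb]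

namespace IsTwoPointSetting

variable {R L c t₀ K d k M δ σ : ℝ} {f q v : E2 → ℝ} {U : Set E2} {x y : E2}

section Parameters

variable (h : IsTwoPointSetting f q v U R L c t₀ K d k M δ σ)

include h

lemma K_pos : 0 < K := one_pos.trans_le h.one_le_K

lemma d_pos : 0 < d := by
  have := h.domain.c_pos
  have := h.domain.one_le_L
  rw [h.d_eq]
  positivity

lemma d_le : d ≤ c / 4 := by
  have hL : (L ^ 3)⁻¹ ≤ 1 := inv_le_one_of_one_le₀ (one_le_pow₀ h.domain.one_le_L)
  have := mul_le_mul_of_nonneg_right hL h.domain.c_pos.le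
  rw [h.d_eq, mul_inv]
  linarith

lemma d_le_one : d ≤ 1 := by linarith [h.d_le, h.domain.c_le_one]

lemma one_le_mul_R_L : 1 ≤ R * L :=
  one_le_mul_of_one_le_of_one_le h.domain.one_le_R h.domain.one_le_L

lemma mul_k_le : 64 * k ≤ d := by
  have := mul_le_mul_of_nonneg_right h.one_le_mul_R_L h.k_pos.le
  linarith [h.mul_k_le_d]

lemma k_le_one : k ≤ 1 := by linarith [h.mul_k_le, h.d_le_one, h.k_pos]

lemma mul_δ_le : 2 * K * δ ≤ d := by
  have : d ^ 2 * k ≤ d * 1 := by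
    rw [pow_two, mul_assoc]
    have := mul_le_one₀ h.d_le_one h.k_pos.le h.k_le_one
    exact mul_le_mul_of_nonneg_left this h.d_pos.le
  have := mul_pos h.K_pos h.δ_pos
  linarith [h.K_mul_δ_le]

lemma mul_R_mul_L_mul_δ_le : 4 * R * L * K * δ ≤ c := by
  have hRL := h.one_le_mul_R_L
  have hd := h.d_pos
  have : R * L * (32 * K * δ) ≤ d ^ 3 / 64 := calc
    R * L * (32 * K * δ) ≤ R * L * (d ^ 2 * k) :=
      mul_le_mul_of_nonneg_left h.K_mul_δ_le (zero_le_one.trans hRL)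
    _ = d ^ 2 / 64 * (64 * R * L * k) := by ring
    _ ≤ d ^ 2 / 64 * d := by gcongr; exact h.mul_k_le_d
    _ = d ^ 3 / 64 := by ring
  have : d ^ 3 ≤ d := pow_le_of_le_one hd.le h.d_le_one (by norm_num)
  linarith [h.d_le, h.domain.c_pos]

lemma mul_R_sq_le_M : 64 * R ^ 2 ≤ M := by
  have : 1 ≤ K ^ 2 * L ^ 4 := one_le_mul_of_one_le_of_one_le (one_le_pow₀ h.one_le_K)
    (one_le_pow₀ h.domain.one_le_L)
  have := mul_le_mul_of_nonneg_left this (by positivity : 0 ≤ 64 * R ^ 2)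
  linarith [h.M_eq]

lemma mul_K_sq_le_M : 32 * K ^ 2 * L ^ 4 ≤ M := by
  have := one_le_pow₀ (n := 2) h.domain.one_le_R
  rw [h.M_eq]
  have := mul_le_mul_of_nonneg_right this (by positivity : 0 ≤ K ^ 2 * L ^ 4)
  linarith [(by positivity : 0 ≤ K ^ 2 * L ^ 4)]

lemma mul_M_mul_σ_le : 300 * M * σ ≤ d * k / 2 := by
  have hM : 64 ≤ M := by linarith [h.mul_R_sq_le_M, one_le_pow₀ (n := 2) h.domain.one_le_R]
  have hM3 : M * σ ≤ M ^ 4 * σ := by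
    gcongr
    · exact h.σ_nonneg
    · exact le_self_pow₀ (by linarith) (by norm_num)
  have : c / 8 * δ ≤ 1 / 8 * δ := by
    have := h.δ_pos
    gcongr
    exact h.domain.c_le_one
  have : 32 * 1 * δ ≤ 32 * K * δ := by
    have := h.δ_pos
    have := h.one_le_K
    gcongr
  have : d ^ 2 * k ≤ d * k := by
    have := mul_le_mul_of_nonneg_left h.d_le_one (mul_pos h.d_pos h.k_pos).le
    linarith
  linarith [h.M_mul_σ_le, h.K_mul_δ_le, h.δ_pos]

lemma mul_R_sq_mul_σ_le : 256 * R ^ 2 * σ ≤ 1 := by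
  have := mul_le_mul_of_nonneg_right h.mul_R_sq_le_M h.σ_nonneg
  have := mul_le_one₀ h.d_le_one h.k_pos.le h.k_le_one
  linarith [h.mul_M_mul_σ_le, mul_nonneg (sq_nonneg R) h.σ_nonneg]

lemma σ_le_one : σ ≤ 1 := h.domain.le_one h.mul_R_sq_mul_σ_le

end Parameters

section NegativeValue

variable (h : IsTwoPointSetting f q v U R L c t₀ K d k M δ σ)
  (hx : x ∈ closure U) (hy : y ∈ closure U)

include h hx hy

lemma mul_norm_sub_sq_le :
    d * ‖x - y‖ ^ 2 ≤ (4 * L ^ 3)⁻¹ * -f ((2 : ℝ)⁻¹ • (x + y)) := by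
  have := h.domain.one_le_L
  rw [h.d_eq, mul_assoc]
  gcongr
  exact h.domain.le_neg_midpoint x hx y hy

lemma two_mul_weight_term_le :
    2 * (δ * q ((2 : ℝ)⁻¹ • (x + y)) * ‖x - y‖ ^ 2) ≤ d * ‖x - y‖ ^ 2 := by
  have hq := h.weight.le _ (h.domain.midpoint_mem hx hy)
  have := mul_le_mul_of_nonneg_left hq h.δ_pos.le
  rw [← mul_assoc]
  gcongr
  linarith [h.mul_δ_le]

lemma inv_mul_neg_lt_of_twoPointFunction_neg (hneg : twoPointFunction q v δ x y < 0) :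
    (4 * L ^ 3)⁻¹ * -f ((2 : ℝ)⁻¹ • (x + y)) < 2 * ((√(v x) + √(v y)) / 2) ^ 2 := by
  have hlow := h.solution.inv_mul_neg_le h.domain h.σ_nonneg h.σ_le_one
    (h.domain.midpoint_mem hx hy)
  rw [twoPointFunction] at hneg
  linarith [h.mul_norm_sub_sq_le hx hy, h.two_mul_weight_term_le hx hy]

lemma mean_pos_of_twoPointFunction_neg (hneg : twoPointFunction q v δ x y < 0) :
    0 < (√(v x) + √(v y)) / 2 := by
  have := h.mul_norm_sub_sq_le hx hy
  have := h.inv_mul_neg_lt_of_twoPointFunction_neg hx hy hneg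
  have := h.d_pos
  have : 0 < ((√(v x) + √(v y)) / 2) ^ 2 := by
    linarith [(by positivity : 0 ≤ d * ‖x - y‖ ^ 2)]
  exact (by positivity : 0 ≤ (√(v x) + √(v y)) / 2).lt_of_ne'
    (pow_ne_zero_iff two_ne_zero |>.1 this.ne')

omit hy in
lemma ne_of_twoPointFunction_neg (hneg : twoPointFunction q v δ x y < 0) : x ≠ y := by
  rintro rfl
  have hmid : (2 : ℝ)⁻¹ • (x + x) = x := by module
  have hsq := Real.sq_sqrt (h.solution.nonneg h.domain h.σ_nonneg h.σ_le_one hx)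
  simp only [twoPointFunction, hmid, sub_self, norm_zero] at hneg
  linarith

end NegativeValue

/-- Moving `y` inwards by a distance of order `k² v x` makes `√v` there at least of order
`k √(v x)`, while the value at the midpoint hardly changes. -/
lemma exists_sqrt_ge (h : IsTwoPointSetting f q v U R L c t₀ K d k M δ σ) (hx : x ∈ closure U)
    (hy : y ∈ closure U) : ∃ y' ∈ closure U, d * k * √(v x) ≤ √(v y') ∧
      v ((2 : ℝ)⁻¹ • (x + y')) - v ((2 : ℝ)⁻¹ • (x + y)) ≤ 4 * R * L * k ^ 2 * v x := by
  have hσ := h.σ_nonneg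
  have hRσ := h.mul_R_sq_mul_σ_le
  have hR := zero_le_one.trans h.domain.one_le_R
  have hL := one_pos.trans_le h.domain.one_le_L
  have hd := h.d_pos
  have hk := h.k_pos
  have hvx := h.solution.nonneg h.domain hσ h.σ_le_one hx
  have ht : k ^ 2 * v x ≤ t₀ := calc
    k ^ 2 * v x ≤ k * (16 * R ^ 2) := by
      gcongr
      · exact pow_le_of_le_one hk.le h.k_le_one two_ne_zero
      · exact h.solution.le h.domain hσ hRσ hx
    _ ≤ t₀ := by linarith [h.mul_k_le_t₀]
  obtain ⟨y', hy', hyy', hfy'⟩ := h.domain.exists_inward y hy _ (by positivity) ht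
  refine ⟨y', hy', Real.le_sqrt_of_sq_le ?_, ?_⟩
  · calc (d * k * √(v x)) ^ 2 = d * (d * (k ^ 2 * v x)) := by
          rw [mul_pow, Real.sq_sqrt hvx]; ring
      _ ≤ 1 * (d * (k ^ 2 * v x)) := by gcongr; exact h.d_le_one
      _ = (4 * L ^ 3)⁻¹ * (c * (k ^ 2 * v x)) := by rw [h.d_eq]; ring
      _ ≤ (4 * L ^ 3)⁻¹ * -f y' := by gcongr
      _ ≤ v y' := h.solution.inv_mul_neg_le h.domain hσ h.σ_le_one hy'
  · have hmid : ‖(2 : ℝ)⁻¹ • (x + y') - (2 : ℝ)⁻¹ • (x + y)‖ = 2⁻¹ * ‖y' - y‖ := by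
      rw [← smul_sub, add_sub_add_left_eq_sub, norm_smul_of_nonneg (by norm_num)]
    calc _ ≤ 8 * R * ‖(2 : ℝ)⁻¹ • (x + y') - (2 : ℝ)⁻¹ • (x + y)‖ :=
          (le_abs_self _).trans (h.solution.abs_sub_le h.domain hσ hRσ
            (h.domain.midpoint_mem hx hy') (h.domain.midpoint_mem hx hy))
      _ ≤ 8 * R * (2⁻¹ * (L * (k ^ 2 * v x))) := by rw [hmid]; gcongr
      _ = 4 * R * L * k ^ 2 * v x := by ring

lemma mul_norm_sub_sq_le_of_sqrt_le (h : IsTwoPointSetting f q v U R L c t₀ K d k M δ σ)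
    (hx : x ∈ closure U) (hy : y ∈ closure U) (hneg : twoPointFunction q v δ x y < 0)
    (hle : √(v y) ≤ √(v x)) : K * δ * ‖x - y‖ ^ 2 ≤ d * k * √(v x) ^ 2 / 16 := by
  have hKδ := mul_pos h.K_pos h.δ_pos
  have hmean : (√(v x) + √(v y)) / 2 ≤ √(v x) := by linarith
  refine le_of_mul_le_mul_left ?_ h.d_pos
  calc d * (K * δ * ‖x - y‖ ^ 2) = K * δ * (d * ‖x - y‖ ^ 2) := by ring
    _ ≤ K * δ * (2 * ((√(v x) + √(v y)) / 2) ^ 2) := by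
      refine mul_le_mul_of_nonneg_left ?_ hKδ.le
      exact (h.mul_norm_sub_sq_le hx hy).trans
        (h.inv_mul_neg_lt_of_twoPointFunction_neg hx hy hneg).le
    _ ≤ K * δ * (2 * √(v x) ^ 2) := by gcongr
    _ = 32 * K * δ * (√(v x) ^ 2 / 16) := by ring
    _ ≤ d ^ 2 * k * (√(v x) ^ 2 / 16) :=
      mul_le_mul_of_nonneg_right h.K_mul_δ_le (by positivity)
    _ = d * (d * k * √(v x) ^ 2 / 16) := by ring

/-- Otherwise moving `y` inwards would decrease the two-point function: the mean of `√v` grows by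
more than the other terms can compensate. -/
lemma mul_sqrt_le_sqrt (h : IsTwoPointSetting f q v U R L c t₀ K d k M δ σ) (hx : x ∈ closure U)
    (hy : y ∈ closure U) (hneg : twoPointFunction q v δ x y < 0)
    (hmin : ∀ y' ∈ closure U, twoPointFunction q v δ x y ≤ twoPointFunction q v δ x y')
    (hle : √(v y) ≤ √(v x)) : d * k / 2 * √(v x) ≤ √(v y) := by
  by_contra! hlt
  obtain ⟨y', hy', hroot, hvmid⟩ := h.exists_sqrt_ge hx hy
  have hmin' := hmin y' hy'
  have hq' : 0 ≤ δ * q ((2 : ℝ)⁻¹ • (x + y')) * ‖x - y'‖ ^ 2 := by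
    have := h.weight.one_le _ (h.domain.midpoint_mem hx hy')
    have := h.δ_pos
    positivity
  have hq : δ * q ((2 : ℝ)⁻¹ • (x + y)) * ‖x - y‖ ^ 2 ≤ K * δ * ‖x - y‖ ^ 2 := by
    rw [mul_comm K]
    have := h.δ_pos
    gcongr
    exact h.weight.le _ (h.domain.midpoint_mem hx hy)
  have hdist := h.mul_norm_sub_sq_le_of_sqrt_le hx hy hneg hle
  rw [← Real.sq_sqrt (h.solution.nonneg h.domain h.σ_nonneg h.σ_le_one hx)] at hvmid
  simp only [twoPointFunction] at hmin'
  have hb := Real.sqrt_nonneg (v y)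
  have hdk := mul_pos h.d_pos h.k_pos
  generalize √(v x) = a, √(v y) = b, √(v y') = b' at *
  have ha : 0 < a := pos_of_mul_pos_right (hb.trans_lt hlt) (by positivity)
  have hmean : d * k * a ^ 2 / 4 ≤ ((a + b') / 2) ^ 2 - ((a + b) / 2) ^ 2 := by
    have := mul_pos hdk ha
    have := mul_le_mul (by linarith : d * k * a / 2 ≤ b' - b)
      (by linarith : 2 * a ≤ 2 * a + b' + b)
      (by positivity) (by linarith)
    linarith
  have hmid : 4 * R * L * k ^ 2 * a ^ 2 ≤ d * k * a ^ 2 / 16 := by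
    have := h.k_pos
    have := mul_le_mul_of_nonneg_right h.mul_k_le_d (by positivity : 0 ≤ k * a ^ 2)
    linarith
  linarith [mul_pos hdk (pow_pos ha 2)]

end IsTwoPointSetting

/-- The Hessian of `√v`, as given by the chain rule. -/
def hessSqrt (v : E2 → ℝ) (x : E2) : Matrix (Fin 2) (Fin 2) ℝ :=
  (2 * √(v x))⁻¹ • hessMatrix v x
    - (4 * √(v x) ^ 3)⁻¹ • Matrix.vecMulVec (gradient v x : E2) (gradient v x : E2)

/-- The data of the second variation of the two-point function at `(x, y)`, where `p` and `Q` are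
the first two derivatives of the weight at the midpoint. -/
def twoPointData (q v : E2 → ℝ) (δ : ℝ) (x y p : E2) (Q : Matrix (Fin 2) (Fin 2) ℝ) :
    SecondOrderData where
  A := hessMatrix v ((2 : ℝ)⁻¹ • (x + y))
  X := hessSqrt v x
  Y := hessSqrt v y
  Q := Q
  px := (2 * √(v x))⁻¹ • gradient v x
  py := (2 * √(v y))⁻¹ • gradient v y
  l := x - y
  dq := p
  m := (√(v x) + √(v y)) / 2
  δ := δ
  q := q ((2 : ℝ)⁻¹ • (x + y))

/-- The first order data of the two-point function at a critical point `(x, y)`, where `p` is the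
gradient of the weight at the midpoint. -/
def twoPointCriticalPair (q v : E2 → ℝ) (δ : ℝ) (x y p : E2) : CriticalPair where
  t := (√(v x) - √(v y)) / (√(v x) + √(v y))
  g := (2 : ℝ)⁻¹ • (gradient v ((2 : ℝ)⁻¹ • (x + y)) - (δ * ‖x - y‖ ^ 2) • p)
  k := (2 * δ * q ((2 : ℝ)⁻¹ • (x + y))) • (x - y)
  e := (δ * ‖x - y‖ ^ 2) • p

section Expansion

variable {q v : E2 → ℝ} {x y : E2}

lemma HasSecondOrderJet.sqrt_of_pos {A : Matrix (Fin 2) (Fin 2) ℝ} {p : E2}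
    (hv : HasSecondOrderJet v x p A) (hpos : 0 < √(v x)) :
    HasSecondOrderJet (fun y => √(v y)) x ((2 * √(v x))⁻¹ • p)
      ((2 * √(v x))⁻¹ • A - (4 * √(v x) ^ 3)⁻¹ • Matrix.vecMulVec p p) :=
  hv.sqrt hpos (Real.sq_sqrt (Real.sqrt_pos.1 hpos).le).symm

lemma hasQuadraticExpansion_norm_sq (l ζ : E2) :
    HasQuadraticExpansion (fun τ => ‖l + τ • ζ‖ ^ 2) (‖l‖ ^ 2) (2 * ⟪l, ζ⟫) (‖ζ‖ ^ 2) :=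
  (hasSecondOrderJet_norm_sq l ζ).congr (fun _ => rfl) rfl (real_inner_smul_left ..).symm
    (by rw [quadForm_smul, quadForm_one]; ring)

lemma hasQuadraticExpansion_twoPointFunction {p : E2} {Q : Matrix (Fin 2) (Fin 2) ℝ} (δ : ℝ)
    (hv : ∀ {z}, z ∈ ({x, y, (2 : ℝ)⁻¹ • (x + y)} : Set E2) →
      HasSecondOrderJet v z (gradient v z) (hessMatrix v z))
    (hq : HasSecondOrderJet q ((2 : ℝ)⁻¹ • (x + y)) p Q)
    (hx : 0 < √(v x)) (hy : 0 < √(v y)) (ξ η : E2) :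
    HasQuadraticExpansion (fun τ => twoPointFunction q v δ (x + τ • ξ) (y + τ • η))
      (twoPointFunction q v δ x y)
      (⟪gradient v ((2 : ℝ)⁻¹ • (x + y)), (2 : ℝ)⁻¹ • (ξ + η)⟫
        - (√(v x) + √(v y)) / 2 * (⟪(2 * √(v x))⁻¹ • gradient v x, ξ⟫
          + ⟪(2 * √(v y))⁻¹ • gradient v y, η⟫)
        - δ * (q ((2 : ℝ)⁻¹ • (x + y)) * (2 * ⟪x - y, ξ - η⟫)
          + ‖x - y‖ ^ 2 * ⟪p, (2 : ℝ)⁻¹ • (ξ + η)⟫))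
      ((twoPointData q v δ x y p Q).secondVariation ξ η / 2) := by
  have mean := (((hv (z := x) (by simp)).sqrt_of_pos hx ξ).add
    ((hv (z := y) (by simp)).sqrt_of_pos hy η)).const_mul 2⁻¹
  have weight := ((hq ((2 : ℝ)⁻¹ • (ξ + η))).mul
    (hasQuadraticExpansion_norm_sq (x - y) (ξ - η))).const_mul δ
  refine (((hv (z := (2 : ℝ)⁻¹ • (x + y)) (by simp) ((2 : ℝ)⁻¹ • (ξ + η))).sub
    (mean.mul mean)).sub weight).congr (fun τ => ?_) ?_ ?_ ?_
  · have hmid : (2 : ℝ)⁻¹ • (x + τ • ξ + (y + τ • η))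
        = (2 : ℝ)⁻¹ • (x + y) + τ • ((2 : ℝ)⁻¹ • (ξ + η)) := by module
    have hdiff : x + τ • ξ - (y + τ • η) = x - y + τ • (ξ - η) := by module
    rw [twoPointFunction, hmid, hdiff]
    ring
  · rw [twoPointFunction]
    ring
  · ring
  · simp only [SecondOrderData.secondVariation, twoPointData, hessSqrt]
    ring

/-- The equation for `√v` which corresponds to the equation for `v`. -/
lemma mul_mcOp_hessSqrt {σ : ℝ} (hx : 0 < √(v x))
    (hv : mcOp σ (gradient v x) (hessMatrix v x) = -(2 * areaFactor σ (gradient v x) ^ 3)) :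
    √(v x) * mcOp σ (gradient v x) (hessSqrt v x)
      = -(areaFactor σ (gradient v x) ^ 3 + ‖(2 * √(v x))⁻¹ • gradient v x‖ ^ 2) := by
  have hcross : cross (gradient v x) (gradient v x) = 0 := by rw [cross]; ring
  rw [hessSqrt, mcOp_sub, mcOp_smul, mcOp_smul, hv, mcOp_vecMulVec, hcross, norm_smul,
    Real.norm_of_nonneg (by positivity)]
  field_simp
  ring

end Expansion

namespace IsTwoPointSetting

variable {R L c t₀ K d k M δ σ : ℝ} {f q v : E2 → ℝ} {U : Set E2} {x y : E2}

lemma mul_K_pow_mul_L_pow_le_M (h : IsTwoPointSetting f q v U R L c t₀ K d k M δ σ) {i j : ℕ}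
    (hi : i ≤ 2) (hj : j ≤ 4) : 32 * K ^ i * L ^ j ≤ M := by
  refine le_trans ?_ h.mul_K_sq_le_M
  have := h.domain.one_le_L
  have := h.one_le_K
  gcongr

lemma K_le_M (h : IsTwoPointSetting f q v U R L c t₀ K d k M δ σ) : K ≤ M := by
  linarith [h.mul_K_pow_mul_L_pow_le_M (i := 1) (j := 0) (by norm_num) (by norm_num), h.K_pos]

end IsTwoPointSetting

/-- Up to bounded factors, the size of `|x - y|²` times the Hessian of the weight at the midpoint.
It is the scale against which all errors are measured. -/
def weightScale (f : E2 → ℝ) (x y : E2) : ℝ :=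
  ‖x - y‖ ^ 2 / √(-f ((2 : ℝ)⁻¹ • (x + y))) ^ 3

namespace IsTwoPointSetting

section Bounds

variable {R L c t₀ K d k M δ σ : ℝ} {f q v : E2 → ℝ} {U : Set E2} {x y p : E2}
  (h : IsTwoPointSetting f q v U R L c t₀ K d k M δ σ) (hx : x ∈ U) (hy : y ∈ U)

include h hx hy

lemma midpoint_mem : (2 : ℝ)⁻¹ • (x + y) ∈ U := by
  rw [smul_add]
  exact h.domain.convex hx hy (by norm_num) (by norm_num) (by norm_num)

lemma sqrt_neg_pos : 0 < √(-f ((2 : ℝ)⁻¹ • (x + y))) :=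
  h.domain.sqrt_neg_pos (h.midpoint_mem hx hy)

lemma sqrt_neg_le : √(-f ((2 : ℝ)⁻¹ • (x + y))) ≤ L :=
  h.domain.sqrt_neg_le (subset_closure (h.midpoint_mem hx hy))

lemma pow_mul_weightScale (a : ℝ) :
    ‖x - y‖ ^ 2 * a = √(-f ((2 : ℝ)⁻¹ • (x + y))) ^ 3 * a * weightScale f x y := by
  have := h.sqrt_neg_pos hx hy
  rw [weightScale]
  generalize √(-f ((2 : ℝ)⁻¹ • (x + y))) = s at *
  field_simp

lemma weightScale_nonneg : 0 ≤ weightScale f x y := by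
  have := h.sqrt_neg_pos hx hy
  rw [weightScale]
  positivity

lemma weightScale_pos (hne : x ≠ y) : 0 < weightScale f x y :=
  div_pos (pow_pos (norm_sub_pos_iff.2 hne) 2) (pow_pos (h.sqrt_neg_pos hx hy) 3)

lemma norm_gradient_term_le (hp : √(-f ((2 : ℝ)⁻¹ • (x + y))) * ‖p‖ ≤ K) :
    ‖(δ * ‖x - y‖ ^ 2) • p‖
      ≤ K * √(-f ((2 : ℝ)⁻¹ • (x + y))) ^ 2 * (δ * weightScale f x y) := by
  have := h.δ_pos
  have := h.weightScale_nonneg hx hy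
  calc ‖(δ * ‖x - y‖ ^ 2) • p‖ = δ * (‖x - y‖ ^ 2 * ‖p‖) := by
        rw [norm_smul_of_nonneg (by positivity), mul_assoc]
    _ = √(-f ((2 : ℝ)⁻¹ • (x + y))) * ‖p‖ * √(-f ((2 : ℝ)⁻¹ • (x + y))) ^ 2
          * (δ * weightScale f x y) := by
        rw [h.pow_mul_weightScale hx hy]
        ring
    _ ≤ _ := by gcongr

lemma norm_gradient_term_le_one (hp : √(-f ((2 : ℝ)⁻¹ • (x + y))) * ‖p‖ ≤ K) :
    ‖(δ * ‖x - y‖ ^ 2) • p‖ ≤ 1 := by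
  have hs := h.sqrt_neg_pos hx hy
  have hsL := h.sqrt_neg_le hx hy
  have hmid := h.domain.le_neg_midpoint x (subset_closure hx) y (subset_closure hy)
  rw [← h.domain.sq_sqrt_neg (subset_closure (h.midpoint_mem hx hy))] at hmid
  have hc := h.domain.c_pos
  have hδ := h.δ_pos
  have hK := h.K_pos
  have hL := one_pos.trans_le h.domain.one_le_L
  rw [norm_smul_of_nonneg (by positivity)]
  generalize √(-f ((2 : ℝ)⁻¹ • (x + y))) = s at *
  refine le_of_mul_le_mul_left ?_ hc
  calc c * (δ * ‖x - y‖ ^ 2 * ‖p‖) = δ * ‖p‖ * (c * ‖x - y‖ ^ 2) := by ring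
    _ ≤ δ * ‖p‖ * s ^ 2 := by gcongr
    _ = δ * s * (s * ‖p‖) := by ring
    _ ≤ δ * L * K := by gcongr
    _ ≤ R * (δ * L * K) := le_mul_of_one_le_left
        (by positivity) h.domain.one_le_R
    _ ≤ c * 1 := by
        have : 0 ≤ R * L * K * δ := by
          have := h.domain.one_le_R
          positivity
        linarith [h.mul_R_mul_L_mul_δ_le]

lemma norm_distance_term_sq_le :
    ‖(2 * δ * q ((2 : ℝ)⁻¹ • (x + y))) • (x - y)‖ ^ 2
      ≤ 4 * K ^ 2 * √(-f ((2 : ℝ)⁻¹ • (x + y))) ^ 3 * (δ ^ 2 * weightScale f x y) := by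
  have hz := subset_closure (h.midpoint_mem hx hy)
  have := h.weightScale_nonneg hx hy
  have := zero_le_one.trans (h.weight.one_le _ hz)
  calc ‖(2 * δ * q ((2 : ℝ)⁻¹ • (x + y))) • (x - y)‖ ^ 2
      = ‖x - y‖ ^ 2 * (4 * q ((2 : ℝ)⁻¹ • (x + y)) ^ 2 * δ ^ 2) := by
        rw [norm_smul, mul_pow, Real.norm_eq_abs, sq_abs]
        ring
    _ = 4 * q ((2 : ℝ)⁻¹ • (x + y)) ^ 2 * √(-f ((2 : ℝ)⁻¹ • (x + y))) ^ 3
          * (δ ^ 2 * weightScale f x y) := by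
        rw [h.pow_mul_weightScale hx hy]
        ring
    _ ≤ _ := by
        gcongr
        exact h.weight.le _ hz

lemma norm_distance_term_le_one : ‖(2 * δ * q ((2 : ℝ)⁻¹ • (x + y))) • (x - y)‖ ≤ 1 := by
  have hz := subset_closure (h.midpoint_mem hx hy)
  have hq := zero_le_one.trans (h.weight.one_le _ hz)
  have hδ := h.δ_pos
  have hK := h.K_pos
  have hR := h.domain.one_le_R
  have hxy : ‖x - y‖ ≤ 2 * R := (norm_sub_le _ _).trans (by
    linarith [h.domain.norm_le x (subset_closure hx), h.domain.norm_le y (subset_closure hy)])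
  calc ‖(2 * δ * q ((2 : ℝ)⁻¹ • (x + y))) • (x - y)‖
      = 2 * δ * q ((2 : ℝ)⁻¹ • (x + y)) * ‖x - y‖ := norm_smul_of_nonneg (by positivity) _
    _ ≤ 2 * δ * K * (2 * R) := by gcongr; exact h.weight.le _ hz
    _ ≤ L * (2 * δ * K * (2 * R)) := le_mul_of_one_le_left (by positivity) h.domain.one_le_L
    _ ≤ 1 := by linarith [h.mul_R_mul_L_mul_δ_le, h.domain.c_le_one]

lemma inv_mean_sq_mul_le (hneg : twoPointFunction q v δ x y < 0) :
    ((√(v x) + √(v y)) / 2)⁻¹ ^ 2 * √(-f ((2 : ℝ)⁻¹ • (x + y))) ^ 2 ≤ 8 * L ^ 3 := by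
  have hm := h.mean_pos_of_twoPointFunction_neg (subset_closure hx) (subset_closure hy) hneg
  have hlt := h.inv_mul_neg_lt_of_twoPointFunction_neg (subset_closure hx) (subset_closure hy) hneg
  have hL := one_pos.trans_le h.domain.one_le_L
  rw [h.domain.sq_sqrt_neg (subset_closure (h.midpoint_mem hx hy)), inv_pow,
    inv_mul_le_iff₀ (by positivity)]
  rw [inv_mul_lt_iff₀ (by positivity)] at hlt
  linarith

lemma norm_gradient_term_le_M (hp : √(-f ((2 : ℝ)⁻¹ • (x + y))) * ‖p‖ ≤ K) :
    ‖(δ * ‖x - y‖ ^ 2) • p‖ ≤ M * δ * weightScale f x y := by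
  refine (h.norm_gradient_term_le hx hy hp).trans ?_
  have := h.δ_pos
  have := h.K_pos
  have := h.sqrt_neg_pos hx hy
  have := h.weightScale_nonneg hx hy
  rw [mul_assoc M]
  gcongr
  calc K * √(-f ((2 : ℝ)⁻¹ • (x + y))) ^ 2 ≤ K * L ^ 2 := by gcongr; exact h.sqrt_neg_le hx hy
    _ ≤ 32 * K ^ 1 * L ^ 2 := by rw [pow_one]; linarith [(by positivity : 0 ≤ K * L ^ 2)]
    _ ≤ M := h.mul_K_pow_mul_L_pow_le_M (by norm_num) (by norm_num)

lemma norm_distance_term_sq_le_M :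
    ‖(2 * δ * q ((2 : ℝ)⁻¹ • (x + y))) • (x - y)‖ ^ 2 ≤ M * δ ^ 2 * weightScale f x y := by
  refine (h.norm_distance_term_sq_le hx hy).trans ?_
  have := h.sqrt_neg_pos hx hy
  have := h.weightScale_nonneg hx hy
  have := h.domain.one_le_L
  rw [mul_assoc M]
  gcongr
  calc 4 * K ^ 2 * √(-f ((2 : ℝ)⁻¹ • (x + y))) ^ 3 ≤ 4 * K ^ 2 * L ^ 3 := by
        gcongr
        exact h.sqrt_neg_le hx hy
    _ ≤ 32 * K ^ 2 * L ^ 3 := by gcongr; norm_num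
    _ ≤ M := h.mul_K_pow_mul_L_pow_le_M le_rfl (by norm_num)

lemma scaled_norm_gradient_term_le (hp : √(-f ((2 : ℝ)⁻¹ • (x + y))) * ‖p‖ ≤ K)
    (hneg : twoPointFunction q v δ x y < 0) :
    ((√(v x) + √(v y)) / 2)⁻¹ ^ 2 * ‖(δ * ‖x - y‖ ^ 2) • p‖ ≤ M * δ * weightScale f x y := by
  have hδ := h.δ_pos
  have hK := h.K_pos
  have hS := h.weightScale_nonneg hx hy
  have hbound := h.norm_gradient_term_le hx hy hp
  have hmean := h.inv_mean_sq_mul_le hx hy hneg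
  have hL := h.domain.one_le_L
  generalize √(-f ((2 : ℝ)⁻¹ • (x + y))) = s, ((√(v x) + √(v y)) / 2)⁻¹ = μ at hbound hmean ⊢
  calc μ ^ 2 * ‖(δ * ‖x - y‖ ^ 2) • p‖
      ≤ μ ^ 2 * (K * s ^ 2 * (δ * weightScale f x y)) := by gcongr
    _ = K * (μ ^ 2 * s ^ 2) * (δ * weightScale f x y) := by ring
    _ ≤ K * (8 * L ^ 3) * (δ * weightScale f x y) := by gcongr
    _ = 8 * K ^ 1 * L ^ 3 * (δ * weightScale f x y) := by ring
    _ ≤ 32 * K ^ 1 * L ^ 3 * (δ * weightScale f x y) := by gcongr; norm_num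
    _ ≤ M * (δ * weightScale f x y) := by
        gcongr
        exact h.mul_K_pow_mul_L_pow_le_M (by norm_num) (by norm_num)
    _ = M * δ * weightScale f x y := by ring

lemma scaled_norm_distance_term_sq_le (hneg : twoPointFunction q v δ x y < 0) :
    ((√(v x) + √(v y)) / 2)⁻¹ ^ 2 * ‖(2 * δ * q ((2 : ℝ)⁻¹ • (x + y))) • (x - y)‖ ^ 2
      ≤ M * δ ^ 2 * weightScale f x y := by
  have hS := h.weightScale_nonneg hx hy
  have hL := h.domain.one_le_L
  have hbound := h.norm_distance_term_sq_le hx hy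
  have hmean := h.inv_mean_sq_mul_le hx hy hneg
  have hs := h.sqrt_neg_pos hx hy
  have hsL := h.sqrt_neg_le hx hy
  generalize √(-f ((2 : ℝ)⁻¹ • (x + y))) = s, ((√(v x) + √(v y)) / 2)⁻¹ = μ at *
  calc μ ^ 2 * ‖(2 * δ * q ((2 : ℝ)⁻¹ • (x + y))) • (x - y)‖ ^ 2
      ≤ μ ^ 2 * (4 * K ^ 2 * s ^ 3 * (δ ^ 2 * weightScale f x y)) := by gcongr
    _ = 4 * K ^ 2 * (s * (μ ^ 2 * s ^ 2)) * (δ ^ 2 * weightScale f x y) := by ring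
    _ ≤ 4 * K ^ 2 * (L * (8 * L ^ 3)) * (δ ^ 2 * weightScale f x y) := by gcongr
    _ = 32 * K ^ 2 * L ^ 4 * (δ ^ 2 * weightScale f x y) := by ring
    _ ≤ M * (δ ^ 2 * weightScale f x y) := by gcongr; exact h.mul_K_sq_le_M
    _ = M * δ ^ 2 * weightScale f x y := by ring

end Bounds

section InteriorMinimum

lemma hasSecondOrderJet_solution {R L c t₀ K d k M δ σ : ℝ} {f q v : E2 → ℝ} {U : Set E2}
    {x y z : E2} (h : IsTwoPointSetting f q v U R L c t₀ K d k M δ σ) (hx : x ∈ U) (hy : y ∈ U)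
    (hz : z ∈ ({x, y, (2 : ℝ)⁻¹ • (x + y)} : Set E2)) :
    HasSecondOrderJet v z (gradient v z) (hessMatrix v z) := by
  refine h.solution.hasSecondOrderJet h.domain.isOpen ?_
  rcases hz with rfl | rfl | rfl
  exacts [hx, hy, h.midpoint_mem hx hy]

variable {R L c t₀ K d k M δ σ : ℝ} {f q v : E2 → ℝ} {U : Set E2} {x y p : E2}
  {Q : Matrix (Fin 2) (Fin 2) ℝ} (h : IsTwoPointSetting f q v U R L c t₀ K d k M δ σ)
  (hx : x ∈ U) (hy : y ∈ U) (hvx : 0 < √(v x)) (hvy : 0 < √(v y))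

section FirstOrder

variable (hq : HasSecondOrderJet q ((2 : ℝ)⁻¹ • (x + y)) p Q)
  (hmin : ∀ x' ∈ U, ∀ y' ∈ U, twoPointFunction q v δ x y ≤ twoPointFunction q v δ x' y')

include h hx hy

lemma isLocalMin_twoPointFunction_line (ξ η : E2)
    (hmin : ∀ x' ∈ U, ∀ y' ∈ U, twoPointFunction q v δ x y ≤ twoPointFunction q v δ x' y') :
    IsLocalMin (fun τ : ℝ => twoPointFunction q v δ (x + τ • ξ) (y + τ • η)) 0 := by
  have hline {z : E2} (hz : z ∈ U) (ζ : E2) : ∀ᶠ τ : ℝ in 𝓝 0, z + τ • ζ ∈ U :=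
    (by fun_prop : Continuous fun τ : ℝ => z + τ • ζ).continuousAt.eventually_mem
      (h.domain.isOpen.mem_nhds (by simpa using hz))
  filter_upwards [hline hx ξ, hline hy η] with τ hξ hη
  simpa using hmin _ hξ _ hη

include hvx hvy hq hmin

lemma mean_smul_gradient_sqrt_eq :
    ((√(v x) + √(v y)) / 2) • (2 * √(v x))⁻¹ • gradient v x
        = (twoPointCriticalPair q v δ x y p).g - (twoPointCriticalPair q v δ x y p).k ∧
      ((√(v x) + √(v y)) / 2) • (2 * √(v y))⁻¹ • gradient v y
        = (twoPointCriticalPair q v δ x y p).g + (twoPointCriticalPair q v δ x y p).k := by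
  have first (ξ η : E2) := (hasQuadraticExpansion_twoPointFunction δ
    (h.hasSecondOrderJet_solution hx hy) hq hvx hvy ξ η).eq_zero_of_isLocalMin
    (h.isLocalMin_twoPointFunction_line hx hy ξ η hmin)
  constructor
  · refine ext_inner_right ℝ fun ξ => ?_
    have := first ξ 0
    simp only [twoPointCriticalPair, inner_sub_left, real_inner_smul_left,
      real_inner_smul_right, add_zero, sub_zero, inner_zero_right] at this ⊢
    linarith
  · refine ext_inner_right ℝ fun η => ?_
    have := first 0 η
    simp only [twoPointCriticalPair, inner_add_left, inner_sub_left, real_inner_smul_left,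
      real_inner_smul_right, zero_add, zero_sub, inner_zero_right, inner_neg_right] at this ⊢
    linarith

lemma secondVariation_twoPointData_nonneg (ξ η : E2) :
    0 ≤ (twoPointData q v δ x y p Q).secondVariation ξ η := by
  linarith [(hasQuadraticExpansion_twoPointFunction δ
    (h.hasSecondOrderJet_solution hx hy) hq hvx hvy ξ η).nonneg_of_isLocalMin
    (h.isLocalMin_twoPointFunction_line hx hy ξ η hmin)]

end FirstOrder

lemma one_add_t_mul_mean (hm : 0 < (√(v x) + √(v y)) / 2) :
    (1 + (twoPointCriticalPair q v δ x y p).t) * ((√(v x) + √(v y)) / 2) = √(v x) := by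
  have : 0 < √(v x) + √(v y) := by linarith
  rw [twoPointCriticalPair]
  field_simp
  ring

lemma one_sub_t_mul_mean (hm : 0 < (√(v x) + √(v y)) / 2) :
    (1 - (twoPointCriticalPair q v δ x y p).t) * ((√(v x) + √(v y)) / 2) = √(v y) := by
  have : 0 < √(v x) + √(v y) := by linarith
  rw [twoPointCriticalPair]
  field_simp
  ring

lemma gap_le (hm : 0 < (√(v x) + √(v y)) / 2)
    (hcmp : d * k / 2 * ((√(v x) + √(v y)) / 2) ^ 2 ≤ √(v x) * √(v y)) :
    d * k / 2 ≤ 1 - (twoPointCriticalPair q v δ x y p).t ^ 2 := by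
  refine le_of_mul_le_mul_right (hcmp.trans_eq ?_) (pow_pos hm 2)
  calc √(v x) * √(v y) = _ * _ := congrArg₂ (· * ·) (one_add_t_mul_mean hm).symm
        (one_sub_t_mul_mean hm).symm
    _ = _ := by ring

include h in
lemma bounded_twoPointCriticalPair (hx : x ∈ U) (hy : y ∈ U) (hvx : 0 < √(v x))
    (hvy : 0 < √(v y)) (hp : √(-f ((2 : ℝ)⁻¹ • (x + y))) * ‖p‖ ≤ K) :
    (twoPointCriticalPair q v δ x y p).Bounded M where
  one_le := by linarith [h.mul_R_sq_le_M, one_le_pow₀ (n := 2) h.domain.one_le_R]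
  abs_t_lt := by
    rw [twoPointCriticalPair, abs_lt, lt_div_iff₀ (by positivity), div_lt_iff₀ (by positivity)]
    constructor <;> linarith
  g_le := by
    have hg : ‖(twoPointCriticalPair q v δ x y p).g‖ ≤ 8 * R := by
      rw [twoPointCriticalPair, norm_smul_of_nonneg (by norm_num)]
      have := norm_sub_le (gradient v ((2 : ℝ)⁻¹ • (x + y))) ((δ * ‖x - y‖ ^ 2) • p)
      linarith [h.norm_gradient_term_le_one hx hy hp, h.domain.one_le_R,
        h.solution.norm_gradient_le h.domain h.σ_nonneg h.mul_R_sq_mul_σ_le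
          (h.midpoint_mem hx hy)]
    calc _ ≤ (8 * R) ^ 2 := by gcongr
      _ ≤ M := by linarith [h.mul_R_sq_le_M]
  k_le := h.norm_distance_term_le_one hx hy
  e_le := h.norm_gradient_term_le_one hx hy hp

include h in
lemma isPerturbative_twoPoint (hx : x ∈ U) (hy : y ∈ U) (hvx : 0 < √(v x)) (hvy : 0 < √(v y))
    (hneg : twoPointFunction q v δ x y < 0)
    (hcmp : d * k / 2 * ((√(v x) + √(v y)) / 2) ^ 2 ≤ √(v x) * √(v y))
    (hp : √(-f ((2 : ℝ)⁻¹ • (x + y))) * ‖p‖ ≤ K)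
    (hp' : √(-f ((2 : ℝ)⁻¹ • (x + y))) ^ 3 * ‖p‖ ^ 2 ≤ c / 8 / 16 * q ((2 : ℝ)⁻¹ • (x + y)))
    (hQ : c / 8 ≤ √(-f ((2 : ℝ)⁻¹ • (x + y))) ^ 3 * Q.trace)
    (hQ' : ∀ i j, |√(-f ((2 : ℝ)⁻¹ • (x + y))) ^ 3 * Q i j| ≤ K) :
    (twoPointCriticalPair q v δ x y p).IsPerturbative (twoPointData q v δ x y p Q) σ M (c / 8)
      (weightScale f x y) where
  bounded := h.bounded_twoPointCriticalPair hx hy hvx hvy hp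
  σ_nonneg := h.σ_nonneg
  σ_le_gap := h.mul_M_mul_σ_le.trans (gap_le (by positivity) hcmp)
  σ_le := h.M_mul_σ_le
  δ_pos := h.δ_pos
  δ_le := h.M_mul_δ_le
  c_le := by linarith [h.domain.c_le_one, h.domain.c_pos]
  S_pos := h.weightScale_pos hx hy
    (h.ne_of_twoPointFunction_neg (subset_closure hx) hneg)
  k_le := h.norm_distance_term_sq_le_M hx hy
  e_le := h.norm_gradient_term_le_M hx hy hp
  scaled_k_le := h.scaled_norm_distance_term_sq_le hx hy hneg
  scaled_e_le := h.scaled_norm_gradient_term_le hx hy hp hneg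
  one_le_q := h.weight.one_le _ (subset_closure (h.midpoint_mem hx hy))
  q_le := (h.weight.le _ (subset_closure (h.midpoint_mem hx hy))).trans h.K_le_M
  le_trace := by
    have := mul_le_mul_of_nonneg_right hQ (h.weightScale_nonneg hx hy)
    exact this.trans_eq (h.pow_mul_weightScale hx hy _).symm
  hessian_le i j := by
    have hS := h.weightScale_nonneg hx hy
    rw [twoPointData, h.pow_mul_weightScale hx hy, abs_mul, abs_of_nonneg hS]
    gcongr
    exact (hQ' i j).trans h.K_le_M
  gradient_le := by
    have := mul_le_mul_of_nonneg_right hp' (h.weightScale_nonneg hx hy)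
    rw [twoPointData, h.pow_mul_weightScale hx hy, ← mul_assoc]
    exact this

include h in
lemma exists_lt_of_mem (hx : x ∈ U) (hy : y ∈ U) (hvx : 0 < √(v x)) (hvy : 0 < √(v y))
    (hneg : twoPointFunction q v δ x y < 0)
    (hcmp : d * k / 2 * ((√(v x) + √(v y)) / 2) ^ 2 ≤ √(v x) * √(v y)) :
    ∃ x' ∈ U, ∃ y' ∈ U, twoPointFunction q v δ x' y' < twoPointFunction q v δ x y := by
  by_contra! hmin
  obtain ⟨p, Q, hq, hQ, hQ', hp, hp'⟩ := h.weight.exists_jet _ (h.midpoint_mem hx hy)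
  have hm : 0 < (√(v x) + √(v y)) / 2 := by positivity
  obtain ⟨hgx, hgy⟩ := h.mean_smul_gradient_sqrt_eq hx hy hvx hvy hq hmin
  have hX : gradient v x = (twoPointCriticalPair q v δ x y p).gradX := by
    rw [CriticalPair.gradX, ← hgx, smul_smul, smul_smul, mul_assoc 2, one_add_t_mul_mean hm,
      mul_inv_cancel₀ (by positivity), one_smul]
  have hY : gradient v y = (twoPointCriticalPair q v δ x y p).gradY := by
    rw [CriticalPair.gradY, ← hgy, smul_smul, smul_smul, mul_assoc 2, one_sub_t_mul_mean hm,
      mul_inv_cancel₀ (by positivity), one_smul]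
  have hZ : gradient v ((2 : ℝ)⁻¹ • (x + y)) = (twoPointCriticalPair q v δ x y p).gradMid := by
    rw [CriticalPair.gradMid, twoPointCriticalPair, smul_inv_smul₀ two_ne_zero, sub_add_cancel]
  refine (h.isPerturbative_twoPoint hx hy hvx hvy hneg hcmp hp hp' hQ
    hQ').not_forall_secondVariation_nonneg ((eq_inv_smul_iff₀ hm.ne').2 hgx)
    ((eq_inv_smul_iff₀ hm.ne').2 hgy) ?_ ?_ ?_
    (h.secondVariation_twoPointData_nonneg hx hy hvx hvy hq hmin)
  · rw [← hZ]
    exact h.solution.mcOp_eq _ (h.midpoint_mem hx hy)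
  · rw [← hX]
    exact (congrArg (· * _) (one_add_t_mul_mean hm)).trans
      (mul_mcOp_hessSqrt hvx (h.solution.mcOp_eq x hx))
  · rw [← hY]
    exact (congrArg (· * _) (one_sub_t_mul_mean hm)).trans
      (mul_mcOp_hessSqrt hvy (h.solution.mcOp_eq y hy))

end InteriorMinimum

end IsTwoPointSetting

namespace IsTwoPointSetting

variable {R L c t₀ K d k M δ σ : ℝ} {f q v : E2 → ℝ} {U : Set E2} {x y : E2}
  (h : IsTwoPointSetting f q v U R L c t₀ K d k M δ σ)

include h

lemma continuousOn_twoPointFunction :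
    ContinuousOn (fun p : E2 × E2 => twoPointFunction q v δ p.1 p.2)
      (closure U ×ˢ closure U) := by
  have hmid : MapsTo (fun p : E2 × E2 => (2 : ℝ)⁻¹ • (p.1 + p.2)) (closure U ×ˢ closure U)
      (closure U) := fun p hp => h.domain.midpoint_mem hp.1 hp.2
  have hmid_cont : ContinuousOn (fun p : E2 × E2 => (2 : ℝ)⁻¹ • (p.1 + p.2))
      (closure U ×ˢ closure U) := by fun_prop
  have hv := h.solution.continuousOn
  have hv_fst := hv.comp continuousOn_fst (fun _ hp => hp.1 : MapsTo _ (closure U ×ˢ closure U) _)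
  have hv_snd := hv.comp continuousOn_snd (fun _ hp => hp.2 : MapsTo _ (closure U ×ˢ closure U) _)
  have hq := h.weight.continuousOn.comp hmid_cont hmid
  exact ((hv.comp hmid_cont hmid).sub (((hv_fst.sqrt.add hv_snd.sqrt).div_const 2).pow 2)).sub
    ((hq.const_mul δ).mul (by fun_prop))

lemma mem_of_sqrt_pos (hx : x ∈ closure U) (hvx : 0 < √(v x)) : x ∈ U := by
  rcases closure_eq_self_union_frontier U ▸ hx with hxU | hxU
  · exact hxU
  · simp [h.solution.eq_zero x hxU] at hvx

lemma sqrt_pos_and_comparable_of_le (hx : x ∈ closure U) (hy : y ∈ closure U)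
    (hneg : twoPointFunction q v δ x y < 0)
    (hmin : ∀ y' ∈ closure U, twoPointFunction q v δ x y ≤ twoPointFunction q v δ x y')
    (hle : √(v y) ≤ √(v x)) : 0 < √(v x) ∧ 0 < √(v y) ∧
      d * k / 2 * ((√(v x) + √(v y)) / 2) ^ 2 ≤ √(v x) * √(v y) := by
  have hmean := h.mean_pos_of_twoPointFunction_neg hx hy hneg
  have hdk : 0 < d * k / 2 := half_pos (mul_pos h.d_pos h.k_pos)
  have hge := h.mul_sqrt_le_sqrt hx hy hneg hmin hle
  have hvx : 0 < √(v x) := by linarith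
  refine ⟨hvx, (mul_pos hdk hvx).trans_le hge, ?_⟩
  calc d * k / 2 * ((√(v x) + √(v y)) / 2) ^ 2 ≤ d * k / 2 * √(v x) ^ 2 := by
        gcongr
        linarith
    _ = √(v x) * (d * k / 2 * √(v x)) := by ring
    _ ≤ √(v x) * √(v y) := by gcongr

lemma twoPointFunction_nonneg (hx : x ∈ closure U) (hy : y ∈ closure U) :
    0 ≤ twoPointFunction q v δ x y := by
  refine le_of_isCompact_of_forall_isMinOn
    (h.domain.isCompact_closure.prod h.domain.isCompact_closure) h.continuousOn_twoPointFunction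
    (x := (x, y)) ?_ ⟨hx, hy⟩
  rintro ⟨x, y⟩ ⟨hx, hy⟩ hmin
  by_contra! hneg
  have hmin (x') (hx' : x' ∈ closure U) (y') (hy' : y' ∈ closure U) :
      twoPointFunction q v δ x y ≤ twoPointFunction q v δ x' y' := hmin (mk_mem_prod hx' hy')
  obtain ⟨hvx, hvy, hcmp⟩ : 0 < √(v x) ∧ 0 < √(v y) ∧
      d * k / 2 * ((√(v x) + √(v y)) / 2) ^ 2 ≤ √(v x) * √(v y) := by
    rcases le_total √(v y) √(v x) with hle | hle
    · exact h.sqrt_pos_and_comparable_of_le hx hy hneg (hmin x hx) hle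
    · rw [and_left_comm, add_comm √(v x), mul_comm √(v x)]
      refine h.sqrt_pos_and_comparable_of_le hy hx (by rwa [twoPointFunction_comm])
        (fun x' hx' => ?_) hle
      rw [twoPointFunction_comm, twoPointFunction_comm _ _ _ y]
      exact hmin x' hx' y hy
  obtain ⟨x', hx', y', hy', hlt⟩ := h.exists_lt_of_mem (h.mem_of_sqrt_pos hx hvx)
    (h.mem_of_sqrt_pos hy hvy) hvx hvy hneg hcmp
  exact hlt.not_ge (hmin x' (subset_closure hx') y' (subset_closure hy'))

lemma sq_mean_sqrt_add_le (hx : x ∈ closure U) (hy : y ∈ closure U) :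
    ((√(v x) + √(v y)) / 2) ^ 2 + δ * ‖x - y‖ ^ 2 ≤ v ((2 : ℝ)⁻¹ • (x + y)) := by
  have hnonneg := h.twoPointFunction_nonneg hx hy
  rw [twoPointFunction] at hnonneg
  have hδ : δ ≤ δ * q ((2 : ℝ)⁻¹ • (x + y)) :=
    le_mul_of_one_le_right h.δ_pos.le (h.weight.one_le _ (h.domain.midpoint_mem hx hy))
  have := mul_le_mul_of_nonneg_right hδ (sq_nonneg ‖x - y‖)
  linarith

end IsTwoPointSetting

lemma IsRescaledSolution.pos {f v : E2 → ℝ} {R L c t₀ σ : ℝ} {U : Set E2} {x : E2}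
    (hv : IsRescaledSolution U σ v) (hD : IsControlledDomain f R L c t₀ U) (hσ : 0 ≤ σ)
    (hσ1 : σ ≤ 1) (hx : x ∈ U) : 0 < v x := by
  have := neg_pos.2 (hD.neg x hx)
  have := hD.one_le_L
  exact (by positivity : 0 < (4 * L ^ 3)⁻¹ * -f x).trans_le
    (hv.inv_mul_neg_le hD hσ hσ1 (subset_closure hx))

theorem exists_forall_isRescaledSolution_midpoint_concave {R L c t₀ : ℝ} (hR : 0 ≤ R)
    (hL : 1 ≤ L) (hc : 0 < c) (ht : 0 < t₀) : ∃ ε > 0, ∃ δ > 0, ∀ f U,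
      IsControlledDomain f R L c t₀ U → ∀ σ, 0 ≤ σ → σ ≤ ε → ∀ v, IsRescaledSolution U σ v →
        (∀ x ∈ U, 0 < v x) ∧ ∀ x ∈ closure U, ∀ y ∈ closure U,
          ((√(v x) + √(v y)) / 2) ^ 2 + δ * ‖x - y‖ ^ 2 ≤ v ((2 : ℝ)⁻¹ • (x + y)) := by
  obtain ⟨K, hK, hweight⟩ := exists_isBoundaryWeight hR (zero_le_one.trans hL) hc
  obtain ⟨d, k, M, δ, ε, hε, hparam⟩ := exists_areTwoPointParameters (R := R) hL hc ht hK
  refine ⟨ε, hε, δ, (hparam 0 le_rfl hε.le).δ_pos, fun f U hD σ hσ hσε v hv => ?_⟩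
  obtain ⟨q, hq⟩ := hweight f t₀ U hD
  have h : IsTwoPointSetting f q v U R L c t₀ K d k M δ σ := ⟨hparam σ hσ hσε, hD, hq, hv⟩
  exact ⟨fun x hx => hv.pos hD hσ h.σ_le_one hx, fun x hx y hy => h.sq_mean_sqrt_add_le hx hy⟩

/-! ### Depth of chords in a domain with positively curved boundary -/

-- Finsler's lemma.
lemma exists_pos_forall_mul_norm_sq_le {E : Type*} [NormedAddCommGroup E] [NormedSpace ℝ E]
    [FiniteDimensional ℝ E] (B : E →L[ℝ] E →L[ℝ] ℝ) (l : E →L[ℝ] ℝ)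
    (hB : ∀ w, w ≠ 0 → l w = 0 → 0 < B w w) :
    ∃ A a : ℝ, 0 ≤ A ∧ 0 < a ∧ ∀ w, a * ‖w‖ ^ 2 ≤ B w w + A * l w ^ 2 := by
  have hcont (A : ℝ) : Continuous fun w => B w w + A * l w ^ 2 := by fun_prop
  have hcover : Metric.sphere (0 : E) 1 ⊆ ⋃ n : ℕ, {w | 0 < B w w + n * l w ^ 2} := by
    intro w hw
    have hw0 : w ≠ 0 := ne_zero_of_mem_unit_sphere ⟨w, hw⟩
    rw [mem_iUnion]
    by_cases hl : l w = 0
    · exact ⟨0, by simpa using hB w hw0 hl⟩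
    · obtain ⟨n, hn⟩ := exists_nat_gt (-B w w / l w ^ 2)
      rw [div_lt_iff₀ (by positivity)] at hn
      exact ⟨n, neg_lt_iff_pos_add'.1 hn⟩
  obtain ⟨n, hn⟩ := (isCompact_sphere (0 : E) 1).elim_directed_cover
    (fun n : ℕ => {w | 0 < B w w + n * l w ^ 2})
    (fun n => isOpen_lt continuous_const (hcont n)) hcover
    (directed_of_isDirected_le fun m n hmn w (hw : 0 < _) => mem_ofPred.2 <|
      hw.trans_le (by gcongr))
  obtain ⟨a, ha, hmin⟩ := (isCompact_sphere (0 : E) 1).exists_forall_le'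
    (hcont n).continuousOn hn
  refine ⟨n, a, n.cast_nonneg, ha, fun w => ?_⟩
  rcases eq_or_ne w 0 with rfl | hw
  · simp
  have hunit := hmin (‖w‖⁻¹ • w) (by simp [norm_smul, hw])
  have hscale : B (‖w‖⁻¹ • w) (‖w‖⁻¹ • w) + n * l (‖w‖⁻¹ • w) ^ 2 =
      (B w w + n * l w ^ 2) / ‖w‖ ^ 2 := by
    simp only [map_smul, smul_apply, smul_eq_mul]
    field_simp
  rwa [hscale, le_div_iff₀ (by positivity)] at hunit

-- Integrate the strong monotonicity of `g'` along the line through `z` in direction `w`.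
lemma mul_norm_sq_le_second_difference {E : Type*} [NormedAddCommGroup E] [NormedSpace ℝ E]
    {g : E → ℝ} {g' : E → E →L[ℝ] ℝ} {s : Set E} {a : ℝ} {z w : E} (hs : Convex ℝ s)
    (hg : ∀ x ∈ s, HasFDerivAt g (g' x) x)
    (hmono : ∀ x ∈ s, ∀ y ∈ s, a * ‖x - y‖ ^ 2 ≤ (g' x - g' y) (x - y)) (hadd : z + w ∈ s)
    (hsub : z - w ∈ s) : a * ‖w‖ ^ 2 ≤ g (z + w) + g (z - w) - 2 * g z := by
  have hmem (τ : ℝ) (hτ : τ ∈ Icc (-1) 1) : z + τ • w ∈ s := by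
    convert hs.add_smul_sub_mem hsub hadd (t := (1 + τ) / 2)
      ⟨by linarith [hτ.1], by linarith [hτ.2]⟩ using 1
    module
  have hline (τ : ℝ) (hτ : τ ∈ Icc (-1) 1) :
      HasDerivAt (fun τ : ℝ => g (z + τ • w)) (g' (z + τ • w) w) τ :=
    (hg _ (hmem τ hτ)).comp_hasDerivAt τ
      (by simpa using ((hasDerivAt_id τ).smul_const w).const_add z)
  have hpos (τ : ℝ) (hτ : τ ∈ Icc 0 1) : τ ∈ Icc (-1) 1 := ⟨by linarith [hτ.1], hτ.2⟩
  have hneg (τ : ℝ) (hτ : τ ∈ Icc 0 1) : -τ ∈ Icc (-1) 1 :=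
    ⟨by linarith [hτ.2], by linarith [hτ.1]⟩
  have hderiv (τ : ℝ) (hτ : τ ∈ Icc 0 1) :
      HasDerivAt (fun τ : ℝ => g (z + τ • w) + g (z + -τ • w) - a * ‖w‖ ^ 2 * τ ^ 2)
        ((g' (z + τ • w) - g' (z + -τ • w)) w - 2 * τ * (a * ‖w‖ ^ 2)) τ := by
    refine (((hline τ (hpos τ hτ)).add ((hline (-τ) (hneg τ hτ)).scomp τ
      (hasDerivAt_neg τ))).sub ((hasDerivAt_pow 2 τ).const_mul (a * ‖w‖ ^ 2))).congr_deriv ?_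
    simp only [sub_apply, smul_eq_mul, Nat.cast_ofNat]
    ring
  have hmonotone : MonotoneOn
      (fun τ : ℝ => g (z + τ • w) + g (z + -τ • w) - a * ‖w‖ ^ 2 * τ ^ 2) (Icc 0 1) := by
    refine monotoneOn_of_hasDerivWithinAt_nonneg (convex_Icc 0 1)
      (fun τ hτ => (hderiv τ hτ).continuousAt.continuousWithinAt)
      (fun τ hτ => (hderiv τ (interior_subset hτ)).hasDerivWithinAt) fun τ hτ => ?_
    rw [interior_Icc] at hτ
    have hτ' := Ioo_subset_Icc_self hτ
    have hdiff := hmono _ (hmem τ (hpos τ hτ')) _ (hmem (-τ) (hneg τ hτ'))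
    have hchord : z + τ • w - (z + -τ • w) = (2 * τ) • w := by module
    rw [hchord, norm_smul_of_nonneg (by linarith [hτ.1]), map_smul, smul_eq_mul] at hdiff
    have : 0 < 2 * τ := by linarith [hτ.1]
    nlinarith
  have := hmonotone (left_mem_Icc.2 zero_le_one) (right_mem_Icc.2 zero_le_one) zero_le_one
  simp only [one_smul, neg_smul, zero_smul, neg_zero, add_zero, ← sub_eq_add_neg] at this
  linarith

/-- `f` is a defining function of the bounded open set `{f < 0}`: its zero set is the boundary, and
the boundary is regular with positive curvature. -/
structure IsStrictlyConvexDefiningFunction (f : E2 → ℝ) : Prop where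
  contDiff : ContDiff ℝ 2 f
  frontier_eq : frontier {x | f x < 0} = {x | f x = 0}
  isBounded : Bornology.IsBounded {x | f x < 0}
  gradient_ne_zero : ∀ x, f x = 0 → gradient f x ≠ 0
  hess2_pos : ∀ x, f x = 0 → ∀ w, w ≠ 0 → ⟪w, gradient f x⟫ = 0 → 0 < hess2 f x w w

namespace IsStrictlyConvexDefiningFunction

variable {f : E2 → ℝ} {x x₀ y b : E2}

section Chords

variable (hf : IsStrictlyConvexDefiningFunction f)

include hf

lemma hasFDerivAt (x : E2) : HasFDerivAt f (fderiv ℝ f x) x :=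
  (hf.contDiff.differentiable (by norm_num) x).hasFDerivAt

-- The defining function `f + A f² / 2` of the same domain is strictly convex near `b`.
lemma exists_strongly_monotone (hb : f b = 0) : ∃ A a : ℝ, 0 ≤ A ∧ 0 < a ∧
    ∀ᶠ p in 𝓝 (b, b), a * ‖p.1 - p.2‖ ^ 2 ≤
      ((1 + A * f p.1) • fderiv ℝ f p.1 - (1 + A * f p.2) • fderiv ℝ f p.2) (p.1 - p.2) := by
  obtain ⟨A, a, hA, ha, hpos⟩ := exists_pos_forall_mul_norm_sq_le (fderiv ℝ (fderiv ℝ f) b)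
    (fderiv ℝ f b) fun w hw hl => by
      rw [← hess2_eq_fderiv_fderiv hf.contDiff.contDiffAt]
      exact hf.hess2_pos b hb w hw (by rw [real_inner_comm, inner_gradient, hl])
  have hfderiv : HasStrictFDerivAt (fderiv ℝ f) (fderiv ℝ (fderiv ℝ f) b) b :=
    (hf.contDiff.fderiv_right (m := 1) (by norm_num)).contDiffAt.hasStrictFDerivAt (by norm_num)
  have hfactor : HasStrictFDerivAt (fun x => 1 + A * f x) (A • fderiv ℝ f b) b :=
    ((hf.contDiff.contDiffAt.hasStrictFDerivAt (by norm_num)).const_mul A).const_add 1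
  refine ⟨A, a / 2, hA, half_pos ha, ?_⟩
  filter_upwards [(hfactor.smul hfderiv).isLittleO.def (half_pos ha)] with p hp
  obtain ⟨w, hw⟩ : ∃ w, w = p.1 - p.2 := ⟨_, rfl⟩
  rw [← hw] at hp ⊢
  have hw_pos := hpos w
  have hle := (ContinuousLinearMap.le_opNorm _ w).trans (mul_le_mul_of_nonneg_right hp
    (norm_nonneg w))
  simp only [hb, mul_zero, add_zero, one_smul, sub_apply, add_apply, smul_apply, smul_eq_mul,
    ContinuousLinearMap.smulRight_apply, Pi.smul_apply'] at hle ⊢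
  linarith [neg_le_of_abs_le hle]

lemma hasFDerivAt_add_mul_sq (A : ℝ) (x : E2) :
    HasFDerivAt (fun x => f x + A / 2 * f x ^ 2) ((1 + A * f x) • fderiv ℝ f x) x := by
  refine ((hf.hasFDerivAt x).add (((hf.hasFDerivAt x).pow 2).const_mul (A / 2))).congr_fderiv ?_
  simp only [smul_smul, add_smul, one_smul, nsmul_eq_mul, Nat.cast_ofNat]
  congr 2
  ring

lemma exists_pos_eventually_mul_norm_sq_le_neg_midpoint (hb : f b = 0) :
    ∃ c > 0, ∀ᶠ p : E2 × E2 in 𝓝 (b, b), f p.1 ≤ 0 → f p.2 ≤ 0 →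
      c * ‖p.1 - p.2‖ ^ 2 ≤ -f ((2 : ℝ)⁻¹ • (p.1 + p.2)) := by
  obtain ⟨A, a, hA, ha, hmono⟩ := hf.exists_strongly_monotone hb
  have hcont : Continuous fun p : E2 × E2 => 1 + A / 2 * f p.1 := by
    have := hf.contDiff.continuous
    fun_prop
  have hfactor : ∀ᶠ p : E2 × E2 in 𝓝 (b, b), 0 < 1 + A / 2 * f p.1 :=
    continuousAt_const.eventually_lt hcont.continuousAt (by simp [hb])
  obtain ⟨r, hr, hball⟩ := Metric.eventually_nhds_iff_ball.1 (hmono.and hfactor)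
  simp only [← ball_prod_same] at hball
  refine ⟨a / 8, by positivity, ?_⟩
  filter_upwards [prod_mem_nhds (Metric.ball_mem_nhds b hr) (Metric.ball_mem_nhds b hr)]
    with p hp hx hy
  obtain ⟨z, hz⟩ : ∃ z, z = (2 : ℝ)⁻¹ • (p.1 + p.2) := ⟨_, rfl⟩
  obtain ⟨w, hw⟩ : ∃ w, w = (2 : ℝ)⁻¹ • (p.1 - p.2) := ⟨_, rfl⟩
  have hadd : z + w = p.1 := by rw [hz, hw]; module
  have hsub : z - w = p.2 := by rw [hz, hw]; module
  have hchord : p.1 - p.2 = (2 : ℝ) • w := by rw [hw]; module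
  have hzb : z ∈ Metric.ball b r := by
    rw [hz, smul_add]
    exact convex_ball b r hp.1 hp.2 (by norm_num) (by norm_num) (by norm_num)
  have hdepth := mul_norm_sq_le_second_difference (convex_ball b r)
    (fun x _ => hf.hasFDerivAt_add_mul_sq A x)
    (fun x hx y hy => (hball (x, y) ⟨hx, hy⟩).1) (hadd ▸ hp.1) (hsub ▸ hp.2)
  have hx_factor := (hball p hp).2
  have hy_factor := (hball (p.2, z) ⟨hp.2, hzb⟩).2
  have hz_factor := (hball (z, z) ⟨hzb, hzb⟩).2
  rw [hadd, hsub] at hdepth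
  rw [← hz, hchord, norm_smul, Real.norm_of_nonneg zero_le_two]
  have hdepth_z : a / 2 * ‖w‖ ^ 2 ≤ -f z * (1 + A / 2 * f z) := by
    nlinarith only [hdepth, mul_nonneg (neg_nonneg.2 hx) hx_factor.le,
      mul_nonneg (neg_nonneg.2 hy) hy_factor.le]
  have : 0 ≤ -f z := nonneg_of_mul_nonneg_left (le_trans (by positivity) hdepth_z)
    hz_factor
  nlinarith only [hdepth_z, mul_nonneg hA (sq_nonneg (f z))]

lemma not_eventually_nonpos_of_eq_zero {z w : E2} (hz : f z = 0) (hw : w ≠ 0) :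
    ¬ ∀ᶠ τ : ℝ in 𝓝 0, f (z + τ • w) ≤ 0 := fun hle => by
  obtain ⟨c, hc, hdepth⟩ := hf.exists_pos_eventually_mul_norm_sq_le_neg_midpoint hz
  have hchord : Tendsto (fun τ : ℝ => (z + τ • w, z + -τ • w)) (𝓝 0) (𝓝 (z, z)) :=
    Continuous.tendsto' (by fun_prop) _ _ (by simp)
  have hle_neg : ∀ᶠ τ : ℝ in 𝓝 0, f (z + -τ • w) ≤ 0 :=
    (Continuous.tendsto' continuous_neg _ _ neg_zero).eventually hle
  obtain ⟨τ, ⟨hτ, hle, hle_neg⟩, hτ0⟩ := (((hchord.eventually hdepth).and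
    (hle.and hle_neg)).filter_mono nhdsWithin_le_nhds |>.and
      (eventually_mem_nhdsWithin (s := {0}ᶜ))).exists
  have hmid : (2 : ℝ)⁻¹ • (z + τ • w + (z + -τ • w)) = z := by module
  have hdiff : z + τ • w - (z + -τ • w) = (2 * τ) • w := by module
  have hτ := hτ hle hle_neg
  rw [hmid, hdiff, hz, neg_zero] at hτ
  have : (2 * τ) • w ≠ 0 := smul_ne_zero (mul_ne_zero two_ne_zero hτ0) hw
  exact hτ.not_gt (by positivity)

lemma neg_of_chord_nonpos (hxy : x ≠ y) (hchord : ∀ t ∈ Icc (0 : ℝ) 1, f (x + t • (y - x)) ≤ 0)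
    {t : ℝ} (ht : t ∈ Ioo 0 1) : f (x + t • (y - x)) < 0 := by
  refine (hchord t (Ioo_subset_Icc_self ht)).lt_of_ne fun h => ?_
  refine hf.not_eventually_nonpos_of_eq_zero h (sub_ne_zero.2 hxy.symm) ?_
  have hmem : ∀ᶠ τ : ℝ in 𝓝 0, t + τ ∈ Ioo (0 : ℝ) 1 :=
    (by fun_prop : ContinuousAt (fun τ : ℝ => t + τ) 0).eventually_mem
      (by simpa using Ioo_mem_nhds ht.1 ht.2)
  filter_upwards [hmem] with τ hτ
  rw [add_assoc, ← add_smul]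
  exact hchord _ (Ioo_subset_Icc_self hτ)

lemma isOpen : IsOpen {x | f x < 0} := isOpen_lt hf.contDiff.continuous continuous_const

lemma closure_eq : closure {x | f x < 0} = {x | f x ≤ 0} := by
  rw [closure_eq_self_union_frontier, hf.frontier_eq]
  ext x
  exact (le_iff_lt_or_eq (a := f x) (b := 0)).symm

lemma isCompact : IsCompact {x | f x ≤ 0} := hf.closure_eq ▸ hf.isBounded.isCompact_closure

lemma nonpos_of_mem_closure (hx : x ∈ closure (connectedComponentIn {x | f x < 0} x₀)) :
    f x ≤ 0 :=
  hf.closure_eq.subset (closure_mono (connectedComponentIn_subset _ x₀) hx)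

-- The set of `y` such that the chord from `x` to `y` stays in `{f < 0}` is open, and relatively
-- closed in the component because a chord in `{f ≤ 0}` cannot touch the boundary.
lemma convex_connectedComponentIn (x₀ : E2) :
    Convex ℝ (connectedComponentIn {x | f x < 0} x₀) := by
  have hfc := hf.contDiff.continuous
  have hsub := connectedComponentIn_subset {x | f x < 0} x₀
  rw [convex_iff_segment_subset]
  intro x hx y hy
  have hvisible : connectedComponentIn {x | f x < 0} x₀ ⊆
      {y | ∀ t ∈ Icc (0 : ℝ) 1, f (x + t • (y - x)) < 0} := by
    refine isPreconnected_connectedComponentIn.subset_of_closure_inter_subset ?_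
      ⟨x, hx, fun t _ => by simpa using hsub hx⟩ ?_
    · rw [isOpen_iff_mem_nhds]
      intro y hy
      refine isCompact_Icc.eventually_forall_of_forall_eventually
        (P := fun y t => f (x + t • (y - x)) < 0) fun t ht => ?_
      exact (by fun_prop : Continuous fun p : E2 × ℝ => f (x + p.2 • (p.1 - x))).continuousAt
        |>.eventually_lt continuousAt_const (hy t ht)
    · rintro y ⟨hy, hyU⟩ t ht
      have hle (t : ℝ) (ht : t ∈ Icc (0 : ℝ) 1) : f (x + t • (y - x)) ≤ 0 :=
        closure_minimal (t := {y | f (x + t • (y - x)) ≤ 0}) (fun y hy => (hy t ht).le)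
          (isClosed_le (by fun_prop) continuous_const) hy
      rcases eq_or_ne x y with rfl | hxy
      · simpa using hsub hx
      rcases ht.1.eq_or_lt with rfl | ht0
      · simpa using hsub hx
      rcases ht.2.eq_or_lt with rfl | ht1
      · simpa using hsub hyU
      exact hf.neg_of_chord_nonpos hxy hle ⟨ht0, ht1⟩
  have hsegment : segment ℝ x y ⊆ {x | f x < 0} := by
    rw [segment_eq_image']
    rintro _ ⟨t, ht, rfl⟩
    exact hvisible hy t ht
  rw [connectedComponentIn_eq hx]
  exact (convex_segment x y).isPreconnected.subset_connectedComponentIn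
    (left_mem_segment ℝ x y) hsegment

lemma eq_zero_of_mem_frontier (hx : x ∈ frontier (connectedComponentIn {x | f x < 0} x₀)) :
    f x = 0 := by
  refine (hf.nonpos_of_mem_closure hx.1).antisymm (not_lt.1 fun hneg => ?_)
  obtain ⟨y, hy, hy₀⟩ := mem_closure_iff.1 hx.1 _ hf.isOpen.connectedComponentIn
    (mem_connectedComponentIn (show x ∈ {x | f x < 0} from hneg))
  rw [hf.isOpen.connectedComponentIn.frontier_eq] at hx
  refine hx.2 ?_
  rw [connectedComponentIn_eq hy₀, ← connectedComponentIn_eq hy]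
  exact mem_connectedComponentIn hneg

lemma exists_pos_eventually_midpoint_of_chord
    (hchord : ∀ t ∈ Icc (0 : ℝ) 1, f (x + t • (y - x)) ≤ 0) :
    ∃ c > 0, ∀ᶠ p in 𝓝 (x, y), f p.1 ≤ 0 → f p.2 ≤ 0 →
      c * ‖p.1 - p.2‖ ^ 2 ≤ -f ((2 : ℝ)⁻¹ • (p.1 + p.2)) := by
  have hfc := hf.contDiff.continuous
  rcases lt_or_ge (f ((2 : ℝ)⁻¹ • (x + y))) 0 with hneg | hnonneg
  · obtain ⟨c, hc, hlt⟩ := exists_pos_mul_lt (neg_pos.2 hneg) (‖x - y‖ ^ 2)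
    rw [mul_comm] at hlt
    refine ⟨c, hc, ?_⟩
    have hcont : Continuous fun p : E2 × E2 => c * ‖p.1 - p.2‖ ^ 2 := by fun_prop
    filter_upwards [hcont.continuousAt.eventually_lt (x₀ := (x, y))
      (by fun_prop : Continuous fun p : E2 × E2 => -f ((2 : ℝ)⁻¹ • (p.1 + p.2))).continuousAt hlt]
      with p hp _ _ using hp.le
  · obtain rfl : x = y := by
      by_contra hxy
      refine (hf.neg_of_chord_nonpos hxy hchord (t := 2⁻¹) ⟨by norm_num, by norm_num⟩).not_ge ?_
      convert hnonneg using 2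
      module
    refine hf.exists_pos_eventually_mul_norm_sq_le_neg_midpoint ?_
    have hx := hchord 0 (by simp)
    have hmid : (2 : ℝ)⁻¹ • (x + x) = x := by module
    rw [hmid] at hnonneg
    exact le_antisymm (by simpa using hx) hnonneg

lemma exists_pos_forall_mul_norm_sq_le_neg_midpoint : ∃ c > 0, ∀ x y : E2,
    (∀ t ∈ Icc (0 : ℝ) 1, f (x + t • (y - x)) ≤ 0) →
      c * ‖x - y‖ ^ 2 ≤ -f ((2 : ℝ)⁻¹ • (x + y)) := by
  have hfc := hf.contDiff.continuous
  set K : Set (E2 × E2) := ⋂ t ∈ Icc (0 : ℝ) 1, {p | f (p.1 + t • (p.2 - p.1)) ≤ 0} with hK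
  have hKmem (p : E2 × E2) : p ∈ K ↔ ∀ t ∈ Icc (0 : ℝ) 1, f (p.1 + t • (p.2 - p.1)) ≤ 0 := by
    simp [hK]
  have hends (p : E2 × E2) (hp : p ∈ K) : f p.1 ≤ 0 ∧ f p.2 ≤ 0 :=
    ⟨by simpa using (hKmem p).1 hp 0 (by simp), by simpa using (hKmem p).1 hp 1 (by simp)⟩
  have hcompact : IsCompact K := (hf.isCompact.prod hf.isCompact).of_isClosed_subset
    (isClosed_biInter fun t _ => isClosed_le (by fun_prop) continuous_const) hends
  obtain ⟨c, hc, hdepth⟩ : ∃ c > 0, ∀ p ∈ K,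
      c * ‖p.1 - p.2‖ ^ 2 ≤ -f ((2 : ℝ)⁻¹ • (p.1 + p.2)) := by
    refine hcompact.induction_on (p := fun S => ∃ c > 0, ∀ p ∈ S,
      c * ‖p.1 - p.2‖ ^ 2 ≤ -f ((2 : ℝ)⁻¹ • (p.1 + p.2))) ⟨1, one_pos, by simp⟩ ?_ ?_ ?_
    · rintro S T hST ⟨c, hc, hT⟩
      exact ⟨c, hc, fun p hp => hT p (hST hp)⟩
    · rintro S T ⟨c, hc, hS⟩ ⟨d, hd, hT⟩
      refine ⟨min c d, lt_min hc hd, ?_⟩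
      rintro p (hp | hp)
      · exact le_trans (by gcongr; exact min_le_left _ _) (hS p hp)
      · exact le_trans (by gcongr; exact min_le_right _ _) (hT p hp)
    · intro p hp
      obtain ⟨c, hc, hnear⟩ := hf.exists_pos_eventually_midpoint_of_chord ((hKmem p).1 hp)
      refine ⟨_, inter_mem (mem_nhdsWithin_of_mem_nhds hnear) self_mem_nhdsWithin, c, hc, ?_⟩
      rintro q ⟨hq, hqK⟩
      exact hq (hends q hqK).1 (hends q hqK).2
  exact ⟨c, hc, fun x y hxy => hdepth (x, y) ((hKmem _).2 hxy)⟩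

end Chords

end IsStrictlyConvexDefiningFunction

lemma sub_smul_gradient_le {E : Type*} [NormedAddCommGroup E] [InnerProductSpace ℝ E]
    [CompleteSpace E] {f : E → ℝ} {s : Set E} {y : E} {L t : ℝ} (hs : Convex ℝ s)
    (hf : ∀ x ∈ s, DifferentiableAt ℝ f x)
    (hlip : ∀ x ∈ s, ‖fderiv ℝ f x - fderiv ℝ f y‖ ≤ L * ‖x - y‖) (hy : y ∈ s)
    (hy' : y - t • gradient f y ∈ s) (hL : 0 ≤ L) (ht : 0 ≤ t) (hLt : 2 * L * t ≤ 1) :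
    f (y - t • gradient f y) ≤ f y - t / 2 * ‖gradient f y‖ ^ 2 := by
  have hsegment := hs.segment_subset hy hy'
  have hstep : ‖y - t • gradient f y - y‖ = t * ‖gradient f y‖ := by
    rw [sub_sub_cancel_left, norm_neg, norm_smul, Real.norm_of_nonneg ht]
  have hderiv (x : E) (hx : x ∈ segment ℝ y (y - t • gradient f y)) :
      ‖fderiv ℝ f x - fderiv ℝ f y‖ ≤ L * (t * ‖gradient f y‖) := by
    refine (hlip x (hsegment hx)).trans (mul_le_mul_of_nonneg_left ?_ hL)
    rw [← hstep, ← dist_eq_norm, ← dist_eq_norm, dist_comm (y - t • gradient f y)]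
    exact segment_subset_closedBall_left _ _ hx
  have htaylor := (convex_segment y (y - t • gradient f y)).norm_image_sub_le_of_norm_fderiv_le'
    (fun x hx => hf x (hsegment hx)) hderiv (left_mem_segment ℝ _ _) (right_mem_segment ℝ _ _)
  have hslope : fderiv ℝ f y (y - t • gradient f y - y) = -(t * ‖gradient f y‖ ^ 2) := by
    rw [sub_sub_cancel_left, map_neg, map_smul, ← InnerProductSpace.toDual_symm_apply,
      ← gradient, real_inner_self_eq_norm_sq, smul_eq_mul]
  rw [hslope, hstep, Real.norm_eq_abs] at htaylor
  nlinarith only [(abs_le.1 htaylor).2,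
    mul_le_mul_of_nonneg_right hLt (mul_nonneg ht (sq_nonneg ‖gradient f y‖))]

/-- `R` bounds the domain `{f < 0}`, and `L` bounds `f` and its derivatives up to order two at
distance at most one from it. -/
structure HasC2Bounds (f : E2 → ℝ) (R L : ℝ) : Prop where
  one_le_R : 1 ≤ R
  one_le_L : 1 ≤ L
  norm_le : ∀ x, f x ≤ 0 → ‖x‖ ≤ R
  abs_le : ∀ x ∈ Metric.closedBall 0 (R + 1), |f x| ≤ L
  norm_fderiv_le : ∀ x ∈ Metric.closedBall 0 (R + 1), ‖fderiv ℝ f x‖ ≤ L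
  norm_fderiv_fderiv_le : ∀ x ∈ Metric.closedBall 0 (R + 1), ‖fderiv ℝ (fderiv ℝ f) x‖ ≤ L

namespace HasC2Bounds

variable {f : E2 → ℝ} {R L t : ℝ} {x y : E2}

lemma mem_closedBall (hb : HasC2Bounds f R L) (hx : f x ≤ 0) :
    x ∈ Metric.closedBall 0 (R + 1) := by
  rw [mem_closedBall_zero_iff]
  linarith [hb.norm_le x hx]

lemma norm_gradient_le (hb : HasC2Bounds f R L) (hx : f x ≤ 0) : ‖gradient f x‖ ≤ L := by
  simpa [gradient] using hb.norm_fderiv_le x (hb.mem_closedBall hx)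

lemma abs_hessMatrix_le (hb : HasC2Bounds f R L) (hf : ContDiff ℝ 2 f) (hx : f x ≤ 0)
    (i j : Fin 2) : |hessMatrix f x i j| ≤ L := by
  have hnorm (i : Fin 2) : ‖e2 i‖ = 1 := by simp [e2]
  have hop := (fderiv ℝ (fderiv ℝ f) x).le_opNorm₂ (e2 i) (e2 j)
  rw [hnorm, hnorm, mul_one, mul_one, ← hess2_eq_fderiv_fderiv hf.contDiffAt] at hop
  exact hop.trans (hb.norm_fderiv_fderiv_le x (hb.mem_closedBall hx))

lemma sub_smul_gradient_le (hb : HasC2Bounds f R L) (hf : ContDiff ℝ 2 f) (hy : f y ≤ 0)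
    (ht : 0 ≤ t) (hLt : 2 * L * t ≤ 1) :
    f (y - t • gradient f y) ≤ f y - t / 2 * ‖gradient f y‖ ^ 2 := by
  have hL := zero_le_one.trans hb.one_le_L
  have hstep : ‖t • gradient f y‖ ≤ 1 := by
    rw [norm_smul, Real.norm_of_nonneg ht]
    nlinarith only [mul_le_mul_of_nonneg_left (hb.norm_gradient_le hy) ht, hLt, hL, ht]
  refine _root_.sub_smul_gradient_le (L := L) (convex_closedBall 0 (R + 1))
    (fun x _ => hf.differentiable (by norm_num) x) (fun x hx => ?_) (hb.mem_closedBall hy) ?_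
    hL ht hLt
  · exact (convex_closedBall 0 (R + 1)).norm_image_sub_le_of_norm_fderiv_le
      (fun x _ => (hf.fderiv_right (m := 1) (by norm_num)).differentiable (by norm_num) x)
      hb.norm_fderiv_fderiv_le (hb.mem_closedBall hy) hx
  · rw [mem_closedBall_zero_iff]
    exact (norm_sub_le _ _).trans (add_le_add (hb.norm_le y hy) hstep)

end HasC2Bounds

namespace IsStrictlyConvexDefiningFunction

variable {f : E2 → ℝ} {x x₀ y : E2}

section Constants

variable (hf : IsStrictlyConvexDefiningFunction f)

include hf

lemma exists_hasC2Bounds : ∃ R L, HasC2Bounds f R L := by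
  have hfc := hf.contDiff.continuous
  have hf' := hf.contDiff.continuous_fderiv (by norm_num)
  have hf'' := (hf.contDiff.fderiv_right (m := 1) (by norm_num)).continuous_fderiv (by norm_num)
  obtain ⟨R, hR⟩ := hf.isCompact.exists_bound_of_continuousOn (f := id) continuousOn_id
  obtain ⟨L, hL⟩ := (isCompact_closedBall (0 : E2) (max 1 R + 1)).exists_bound_of_continuousOn
    (f := fun x => (f x, fderiv ℝ f x, fderiv ℝ (fderiv ℝ f) x)) (by fun_prop)
  have hL' (x : E2) (hx : x ∈ Metric.closedBall 0 (max 1 R + 1)) : |f x| ≤ max 1 L ∧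
      ‖fderiv ℝ f x‖ ≤ max 1 L ∧ ‖fderiv ℝ (fderiv ℝ f) x‖ ≤ max 1 L := by
    simpa only [norm_prod_le_iff, Real.norm_eq_abs] using (hL x hx).trans (le_max_right 1 L)
  exact ⟨max 1 R, max 1 L, le_max_left _ _, le_max_left _ _,
    fun x hx => (hR x hx).trans (le_max_right _ _), fun x hx => (hL' x hx).1,
    fun x hx => (hL' x hx).2.1, fun x hx => (hL' x hx).2.2⟩

lemma exists_pos_forall_le_neg_add_norm_gradient_sq :
    ∃ c > 0, ∀ x, f x ≤ 0 → c ≤ -f x + ‖gradient f x‖ ^ 2 := by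
  have hfc := hf.contDiff.continuous
  have hf' := hf.contDiff.continuous_fderiv (by norm_num)
  refine hf.isCompact.exists_forall_le' (f := fun x => -f x + ‖gradient f x‖ ^ 2)
    (Continuous.continuousOn (by unfold gradient; fun_prop)) fun x hx => ?_
  rcases (show f x ≤ 0 from hx).lt_or_eq with hneg | hzero
  · have := neg_pos.2 hneg
    positivity
  · have := hf.gradient_ne_zero x hzero
    rw [hzero, neg_zero, zero_add]
    positivity

-- Gradient descent decreases `f`, so it stays in the component.
lemma sub_smul_gradient_mem_closure {R L t : ℝ} (hb : HasC2Bounds f R L) (ht : 0 ≤ t)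
    (hLt : 2 * L * t ≤ 1) (hy : y ∈ closure (connectedComponentIn {x | f x < 0} x₀)) :
    y - t • gradient f y ∈ closure (connectedComponentIn {x | f x < 0} x₀) := by
  have hf' := hf.contDiff.continuous_fderiv (by norm_num)
  have hL := zero_le_one.trans hb.one_le_L
  refine map_mem_closure (f := fun y => y - t • gradient f y) (by unfold gradient; fun_prop) hy
    fun y hy => ?_
  have hneg : f y < 0 := connectedComponentIn_subset _ x₀ hy
  have hpath : (fun s : ℝ => y - s • gradient f y) '' Icc 0 t ⊆
      connectedComponentIn {x | f x < 0} y := by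
    refine (isPreconnected_Icc.image _ (by fun_prop)).subset_connectedComponentIn
      ⟨0, left_mem_Icc.2 ht, by simp⟩ ?_
    rintro _ ⟨s, hs, rfl⟩
    have hdescent := hb.sub_smul_gradient_le hf.contDiff hneg.le hs.1
      ((mul_le_mul_of_nonneg_left hs.2 (by positivity)).trans hLt)
    have := mul_nonneg (half_pos (α := ℝ) one_pos).le (mul_nonneg hs.1 (sq_nonneg ‖gradient f y‖))
    rw [mem_ofPred_eq]
    linarith
  rw [connectedComponentIn_eq hy]
  exact hpath ⟨t, right_mem_Icc.2 ht, rfl⟩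

theorem exists_isControlledDomain : ∃ R L c t₀ : ℝ, 0 ≤ R ∧ 1 ≤ L ∧ 0 < c ∧ 0 < t₀ ∧
    ∀ x₀, IsControlledDomain f R L c t₀ (connectedComponentIn {x | f x < 0} x₀) := by
  obtain ⟨R, L, hb⟩ := hf.exists_hasC2Bounds
  obtain ⟨c₁, hc₁, hgradient⟩ := hf.exists_pos_forall_le_neg_add_norm_gradient_sq
  obtain ⟨c₂, hc₂, hmid⟩ := hf.exists_pos_forall_mul_norm_sq_le_neg_midpoint
  have hL : 0 < L := zero_lt_one.trans_le hb.one_le_L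
  obtain ⟨c, hc, hc₁', hc₂', hc_one⟩ : ∃ c > 0, c ≤ c₁ / 2 ∧ c ≤ c₂ ∧ c ≤ 1 :=
    ⟨min (c₁ / 2) (min c₂ 1), by positivity, min_le_left _ _,
      (min_le_right _ _).trans (min_le_left _ _), (min_le_right _ _).trans (min_le_right _ _)⟩
  refine ⟨R, L, c, 1 / (2 * L), zero_le_one.trans hb.one_le_R, hb.one_le_L, hc, by positivity,
    fun x₀ => ?_⟩
  have hcl (x : E2) (hx : x ∈ closure (connectedComponentIn {x | f x < 0} x₀)) : f x ≤ 0 :=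
    hf.nonpos_of_mem_closure hx
  have hconvex := hf.convex_connectedComponentIn x₀
  refine ⟨hb.one_le_R, hb.one_le_L, hc, hc_one, hf.isOpen.connectedComponentIn,
    hconvex, fun x hx => hb.norm_le x (hcl x hx), hf.contDiff,
    fun x hx => connectedComponentIn_subset _ x₀ hx, fun x hx => hf.eq_zero_of_mem_frontier hx,
    fun x hx => (neg_le_abs _).trans (hb.abs_le x (hb.mem_closedBall (hcl x hx))),
    fun x hx => hb.norm_gradient_le (hcl x hx),
    fun x hx => hb.abs_hessMatrix_le hf.contDiff (hcl x hx),
    fun x hx => by linarith [hgradient x (hcl x hx)], fun x hx y hy => ?_, fun y hy t ht ht₀ => ?_⟩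
  · exact le_trans (by gcongr) (hmid x y fun t ht =>
      hcl _ (hconvex.closure.add_smul_sub_mem hx hy ht))
  · have hLt : 2 * L * t ≤ 1 := by rwa [le_div_iff₀ (by positivity), mul_comm] at ht₀
    refine ⟨_, hf.sub_smul_gradient_mem_closure hb ht hLt hy, ?_, ?_⟩
    · rw [sub_sub_cancel_left, norm_neg, norm_smul, Real.norm_of_nonneg ht, mul_comm]
      gcongr
      exact hb.norm_gradient_le (hcl y hy)
    · have hdescent := hb.sub_smul_gradient_le hf.contDiff (hcl y hy) ht hLt
      have ht_one : t ≤ 1 := by nlinarith only [hLt, hb.one_le_L, ht]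
      nlinarith only [hdescent, ht_one, hcl y hy, mul_le_mul_of_nonneg_right hc₁' ht,
        mul_le_mul_of_nonneg_left (hgradient y (hcl y hy)) ht]

end Constants

end IsStrictlyConvexDefiningFunction

/-! ### Passage to the solutions of problem (*) -/

lemma fderiv_const_mul_apply {E : Type*} [NormedAddCommGroup E] [NormedSpace ℝ E] (c : ℝ)
    (u : E → ℝ) (x ζ : E) : fderiv ℝ (fun y => c * u y) x ζ = c * fderiv ℝ u x ζ :=
  DFunLike.congr_fun (congrFun (fderiv_const_smul_field (f := u) c) x) ζ

lemma hess2_const_mul (c : ℝ) (u : E2 → ℝ) (x ξ η : E2) :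
    hess2 (fun y => c * u y) x ξ η = c * hess2 u x ξ η := by
  simp only [hess2, fderiv_const_mul_apply]

lemma hessMatrix_const_mul (c : ℝ) (u : E2 → ℝ) (x : E2) :
    hessMatrix (fun y => c * u y) x = c • hessMatrix u x := by
  ext i j
  simp [hessMatrix, hess2_const_mul]

lemma gradient_const_mul (c : ℝ) (u : E2 → ℝ) (x : E2) :
    gradient (fun y => c * u y) x = c • gradient u x := by
  refine ext_inner_right ℝ fun ζ => ?_
  rw [real_inner_smul_left, inner_gradient, inner_gradient,
    fderiv_const_mul_apply]

lemma areaFactor_sq_inv_smul {h : ℝ} (hh : h ≠ 0) (p : E2) :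
    areaFactor (h ^ 2) (h⁻¹ • p) = areaFactor 1 p := by
  simp only [areaFactor, norm_smul, mul_pow, norm_inv, inv_pow, Real.norm_eq_abs, sq_abs]
  field_simp

lemma mcOp_sq_inv_smul {h : ℝ} (hh : h ≠ 0) (p : E2) (A : Matrix (Fin 2) (Fin 2) ℝ) :
    mcOp (h ^ 2) (h⁻¹ • p) A = mcOp 1 p A := by
  simp only [mcOp_eq, PiLp.smul_apply, smul_eq_mul]
  field_simp

lemma SolvesStar.isRescaledSolution {Ω U : Set E2} {u : E2 → ℝ} {h : ℝ}
    (hu : SolvesStar Ω (-h) u) (hh : h ≠ 0) (hΩ : IsOpen Ω) (hU : U ⊆ Ω)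
    (hfrontier : frontier U ⊆ frontier Ω) : IsRescaledSolution U (h ^ 2) (fun x => h⁻¹ * u x) := by
  obtain ⟨hsmooth, hcont, hpde, hzero⟩ := hu
  refine ⟨contDiffOn_const.mul (hsmooth.mono hU),
    continuousOn_const.mul (hcont.mono (closure_mono hU)),
    fun x hx => by rw [hzero x (hfrontier hx), mul_zero], fun x hx => ?_⟩
  have hux : ContDiffAt ℝ 2 u x := hsmooth.contDiffAt (hΩ.mem_nhds (hU hx))
  rw [gradient_const_mul, hessMatrix_const_mul, mcOp_smul, mcOp_sq_inv_smul hh,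
    areaFactor_sq_inv_smul hh, mcOp_eq_mcDiv_mul hux, hpde x (hU hx)]
  field_simp

lemma hess2_self_neg_of_midpoint {g : E2 → ℝ} {x w : E2} {δ : ℝ} (hg : ContDiffAt ℝ 2 g x)
    (hgx : 0 < g x) (hδ : 0 < δ)
    (hmid : ∀ᶠ τ : ℝ in 𝓝 0,
      ((g (x + τ • w) + g (x + τ • -w)) / 2) ^ 2 + δ * τ ^ 2 ≤ g x ^ 2) :
    hess2 g x w w < 0 := by
  have hjet := hasSecondOrderJet_of_contDiffAt hg
  have hmean := ((hjet w).add (hjet (-w))).const_mul (1 / 2)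
  have hgap := ((hmean.mul hmean).add (.quadratic 0 0 δ)).const_mul (-1)
  have hcoeff := hgap.nonneg_of_isLocalMin (by
    filter_upwards [hmid] with τ hτ
    simp only [zero_smul, add_zero]
    linarith)
  rw [← quadForm_hessMatrix hg]
  rw [← neg_one_smul ℝ w, quadForm_vec_smul, real_inner_smul_right] at hcoeff
  refine neg_of_mul_neg_right (a := g x) ?_ hgx.le
  linarith

lemma hess2_sqrt_self_neg_of_midpoint {U : Set E2} {u : E2 → ℝ} {x w : E2} {c : ℝ}
    (hU : IsOpen U) (hxU : x ∈ U) (hu : ContDiffAt ℝ 2 u x) (hux : 0 < u x) (hc : 0 < c)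
    (hw : w ≠ 0) (hmid : ∀ y ∈ U, ∀ z ∈ U,
      ((√(u y) + √(u z)) / 2) ^ 2 + c * ‖y - z‖ ^ 2 ≤ u ((2 : ℝ)⁻¹ • (y + z))) :
    hess2 (fun y => √(u y)) x w w < 0 := by
  refine hess2_self_neg_of_midpoint (hu.sqrt hux.ne') (Real.sqrt_pos.2 hux)
    (by positivity : 0 < 4 * c * ‖w‖ ^ 2) ?_
  have hline (e : E2) : ∀ᶠ τ : ℝ in 𝓝 0, x + τ • e ∈ U :=
    (Continuous.tendsto' (by fun_prop) _ _ (by simp)).eventually_mem (hU.mem_nhds hxU)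
  filter_upwards [hline w, hline (-w)] with τ hτ hτ'
  have hmid_eq : (2 : ℝ)⁻¹ • (x + τ • w + (x + τ • -w)) = x := by module
  have hdiff : x + τ • w - (x + τ • -w) = (2 * τ) • w := by module
  have := hmid _ hτ _ hτ'
  rw [hmid_eq, hdiff, norm_smul, mul_pow, Real.norm_eq_abs, sq_abs] at this
  rw [Real.sq_sqrt hux.le]
  linarith

namespace IsStrictlyConvexDefiningFunction

variable {f : E2 → ℝ}

theorem exists_forall_solvesStar_midpoint_concave (hf : IsStrictlyConvexDefiningFunction f) :
    ∃ ε > 0, ∃ δ > 0, ∀ h, 0 < h → h < ε → ∀ u, SolvesStar {x | f x < 0} (-h) u → ∀ x₀,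
      (∀ x ∈ connectedComponentIn {x | f x < 0} x₀, 0 < u x) ∧
      ∀ x ∈ connectedComponentIn {x | f x < 0} x₀, ∀ y ∈ connectedComponentIn {x | f x < 0} x₀,
        ((√(u x) + √(u y)) / 2) ^ 2 + h * δ * ‖x - y‖ ^ 2 ≤ u ((2 : ℝ)⁻¹ • (x + y)) := by
  obtain ⟨R, L, c, t₀, hR, hL, hc, ht₀, hD⟩ := hf.exists_isControlledDomain
  obtain ⟨ε, hε, δ, hδ, hconcave⟩ := exists_forall_isRescaledSolution_midpoint_concave hR hL hc ht₀
  refine ⟨min ε 1, by positivity, δ, hδ, fun h hh hhε u hu x₀ => ?_⟩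
  have hσ : h ^ 2 ≤ ε := by
    nlinarith only [hh, hhε.trans_le (min_le_left ε 1), hhε.trans_le (min_le_right ε 1)]
  have hv := hu.isRescaledSolution hh.ne' hf.isOpen (connectedComponentIn_subset _ x₀)
    fun x hx => hf.frontier_eq.symm.subset (hf.eq_zero_of_mem_frontier hx)
  obtain ⟨hpos, hmid⟩ := hconcave f _ (hD x₀) (h ^ 2) (sq_nonneg h) hσ _ hv
  refine ⟨fun x hx => pos_of_mul_pos_right (hpos x hx) (by positivity), fun x hx y hy => ?_⟩
  have hrescaled := hmid x (subset_closure hx) y (subset_closure hy)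
  have hsqrt (x : E2) : √(h⁻¹ * u x) = √h⁻¹ * √(u x) := Real.sqrt_mul (by positivity) _
  have hmean : ((√h⁻¹ * √(u x) + √h⁻¹ * √(u y)) / 2) ^ 2 =
      h⁻¹ * ((√(u x) + √(u y)) / 2) ^ 2 := by
    rw [← mul_add, mul_div_assoc, mul_pow, Real.sq_sqrt (by positivity)]
  rw [hsqrt, hsqrt, hmean] at hrescaled
  have := mul_le_mul_of_nonneg_left hrescaled hh.le
  rw [mul_add, mul_inv_cancel_left₀ hh.ne', mul_inv_cancel_left₀ hh.ne', ← mul_assoc] at this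
  exact this

end IsStrictlyConvexDefiningFunction

lemma StrictlyConvexDomain.exists_isStrictlyConvexDefiningFunction {α : ℝ} {Ω : Set E2}
    (hΩ : StrictlyConvexDomain α Ω) :
    ∃ f, IsStrictlyConvexDefiningFunction f ∧ Ω = {x | f x < 0} := by
  obtain ⟨-, hbounded, -, f, hf, rfl, hfrontier, -, hgradient, hcurvature⟩ := hΩ
  exact ⟨f, ⟨hf, hfrontier, hbounded, fun x hx => hgradient x (hfrontier.symm.subset hx),
    fun x hx => hcurvature x (hfrontier.symm.subset hx)⟩, rfl⟩

theorem small_bubbles_half_concave_general {f : E2 → ℝ}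
    (hf : IsStrictlyConvexDefiningFunction f) :
    ∃ ε : ℝ, 0 < ε ∧ ∀ H : ℝ, -ε < H → H < 0 → ∀ u : E2 → ℝ, SolvesStar {x | f x < 0} H u →
      (∀ x, f x < 0 → 0 < u x) ∧
      ∀ x, f x < 0 → ∀ w : E2, w ≠ 0 → hess2 (fun y => √(u y)) x w w < 0 := by
  obtain ⟨ε, hε, δ, hδ, hconcave⟩ := hf.exists_forall_solvesStar_midpoint_concave
  refine ⟨ε, hε, fun H hεH hH u hu => ?_⟩
  have hmid := hconcave (-H) (neg_pos.2 hH) (neg_lt.1 hεH) u (by rwa [neg_neg])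
  have hpos (x : E2) (hx : f x < 0) : 0 < u x := (hmid x).1 x (mem_connectedComponentIn hx)
  refine ⟨hpos, fun x hx w hw => ?_⟩
  exact hess2_sqrt_self_neg_of_midpoint hf.isOpen.connectedComponentIn
    (mem_connectedComponentIn hx) (hu.1.contDiffAt (hf.isOpen.mem_nhds hx)) (hpos x hx)
    (mul_pos (neg_pos.2 hH) hδ) hw (hmid x).2

/-- **1/2-concavity of small solutions, Theorem 6.**  For a bounded strictly
convex planar domain `Ω` there is `ε = ε(Ω) > 0` such that for every `−ε < H < 0` the
solution `u = u(·;H)` of (*) is positive on `Ω` and `√u` is strictly second order concave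
on `Ω` (its Hessian is negative definite at every point of `Ω`). -/
theorem small_bubbles_half_concave (α : ℝ) (hα : 0 < α) (hα1 : α ≤ 1)
    (Ω : Set E2) (hΩ : StrictlyConvexDomain α Ω) :
    ∃ ε : ℝ, 0 < ε ∧ ∀ H : ℝ, -ε < H → H < 0 → ∀ u : E2 → ℝ, SolvesStar Ω H u →
      (∀ x ∈ Ω, 0 < u x) ∧
      (∀ x ∈ Ω, ∀ w : E2, w ≠ 0 → hess2 (fun y => Real.sqrt (u y)) x w w < 0) := by
  obtain ⟨f, hf, rfl⟩ := hΩ.exists_isStrictlyConvexDefiningFunction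
  exact small_bubbles_half_concave_general hf
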